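/- arXiv:2212.11949 — 14 statements merged into one kernel-verified Lean document; each statement's English description precedes it below -/
import Mathlib

section
/- Let {P_n}_{n≥0} be the 2-orthogonal family defined by the three-term-of-order-three recurrence with coefficients β_n, α_{n+1}, γ_{n+1} as below, let {u_n} be its dual sequence, set Q_n = (n+1)^{−1}P_{n+1}′ and let {v_n} be the dual sequence of {Q_n}. Assume that P_n = Q_n − δ_{n+1} n Q_{n−1} for all n ≥ 1, where δ_{n+1} = s + r(−1)^{n+1}. Then v₀ = u₀ − δ₀u₁ and v₁ = −(δ₁/γ)(x − β₀)u₀ + (1 + δ₁α₁/γ)u₁, and the vector U = (u₀, u₁) satisfies the matrix differential equation (ΦU)′ + ΨU = 0, i.e. the two scalar equations (u₀ − δ₀u₁)′ + u₁ = 0 and [−(δ₁/γ)(x − β₀)u₀ + (1 + δ₁α₁/γ)u₁]′ + (1/γ)(x − β₀)u₀ − (α₁/γ)u₁ = 0. -/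
/-!
The recurrence shows that the span of `{P_n}` contains `1` and is stable under multiplication by
`X`, hence is everything, so a functional is determined by its values on the `P_n`
(`functional_ext`). Comparing values on the `P_n` gives four identities:

* `v₀ = u₀ - δ₀ u₁` and `v₁ = u₁ - 2 δ₁ u₂`, by applying `v₀`, `v₁` to
  `P_n = Q_n - δ_{n+1} n Q_{n-1}`;
* `(x - β₀) u₀ = α₁ u₁ + 2 γ u₂`, by applying `u₀` to the recurrence (where `γ_1 = 2 γ`);
* `v_n' = -(n + 1) u_{n+1}`, because `P_{m+1}' = (m + 1) Q_m`.

Eliminating `u₂`, which is possible since `γ ≠ 0`, yields the formula for `v₁`, and the two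
differential equations are the last identity for `n = 0, 1` rewritten in terms of `u₀`, `u₁`.
-/

open Polynomial

/-- Derivative of a linear functional on polynomials: `⟨u', f⟩ = −⟨u, f'⟩`. -/
noncomputable def fder (u : Polynomial ℝ →ₗ[ℝ] ℝ) : Polynomial ℝ →ₗ[ℝ] ℝ :=
  -(u ∘ₗ (Polynomial.derivative : Polynomial ℝ →ₗ[ℝ] Polynomial ℝ))

/-- Left multiplication of a linear functional by a polynomial: `⟨hu, f⟩ = ⟨u, hf⟩`. -/
noncomputable def pmul (h : Polynomial ℝ) (u : Polynomial ℝ →ₗ[ℝ] ℝ) :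
    Polynomial ℝ →ₗ[ℝ] ℝ :=
  u ∘ₗ LinearMap.mulLeft ℝ h

/-- A sequence of polynomials starting at `1` whose span is stable under multiplication by `X`
separates linear functionals. -/
lemma functional_ext {P : ℕ → Polynomial ℝ} (h0 : P 0 = 1)
    (hX : ∀ m, X * P m ∈ Submodule.span ℝ (Set.range P))
    {f g : Polynomial ℝ →ₗ[ℝ] ℝ} (h : ∀ m, f (P m) = g (P m)) : f = g := by
  have hmul : ∀ p ∈ Submodule.span ℝ (Set.range P), X * p ∈ Submodule.span ℝ (Set.range P) := by
    intro p hp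
    induction hp using Submodule.span_induction with
    | mem x hx => obtain ⟨m, rfl⟩ := hx; exact hX m
    | zero => simp
    | add x y _ _ hx hy => rw [mul_add]; exact add_mem hx hy
    | smul a x _ hx => rw [mul_smul_comm]; exact Submodule.smul_mem _ _ hx
  have hpow : ∀ n : ℕ, (X : Polynomial ℝ) ^ n ∈ Submodule.span ℝ (Set.range P) := by
    intro n
    induction n with
    | zero => rw [pow_zero, ← h0]; exact Submodule.subset_span ⟨0, rfl⟩
    | succ n ih => rw [pow_succ']; exact hmul _ ih
  have hspan : Submodule.span ℝ (Set.range P) = ⊤ := by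
    refine (Submodule.eq_top_iff').2 fun p => ?_
    induction p using Polynomial.induction_on' with
    | add p q hp hq => exact add_mem hp hq
    | monomial n a =>
      rw [← C_mul_X_pow_eq_monomial, ← smul_eq_C_mul]
      exact Submodule.smul_mem _ _ (hpow n)
  refine LinearMap.ext_on_range hspan h

/-- If `P_{m+1}' = (m + 1) Q_m`, then differentiation of functionals is dual to the passage from
`{P_n}` to `{Q_n}`: one has `v_n' = -(n + 1) u_{n+1}`, tested here on the `P_m`. -/
lemma fder_dual_apply {P Q : ℕ → Polynomial ℝ} (h0 : P 0 = 1)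
    (hQ : ∀ n : ℕ, Q n = (((n : ℝ) + 1)⁻¹) • Polynomial.derivative (P (n + 1)))
    {u v : ℕ → (Polynomial ℝ →ₗ[ℝ] ℝ)}
    (hu : ∀ n m, u n (P m) = if n = m then 1 else 0)
    (hv : ∀ n m, v n (Q m) = if n = m then 1 else 0) (n m : ℕ) :
    fder (v n) (P m) = (-((n : ℝ) + 1) • u (n + 1)) (P m) := by
  cases m with
  | zero =>
    have h1 : u (n + 1) 1 = 0 := by simpa [h0] using hu (n + 1) 0
    simp [fder, h0, h1]
  | succ m =>
    have hd : derivative (P (m + 1)) = ((m : ℝ) + 1) • Q m := by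
      rw [hQ, smul_smul, mul_inv_cancel₀ (by positivity), one_smul]
    simp only [fder, LinearMap.neg_apply, LinearMap.comp_apply, LinearMap.smul_apply, hd,
      map_smul, hu, hv]
    by_cases h : n = m
    · simp [h]
    · simp [h]

/-- The dual functionals of the 2-orthogonal family and of its derivative
family are related by `v₀ = u₀ − δ₀u₁`, `v₁ = −(δ₁/γ)(x−β₀)u₀ + (1+δ₁α₁/γ)u₁`, and the
vector `U = (u₀,u₁)` satisfies the matrix differential equation `(ΦU)′ + ΨU = 0`. -/
theorem matrix_differential_equation
    (r s β₀ α₁ γ : ℝ) (hγ : γ ≠ 0)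
    (βn αn γn : ℕ → ℝ)
    (hβn : ∀ n : ℕ, βn n = ((-1 : ℝ) ^ n * r - 2 * s) * n - (1 - (-1 : ℝ) ^ n) * r / 2 + β₀)
    (hαn : ∀ n : ℕ, αn (n + 1) =
      ((n : ℝ) + 1) * ((r ^ 2 + s ^ 2) * n + (1 - (-1 : ℝ) ^ n) * r * s + α₁))
    (hγn : ∀ n : ℕ, γn (n + 1) = ((n : ℝ) + 2) * ((n : ℝ) + 1) *
      ((-1 : ℝ) ^ n * (r - (-1 : ℝ) ^ n * s) ^ 2 * r * n
        - (1 - (-1 : ℝ) ^ n) * ((r + s) ^ 2 + 2 * α₁) * r / 2 + γ))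
    (P Q : ℕ → Polynomial ℝ)
    (hP0 : P 0 = 1) (hP1 : P 1 = X - C β₀)
    (hP2 : P 2 = (X - C (βn 1)) * P 1 - C α₁)
    (hPrec : ∀ n : ℕ, P (n + 3) =
      (X - C (βn (n + 2))) * P (n + 2) - C (αn (n + 2)) * P (n + 1) - C (γn (n + 1)) * P n)
    (hQ : ∀ n : ℕ, Q n = (((n : ℝ) + 1)⁻¹) • Polynomial.derivative (P (n + 1)))
    (u v : ℕ → (Polynomial ℝ →ₗ[ℝ] ℝ))
    (hu : ∀ n m, u n (P m) = if n = m then 1 else 0)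
    (hv : ∀ n m, v n (Q m) = if n = m then 1 else 0)
    (δ : ℕ → ℝ) (hδ : ∀ n, δ n = s + r * (-1 : ℝ) ^ n)
    (hPQ : ∀ n : ℕ, 1 ≤ n → P n = Q n - (δ (n + 1) * n) • Q (n - 1)) :
    v 0 = u 0 - (s + r) • u 1 ∧
    v 1 = pmul (C (-((s - r) / γ)) * (X - C β₀)) (u 0) + (1 + (s - r) * α₁ / γ) • u 1 ∧
    fder (u 0 - (s + r) • u 1) + u 1 = 0 ∧
    fder (pmul (C (-((s - r) / γ)) * (X - C β₀)) (u 0) + (1 + (s - r) * α₁ / γ) • u 1)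
      + pmul (C γ⁻¹ * (X - C β₀)) (u 0) - (α₁ / γ) • u 1 = 0 := by
  have hX1 : X * P 1 = P 2 + βn 1 • P 1 + α₁ • P 0 := by
    rw [hP2, hP0, smul_eq_C_mul, smul_eq_C_mul]; ring
  have hX3 : ∀ n, X * P (n + 2) = P (n + 3) + βn (n + 2) • P (n + 2) + αn (n + 2) • P (n + 1)
      + γn (n + 1) • P n := by
    intro n
    rw [hPrec, smul_eq_C_mul, smul_eq_C_mul, smul_eq_C_mul]; ring
  have hX0 : X * P 0 = P 1 + β₀ • P 0 := by
    rw [hP1, hP0, smul_eq_C_mul]; ring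
  have hmem : ∀ m, P m ∈ Submodule.span ℝ (Set.range P) := fun m => Submodule.subset_span ⟨m, rfl⟩
  have hX : ∀ m, X * P m ∈ Submodule.span ℝ (Set.range P) := by
    intro m
    match m with
    | 0 => rw [hX0]; exact add_mem (hmem _) (Submodule.smul_mem _ _ (hmem _))
    | 1 =>
      rw [hX1]
      exact add_mem (add_mem (hmem _) (Submodule.smul_mem _ _ (hmem _)))
        (Submodule.smul_mem _ _ (hmem _))
    | n + 2 =>
      rw [hX3]
      exact add_mem (add_mem (add_mem (hmem _) (Submodule.smul_mem _ _ (hmem _)))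
        (Submodule.smul_mem _ _ (hmem _))) (Submodule.smul_mem _ _ (hmem _))
  have hQ0 : P 0 = Q 0 := by
    rw [hQ, hP0, zero_add, hP1]; simp
  have hPQ' : ∀ n : ℕ, P (n + 1) = Q (n + 1) - (δ (n + 2) * ((n : ℝ) + 1)) • Q n := by
    intro n
    have := hPQ (n + 1) (by omega)
    simpa using this
  have hδ2 : δ 2 = s + r := by rw [hδ]; norm_num
  have hδ3 : δ 3 = s - r := by rw [hδ]; ring
  have hγ1 : γn 1 = 2 * γ := by
    have := hγn 0
    norm_num at this
    exact this
  have hv0 : v 0 = u 0 - (s + r) • u 1 := by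
    refine functional_ext hP0 hX fun m => ?_
    match m with
    | 0 => rw [LinearMap.sub_apply, LinearMap.smul_apply, hu, hu, hQ0, hv]; simp
    | 1 =>
      rw [LinearMap.sub_apply, LinearMap.smul_apply, hu, hu, hPQ' 0, map_sub, map_smul, hv, hv]
      simp [hδ2]
    | n + 2 =>
      rw [LinearMap.sub_apply, LinearMap.smul_apply, hu, hu, hPQ', map_sub, map_smul, hv, hv]
      simp
  have hv1 : v 1 = u 1 - (2 * (s - r)) • u 2 := by
    refine functional_ext hP0 hX fun m => ?_
    match m with
    | 0 => rw [LinearMap.sub_apply, LinearMap.smul_apply, hu, hu, hQ0, hv]; simp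
    | 1 =>
      rw [LinearMap.sub_apply, LinearMap.smul_apply, hu, hu, hPQ' 0, map_sub, map_smul, hv, hv]
      simp
    | 2 =>
      rw [LinearMap.sub_apply, LinearMap.smul_apply, hu, hu, hPQ' 1, map_sub, map_smul, hv, hv]
      simp [hδ3]; ring
    | n + 3 =>
      rw [LinearMap.sub_apply, LinearMap.smul_apply, hu, hu, hPQ', map_sub, map_smul, hv, hv]
      simp
  have hxu : pmul (X - C β₀) (u 0) = α₁ • u 1 + (2 * γ) • u 2 := by
    refine functional_ext hP0 hX fun m => ?_
    have hL : pmul (X - C β₀) (u 0) (P m) = u 0 (X * P m) - β₀ * u 0 (P m) := by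
      simp [pmul, sub_mul, ← smul_eq_C_mul]
    rw [hL, LinearMap.add_apply, LinearMap.smul_apply, LinearMap.smul_apply]
    match m with
    | 0 => simp [hX0, hu]
    | 1 => simp [hX1, hu]
    | 2 => simp [hX3 0, hu, hγ1]
    | n + 3 => simp [hX3 (n + 1), hu]
  have hscale : ∀ c : ℝ, pmul (C c * (X - C β₀)) (u 0) = c • pmul (X - C β₀) (u 0) := by
    intro c
    refine LinearMap.ext fun p => ?_
    simp only [pmul, LinearMap.comp_apply, LinearMap.smul_apply, LinearMap.mulLeft_apply,
      ← smul_eq_C_mul, smul_mul_assoc, map_smul]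
  have hv1' : v 1 = pmul (C (-((s - r) / γ)) * (X - C β₀)) (u 0)
      + (1 + (s - r) * α₁ / γ) • u 1 := by
    rw [hv1, hscale, hxu]
    match_scalars <;> field_simp <;> ring
  have hd : ∀ n, fder (v n) = -((n : ℝ) + 1) • u (n + 1) := fun n =>
    functional_ext hP0 hX fun m => fder_dual_apply hP0 hQ hu hv n m
  refine ⟨hv0, hv1', ?_, ?_⟩
  · rw [← hv0, hd]; match_scalars; simp
  · rw [← hv1', hd, hscale, hxu]
    match_scalars
    · field_simp; ring
    · field_simp; ring
end

section
/- Suppose η ≠ 0 and δ₀ ≠ 0. Then the functionals u₀, u₁ satisfy the second-order system [φ(x)u₀]′′ + [ϑ(x)u₀]′ + χ(x)u₀ = 0 and η u₁ = [φ(x)u₀]′ + ϱ(x)u₀. -/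
/-!
Write `v = (x - β₀)u₀` and `A = δ₁α₁ + γ`. The two hypotheses are linear in `u₁` and `u₁'`.
Eliminating `u₁'` between them (`δ₀` times the first minus `A` times the second) gives
`η u₁ = -δ₀δ₁ v' + A u₀' + δ₀ v`, because `A - δ₀α₁ = -η`; the right-hand side is `(φu₀)' + ϱu₀`.
Differentiating this relation expresses `(φu₀)''` through `u₁'` and `v'`, and the two hypotheses
then eliminate `v'` and `u₀'`, leaving the coefficient `η + A - δ₀α₁ = 0` in front of `u₁'`.
-/

open Polynomial

theorem fder_add (u v : Polynomial ℝ →ₗ[ℝ] ℝ) : fder (u + v) = fder u + fder v := by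
  exact LinearMap.ext fun f => by simp [fder, add_comm]

theorem fder_smul (c : ℝ) (u : Polynomial ℝ →ₗ[ℝ] ℝ) : fder (c • u) = c • fder u := by
  exact LinearMap.ext fun f => by simp [fder]

/-- Multiplication by a polynomial of degree at most one, in terms of multiplication by
`X - b`. -/
theorem pmul_affine (a b c : ℝ) (u : Polynomial ℝ →ₗ[ℝ] ℝ) :
    pmul (C a * (X - C b) + C c) u = a • pmul (X - C b) u + c • u := by
  refine LinearMap.ext fun f => ?_
  simp only [pmul, LinearMap.comp_apply, LinearMap.mulLeft_apply, LinearMap.add_apply,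
    LinearMap.smul_apply]
  rw [← map_smul, ← map_smul, ← map_add, smul_eq_C_mul, smul_eq_C_mul]
  congr 1
  ring

/-- If `η = 2rα₁ − γ ≠ 0` and `δ₀ = s + r ≠ 0`, then `u₀`, `u₁` satisfy
`[φ(x)u₀]'' + [ϑ(x)u₀]' + χ(x)u₀ = 0` and `η u₁ = [φ(x)u₀]' + ϱ(x)u₀`. -/
theorem system_S1
    (r s β₀ α₁ γ : ℝ) (hγ : γ ≠ 0)
    (u₀ u₁ : Polynomial ℝ →ₗ[ℝ] ℝ)
    (h1 : ((s - r) * α₁ + γ) • fder u₁ - α₁ • u₁ =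
      (s - r) • fder (pmul (X - C β₀) u₀) - pmul (X - C β₀) u₀)
    (h2 : (s + r) • fder u₁ - u₁ = fder u₀)
    (hη : 2 * r * α₁ - γ ≠ 0) (hδ₀ : s + r ≠ 0) :
    fder (fder (pmul (C (-((s - r) * (s + r))) * (X - C β₀) + C ((s - r) * α₁ + γ)) u₀))
        + fder (pmul (C (2 * s) * (X - C β₀) - C α₁) u₀)
        + pmul (-X + C β₀) u₀ = 0 ∧
      (2 * r * α₁ - γ) • u₁ =
        fder (pmul (C (-((s - r) * (s + r))) * (X - C β₀) + C ((s - r) * α₁ + γ)) u₀)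
          + pmul (C (s + r) * (X - C β₀)) u₀ := by
  have hϑ : pmul (C (2 * s) * (X - C β₀) - C α₁) u₀
      = (2 * s) • pmul (X - C β₀) u₀ + (-α₁) • u₀ := by
    rw [← pmul_affine, C_neg, sub_eq_add_neg]
  have hχ : pmul (-X + C β₀) u₀ = -pmul (X - C β₀) u₀ := by
    have h := pmul_affine (-1) β₀ 0 u₀
    have e : C (-1 : ℝ) * (X - C β₀) + C 0 = -X + C β₀ := by simp [neg_add_eq_sub]
    rw [e] at h
    rw [h]
    module
  have hϱ : pmul (C (s + r) * (X - C β₀)) u₀ = (s + r) • pmul (X - C β₀) u₀ := by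
    simpa using pmul_affine (s + r) β₀ 0 u₀
  rw [pmul_affine, hϑ, hχ, hϱ]
  generalize pmul (X - C β₀) u₀ = v at *
  have hu₁ : (2 * r * α₁ - γ) • u₁
      = fder ((-((s - r) * (s + r))) • v + ((s - r) * α₁ + γ) • u₀) + (s + r) • v := by
    simp only [fder_add, fder_smul]
    linear_combination (norm := module) ((s - r) * α₁ + γ) • h2 - (s + r) • h1
  refine ⟨?_, hu₁⟩
  have hd := congrArg fder hu₁
  rw [fder_add, fder_smul, fder_smul] at hd
  rw [fder_add ((2 * s) • v), fder_smul, fder_smul]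
  linear_combination (norm := module) α₁ • h2 - h1 - hd
end

section
/- Suppose η ≠ 0 and δ₀ = 0. Then the functionals u₀, u₁ satisfy η u₀′′ − [ϑ(x)u₀]′ − χ(x)u₀ = 0 and u₁ = −u₀′. -/
/-!
Since `δ₀ = s + r = 0`, the second equation reads `-u₁ = u₀'`. Putting `u₁ = -u₀'` and `s = -r`
into the first equation and using linearity of `h ↦ h u₀` to split `ϑ u₀` and `χ u₀` into
`(x - β₀) u₀` and `u₀` gives the second-order equation.
-/

open Polynomial

theorem fder_apply (u : Polynomial ℝ →ₗ[ℝ] ℝ) (f : Polynomial ℝ) :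
    fder u f = -u (derivative f) := rfl

theorem pmul_apply (h : Polynomial ℝ) (u : Polynomial ℝ →ₗ[ℝ] ℝ) (f : Polynomial ℝ) :
    pmul h u f = u (h * f) := rfl

theorem pmul_theta (a b c : ℝ) (u : Polynomial ℝ →ₗ[ℝ] ℝ) (f : Polynomial ℝ) :
    u ((C a * (X - C b) - C c) * f) = a * u ((X - C b) * f) - c * u f := by
  rw [sub_mul, mul_assoc, ← smul_eq_C_mul, ← smul_eq_C_mul]
  simp

theorem pmul_chi (b : ℝ) (u : Polynomial ℝ →ₗ[ℝ] ℝ) (f : Polynomial ℝ) :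
    u ((-X + C b) * f) = -u ((X - C b) * f) := by
  rw [← map_neg]
  congr 1
  ring

/-- If `η = 2rα₁ − γ ≠ 0` and `δ₀ = s + r = 0`, then `u₀`, `u₁` satisfy
`η u₀'' − [ϑ(x)u₀]' − χ(x)u₀ = 0` and `u₁ = −u₀'`. -/
theorem system_S2
    (r s β₀ α₁ γ : ℝ) (hγ : γ ≠ 0)
    (u₀ u₁ : Polynomial ℝ →ₗ[ℝ] ℝ)
    (h1 : ((s - r) * α₁ + γ) • fder u₁ - α₁ • u₁ =
      (s - r) • fder (pmul (X - C β₀) u₀) - pmul (X - C β₀) u₀)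
    (h2 : (s + r) • fder u₁ - u₁ = fder u₀)
    (hη : 2 * r * α₁ - γ ≠ 0) (hδ₀ : s + r = 0) :
    (2 * r * α₁ - γ) • fder (fder u₀)
        - fder (pmul (C (2 * s) * (X - C β₀) - C α₁) u₀)
        - pmul (-X + C β₀) u₀ = 0 ∧
      u₁ = -fder u₀ := by
  have hs : s = -r := by linarith
  subst hs
  have hu : u₁ = -fder u₀ := by
    rw [← h2, hδ₀]
    simp
  refine ⟨?_, hu⟩
  subst hu
  -- With `u₁ = -u₀'` and `s = -r`, the first equation is the claim up to
  -- rearrangement; test both on an arbitrary polynomial.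
  refine LinearMap.ext fun f => ?_
  have h := LinearMap.congr_fun h1 f
  simp only [LinearMap.sub_apply, LinearMap.smul_apply, LinearMap.neg_apply, LinearMap.zero_apply,
    smul_eq_mul, fder_apply, pmul_apply, pmul_theta, pmul_chi] at h ⊢
  linear_combination h
end

section
/- Suppose η = 0 and δ₀ ≠ 0. Then the functional u₀ satisfies the first-order (Pearson-type) equation σ(x)u₀′ + τ(x)u₀ = 0, while δ₀u₁′ − u₁ = u₀′. -/
/-!
Since `γ = 2rα₁`, the coefficient `δ₁α₁ + γ` of `u₁'` in the first equation is `δ₀α₁`, so its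
left-hand side is `α₁` times that of the second equation. Subtracting eliminates `u₁` and leaves
`δ₁[(x − β₀)u₀]' − (x − β₀)u₀ − α₁u₀' = 0`, which the product rule
`[(x − β₀)u₀]' = u₀ + (x − β₀)u₀'` turns into `σu₀' + τu₀ = 0`. The identity is checked on an
arbitrary polynomial `f`, where the product rule for functionals becomes that for polynomials.
-/

open Polynomial

/-- If `η = 2rα₁ − γ = 0` and `δ₀ = s + r ≠ 0`, then `u₀` satisfies the
Pearson-type equation `σ(x)u₀' + τ(x)u₀ = 0`, while `δ₀u₁' − u₁ = u₀'`. -/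
theorem system_S3
    (r s β₀ α₁ γ : ℝ) (hγ : γ ≠ 0)
    (u₀ u₁ : Polynomial ℝ →ₗ[ℝ] ℝ)
    (h1 : ((s - r) * α₁ + γ) • fder u₁ - α₁ • u₁ =
      (s - r) • fder (pmul (X - C β₀) u₀) - pmul (X - C β₀) u₀)
    (h2 : (s + r) • fder u₁ - u₁ = fder u₀)
    (hη : 2 * r * α₁ - γ = 0) (hδ₀ : s + r ≠ 0) :
    pmul (C (s - r) * (X - C β₀) - C α₁) (fder u₀)
        + pmul (-X + C (β₀ + (s - r))) u₀ = 0 ∧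
      (s + r) • fder u₁ - u₁ = fder u₀ := by
  refine ⟨LinearMap.ext fun f => ?_, h2⟩
  have e1 := LinearMap.congr_fun h1 f
  have e2 := LinearMap.congr_fun h2 f
  simp only [fder, pmul, LinearMap.sub_apply, LinearMap.add_apply, LinearMap.smul_apply,
    LinearMap.neg_apply, LinearMap.comp_apply, LinearMap.mulLeft_apply, smul_eq_mul,
    LinearMap.zero_apply] at e1 e2 ⊢
  have d : derivative ((C (s - r) * (X - C β₀) - C α₁) * f) =
      (s - r) • f + (s - r) • ((X - C β₀) * derivative f) - α₁ • derivative f := by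
    simp only [derivative_mul, derivative_sub, derivative_C, derivative_X, smul_eq_C_mul]
    ring
  have t : (-X + C (β₀ + (s - r))) * f = (s - r) • f - (X - C β₀) * f := by
    simp only [C_add, smul_eq_C_mul]
    ring
  rw [d, t]
  simp only [map_add, map_sub, map_smul, smul_eq_mul]
  linear_combination -e1 + α₁ * e2 + u₁ (derivative f) * hη
end

section
/- For every α > 0, the function F(x) = (1/π)∫₀^∞ e^{−αt²} cos(xt + t³/3) dt is twice differentiable on ℝ and satisfies the differential equation F′′(x) − 2αF′(x) − xF(x) = 0 for all x ∈ ℝ. -/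
/-!
Differentiating twice under the integral sign, with the Gaussian moments `t e^{-αt²}` and
`t² e^{-αt²}` as dominating functions, gives
`F' = -(1/π) ∫ t e^{-αt²} sin(xt + t³/3)` and `F'' = -(1/π) ∫ t² e^{-αt²} cos(xt + t³/3)`.
Hence `-π (F'' - 2αF' - xF)` is the integral over `(0, ∞)` of
`d/dt [e^{-αt²} sin(xt + t³/3)]`, and this boundary term vanishes at both ends.
-/

open MeasureTheory Real

lemma integrableOn_pow_mul_gauss {α : ℝ} (hα : 0 < α) (n : ℕ) :
    IntegrableOn (fun t : ℝ => t ^ n * exp (-α * t ^ 2)) (Set.Ioi 0) := by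
  have h := integrableOn_rpow_mul_exp_neg_mul_sq hα (s := (n : ℝ))
    (by have : (0 : ℝ) ≤ n := n.cast_nonneg
        linarith)
  simpa only [rpow_natCast] using h

lemma integrableOn_pow_mul_gauss_mul {α : ℝ} (hα : 0 < α) (n : ℕ) {g : ℝ → ℝ}
    (hg : Continuous g) (hb : ∀ t, |g t| ≤ 1) :
    IntegrableOn (fun t : ℝ => t ^ n * exp (-α * t ^ 2) * g t) (Set.Ioi 0) :=
  Integrable.mul_bdd (c := 1) (integrableOn_pow_mul_gauss hα n) hg.aestronglyMeasurable
    (Filter.Eventually.of_forall hb)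

/-- Differentiation under the integral sign for a Gaussian moment weighted by a bounded function
of the Airy phase `x t + t³ / 3`; it serves for both `F'` and `F''`. -/
lemma hasDerivAt_integral_gauss_phase {α : ℝ} (hα : 0 < α) (n : ℕ) {g g' : ℝ → ℝ}
    (hg' : Continuous g') (hgb : ∀ t, |g t| ≤ 1) (hgb' : ∀ t, |g' t| ≤ 1)
    (hd : ∀ u, HasDerivAt g (g' u) u) (x : ℝ) :
    HasDerivAt
      (fun y => ∫ t in Set.Ioi (0 : ℝ), t ^ n * exp (-α * t ^ 2) * g (y * t + t ^ 3 / 3))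
      (∫ t in Set.Ioi (0 : ℝ), t ^ (n + 1) * exp (-α * t ^ 2) * g' (x * t + t ^ 3 / 3)) x := by
  have hg : Continuous g := continuous_iff_continuousAt.2 fun u => (hd u).continuousAt
  refine (hasDerivAt_integral_of_dominated_loc_of_deriv_le (s := Set.univ)
    (F := fun y t => t ^ n * exp (-α * t ^ 2) * g (y * t + t ^ 3 / 3))
    (F' := fun y t => t ^ (n + 1) * exp (-α * t ^ 2) * g' (y * t + t ^ 3 / 3))
    (bound := fun t => t ^ (n + 1) * exp (-α * t ^ 2))
    Filter.univ_mem ?_ ?_ ?_ ?_ (integrableOn_pow_mul_gauss hα (n + 1)) ?_).2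
  · exact Filter.Eventually.of_forall fun y => Continuous.aestronglyMeasurable (by fun_prop)
  · exact integrableOn_pow_mul_gauss_mul hα n (by fun_prop) fun t => hgb _
  · exact Continuous.aestronglyMeasurable (by fun_prop)
  · filter_upwards [ae_restrict_mem measurableSet_Ioi] with t ht y _
    have ht : 0 < t := ht
    have hw : 0 ≤ t ^ (n + 1) * exp (-α * t ^ 2) := by positivity
    rw [norm_mul, norm_of_nonneg hw]
    exact mul_le_of_le_one_right hw (hgb' _)
  · refine Filter.Eventually.of_forall fun t y _ => ?_
    have hphase : HasDerivAt (fun y : ℝ => y * t + t ^ 3 / 3) t y := by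
      simpa using ((hasDerivAt_id y).mul_const t).add_const (t ^ 3 / 3)
    refine (((hd _).comp y hphase).const_mul (t ^ n * exp (-α * t ^ 2))).congr_deriv ?_
    ring

/-- The boundary term: `e^{-αt²} sin(xt + t³/3)` vanishes at `0` and at infinity, so its
derivative integrates to zero. -/
lemma integral_gauss_phase_relation {α : ℝ} (hα : 0 < α) (x : ℝ) :
    (∫ t in Set.Ioi (0 : ℝ), t ^ 2 * exp (-α * t ^ 2) * cos (x * t + t ^ 3 / 3))
      - 2 * α * (∫ t in Set.Ioi (0 : ℝ), t ^ 1 * exp (-α * t ^ 2) * sin (x * t + t ^ 3 / 3))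
      + x * (∫ t in Set.Ioi (0 : ℝ), t ^ 0 * exp (-α * t ^ 2) * cos (x * t + t ^ 3 / 3)) = 0 := by
  have hc (n : ℕ) := integrableOn_pow_mul_gauss_mul hα n
    (g := fun t => cos (x * t + t ^ 3 / 3)) (by fun_prop) fun t => abs_cos_le_one _
  have hs := integrableOn_pow_mul_gauss_mul hα 1
    (g := fun t => sin (x * t + t ^ 3 / 3)) (by fun_prop) fun t => abs_sin_le_one _
  have hcs : IntegrableOn (fun t : ℝ => t ^ 2 * exp (-α * t ^ 2) * cos (x * t + t ^ 3 / 3)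
      - 2 * α * (t ^ 1 * exp (-α * t ^ 2) * sin (x * t + t ^ 3 / 3))) (Set.Ioi 0) :=
    (hc 2).sub (hs.const_mul (2 * α))
  rw [← integral_const_mul, ← integral_const_mul,
    ← integral_sub (hc 2) (hs.const_mul (2 * α)),
    ← integral_add hcs ((hc 0).const_mul x)]
  have hlim : Filter.Tendsto (fun t : ℝ => exp (-α * t ^ 2) * sin (x * t + t ^ 3 / 3))
      Filter.atTop (nhds 0) := by
    have he : Filter.Tendsto (fun t : ℝ => exp (-α * t ^ 2)) Filter.atTop (nhds 0) :=
      tendsto_exp_atBot.comp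
        ((Filter.tendsto_pow_atTop two_ne_zero).const_mul_atTop_of_neg (neg_lt_zero.2 hα))
    refine squeeze_zero_norm (fun t => ?_) he
    rw [norm_mul, norm_of_nonneg (exp_pos _).le]
    exact mul_le_of_le_one_right (exp_pos _).le (abs_sin_le_one _)
  refine (integral_Ioi_of_hasDerivAt_of_tendsto' (fun t _ => ?_)
    (hcs.add ((hc 0).const_mul x)) hlim).trans (by simp)
  have hphase : HasDerivAt (fun t : ℝ => x * t + t ^ 3 / 3) (x + t ^ 2) t := by
    refine (((hasDerivAt_id t).const_mul x).add ((hasDerivAt_pow 3 t).div_const 3)).congr_deriv ?_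
    norm_num
  have hexp : HasDerivAt (fun t : ℝ => exp (-α * t ^ 2)) (exp (-α * t ^ 2) * (-α * (2 * t))) t := by
    simpa using ((hasDerivAt_pow 2 t).const_mul (-α)).exp
  refine (hexp.mul hphase.sin).congr_deriv ?_
  simp only [Pi.add_apply]
  ring

/-- For `α > 0` the Gauss–Airy function
`F(x) = (1/π)∫₀^∞ e^{−αt²} cos(xt + t³/3) dt` is twice differentiable on `ℝ` and
satisfies `F'' − 2αF' − xF = 0`. -/
theorem gaussAiry_ode (α : ℝ) (hα : 0 < α)
    (F : ℝ → ℝ)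
    (hF : ∀ x, F x = (1 / Real.pi) *
      ∫ t in Set.Ioi (0 : ℝ), Real.exp (-α * t ^ 2) * Real.cos (x * t + t ^ 3 / 3)) :
    (∀ x, DifferentiableAt ℝ F x) ∧ (∀ x, DifferentiableAt ℝ (deriv F) x) ∧
      ∀ x, deriv (deriv F) x - 2 * α * deriv F x - x * F x = 0 := by
  have hF0 : F = fun x => (1 / π) *
      ∫ t in Set.Ioi (0 : ℝ), t ^ 0 * exp (-α * t ^ 2) * cos (x * t + t ^ 3 / 3) := by
    funext x
    simp only [hF x, pow_zero, one_mul]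
  have h1 (x : ℝ) : HasDerivAt F (-(1 / π) *
      ∫ t in Set.Ioi (0 : ℝ), t ^ 1 * exp (-α * t ^ 2) * sin (x * t + t ^ 3 / 3)) x := by
    rw [hF0]
    refine ((hasDerivAt_integral_gauss_phase hα 0 (g := cos) (g' := fun u => -sin u)
      (by fun_prop) abs_cos_le_one (fun u => by simpa using abs_sin_le_one u)
      hasDerivAt_cos x).const_mul (1 / π)).congr_deriv ?_
    simp only [mul_neg, integral_neg, neg_mul, zero_add]
  have hF1 : deriv F = fun x => -(1 / π) *
      ∫ t in Set.Ioi (0 : ℝ), t ^ 1 * exp (-α * t ^ 2) * sin (x * t + t ^ 3 / 3) :=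
    funext fun x => (h1 x).deriv
  have h2 (x : ℝ) : HasDerivAt (deriv F) (-(1 / π) *
      ∫ t in Set.Ioi (0 : ℝ), t ^ 2 * exp (-α * t ^ 2) * cos (x * t + t ^ 3 / 3)) x := by
    rw [hF1]
    exact (hasDerivAt_integral_gauss_phase hα 1 continuous_cos abs_sin_le_one abs_cos_le_one
      hasDerivAt_sin x).const_mul _
  refine ⟨fun x => (h1 x).differentiableAt, fun x => (h2 x).differentiableAt, fun x => ?_⟩
  rw [(h2 x).deriv, (h1 x).deriv, hF0]
  linear_combination -(1 / π) * integral_gauss_phase_relation hα x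
end

section
/- For every α > 0, the function F(x) = (1/π)∫₀^∞ e^{−αt²} cos(xt + t³/3) dt is Lebesgue integrable over ℝ and ∫_{−∞}^{+∞} F(x) dx = 1. -/
/-!
The integrand extends evenly to the whole line, so with `g(t) = exp(-αt² + it³/3)` one has
`F(x) = (2π)⁻¹ Re (𝓕 g)(-x/(2π))`. The function `g` and all its derivatives are polynomials times
`g`, hence integrable since `|g(t)| = e^{-αt²}`. Integrability of `g` and `g''` makes
`(1 + ξ²) 𝓕 g(ξ)` bounded, so `𝓕 g` is integrable (`integrable_fourier_gaussAirySymbol`), and Fourier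
inversion at the origin gives `∫ 𝓕 g = g(0) = 1` (`integral_fourier_gaussAirySymbol`). Rescaling
`ξ = -x/(2π)` contributes a factor `2π`, which cancels the prefactor.
-/

open MeasureTheory Real

open scoped FourierTransform Polynomial

/-- The function `t ↦ exp(-αt² + it³/3)` on the real line, whose Fourier transform is, up to
scaling, the Gauss–Airy function. -/
noncomputable def gaussAirySymbol (α : ℝ) (t : ℝ) : ℂ :=
  Complex.exp (-α * (t : ℂ) ^ 2 + Complex.I * (t : ℂ) ^ 3 / 3)

lemma norm_gaussAirySymbol (α t : ℝ) : ‖gaussAirySymbol α t‖ = Real.exp (-α * t ^ 2) := by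
  rw [gaussAirySymbol, Complex.norm_exp]
  have h : (-α * (t : ℂ) ^ 2 + Complex.I * (t : ℂ) ^ 3 / 3)
      = ((-α * t ^ 2 : ℝ) : ℂ) + ((t ^ 3 / 3 : ℝ) : ℂ) * Complex.I := by
    push_cast; ring
  rw [h, Complex.add_re, Complex.re_ofReal_mul, Complex.ofReal_re, Complex.I_re, mul_zero, add_zero]

lemma continuous_gaussAirySymbol (α : ℝ) : Continuous (gaussAirySymbol α) := by
  unfold gaussAirySymbol
  fun_prop

lemma integrable_polynomial_mul_gaussAirySymbol {α : ℝ} (hα : 0 < α) (P : ℂ[X]) :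
    Integrable (fun t : ℝ => P.eval (t : ℂ) * gaussAirySymbol α t) := by
  have hg := continuous_gaussAirySymbol α
  induction P using Polynomial.induction_on' with
  | add p q hp hq =>
    simp only [Polynomial.eval_add, add_mul]
    exact hp.add hq
  | monomial n a =>
    have h : Integrable (fun t : ℝ => t ^ n * Real.exp (-α * t ^ 2)) := by
      have h0 : (-1 : ℝ) < n := by
        have : (0 : ℝ) ≤ n := n.cast_nonneg
        linarith
      simpa only [Real.rpow_natCast] using integrable_rpow_mul_exp_neg_mul_sq hα h0
    refine (h.norm.const_mul ‖a‖).mono' ?_ (ae_of_all _ fun t => ?_)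
    · exact Continuous.aestronglyMeasurable (by fun_prop)
    · simp [norm_gaussAirySymbol, mul_assoc, abs_of_pos (Real.exp_pos _)]

/-- Differentiation maps `P g` to `(P' + P·(-2αX + iX²)) g`, so it preserves the class of
polynomial multiples of `g`. -/
lemma hasDerivAt_polynomial_mul_gaussAirySymbol (α : ℝ) (P : ℂ[X]) (t : ℝ) :
    HasDerivAt (fun t : ℝ => P.eval (t : ℂ) * gaussAirySymbol α t)
      ((P.derivative + P * (Polynomial.C (-2 * α : ℂ) * Polynomial.X
        + Polynomial.C Complex.I * Polynomial.X ^ 2)).eval (t : ℂ) * gaussAirySymbol α t) t := by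
  have hexp : HasDerivAt
      (fun z : ℂ => P.eval z * Complex.exp (-α * z ^ 2 + Complex.I * z ^ 3 / 3)) _ (t : ℂ) :=
    (P.hasDerivAt (t : ℂ)).mul ((((hasDerivAt_pow 2 (t : ℂ)).const_mul (-α : ℂ)).add
      (((hasDerivAt_pow 3 (t : ℂ)).const_mul Complex.I).div_const 3)).cexp)
  refine hexp.comp_ofReal.congr_deriv ?_
  simp only [gaussAirySymbol, Polynomial.eval_add, Polynomial.eval_mul, Polynomial.eval_C,
    Polynomial.eval_X, Polynomial.eval_pow, Pi.add_apply]
  push_cast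
  ring

lemma norm_fourier_le_integral_norm (f : ℝ → ℂ) (ξ : ℝ) : ‖𝓕 f ξ‖ ≤ ∫ t, ‖f t‖ :=
  VectorFourier.norm_fourierIntegral_le_integral_norm _ _ _ _ _

/-- If `f` and its first two derivatives are integrable then `(1 + ξ²) 𝓕 f(ξ)` is bounded, and so
`𝓕 f` is integrable. -/
lemma integrable_fourier_of_hasDerivAt {f f' f'' : ℝ → ℂ} (hf : Integrable f)
    (hf' : Integrable f') (hf'' : Integrable f'') (h1 : ∀ t, HasDerivAt f (f' t) t)
    (h2 : ∀ t, HasDerivAt f' (f'' t) t) : Integrable (𝓕 f) := by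
  have e1 : deriv f = f' := funext fun t => (h1 t).deriv
  have e2 : deriv f' = f'' := funext fun t => (h2 t).deriv
  have k1 := Real.fourier_deriv hf (fun t => (h1 t).differentiableAt) (e1 ▸ hf')
  have k2 := Real.fourier_deriv hf' (fun t => (h2 t).differentiableAt) (e2 ▸ hf'')
  rw [e1] at k1
  rw [e2, k1] at k2
  have hc : Continuous (𝓕 f) :=
    VectorFourier.fourierIntegral_continuous Real.continuous_fourierChar
      (by exact continuous_inner) hf
  refine (integrable_inv_one_add_sq.const_mul ((∫ t, ‖f t‖) + ∫ t, ‖f'' t‖)).mono'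
    hc.aestronglyMeasurable (ae_of_all _ fun ξ => ?_)
  have b0 := norm_fourier_le_integral_norm f ξ
  have b2 := norm_fourier_le_integral_norm f'' ξ
  have hn : ‖𝓕 f'' ξ‖ = (2 * π * ξ) ^ 2 * ‖𝓕 f ξ‖ := by
    rw [k2]
    simp only [smul_eq_mul, norm_mul, Complex.norm_I, Complex.norm_real, Complex.norm_ofNat,
      Real.norm_eq_abs, abs_of_pos Real.pi_pos]
    rw [← sq_abs (2 * π * ξ), abs_mul, abs_mul, abs_of_pos Real.pi_pos, abs_two]
    ring
  rw [hn] at b2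
  have hpi : ξ ^ 2 ≤ (2 * π * ξ) ^ 2 := by
    have : 1 ≤ (2 * π) ^ 2 := by nlinarith [Real.pi_gt_three]
    rw [mul_pow]
    nlinarith [sq_nonneg ξ]
  have := mul_le_mul_of_nonneg_right hpi (norm_nonneg (𝓕 f ξ))
  rw [← div_eq_mul_inv, le_div_iff₀ (by positivity)]
  linarith

lemma integrable_gaussAirySymbol {α : ℝ} (hα : 0 < α) : Integrable (gaussAirySymbol α) := by
  simpa using integrable_polynomial_mul_gaussAirySymbol hα 1

lemma integrable_fourier_gaussAirySymbol {α : ℝ} (hα : 0 < α) :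
    Integrable (𝓕 (gaussAirySymbol α)) := by
  have h1 := hasDerivAt_polynomial_mul_gaussAirySymbol α 1
  simp only [Polynomial.eval_one, one_mul] at h1
  exact integrable_fourier_of_hasDerivAt (integrable_gaussAirySymbol hα)
    (integrable_polynomial_mul_gaussAirySymbol hα _)
    (integrable_polynomial_mul_gaussAirySymbol hα _) h1
    (hasDerivAt_polynomial_mul_gaussAirySymbol α _)

lemma integral_fourier_gaussAirySymbol {α : ℝ} (hα : 0 < α) :
    ∫ ξ, 𝓕 (gaussAirySymbol α) ξ = 1 := by
  have h := (integrable_gaussAirySymbol hα).fourierInv_fourier_eq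
    (integrable_fourier_gaussAirySymbol hα) (v := 0) (continuous_gaussAirySymbol α).continuousAt
  rw [Real.fourierInv_eq] at h
  simpa [gaussAirySymbol] using h

/-- The half-line cosine integral is half of a full-line integral, by evenness, and the latter is
the real part of a value of `𝓕 g`. -/
lemma integral_Ioi_eq_re_fourier {α : ℝ} (hα : 0 < α) (x : ℝ) :
    ∫ t in Set.Ioi (0 : ℝ), Real.exp (-α * t ^ 2) * Real.cos (x * t + t ^ 3 / 3)
      = (𝓕 (gaussAirySymbol α) (-(2 * π)⁻¹ * x)).re / 2 := by
  have hpi : (π : ℂ) ≠ 0 := Complex.ofReal_ne_zero.2 Real.pi_ne_zero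
  have hform (t : ℝ) : Complex.exp (((-2 * π * t * (-(2 * π)⁻¹ * x) : ℝ) : ℂ) * Complex.I)
      • gaussAirySymbol α t
      = Complex.exp (((-α * t ^ 2 : ℝ) : ℂ) + ((x * t + t ^ 3 / 3 : ℝ) : ℂ) * Complex.I) := by
    rw [smul_eq_mul, gaussAirySymbol, ← Complex.exp_add]
    congr 1
    push_cast
    field_simp
    ring
  have hint : Integrable (fun t : ℝ =>
      Complex.exp (((-α * t ^ 2 : ℝ) : ℂ) + ((x * t + t ^ 3 / 3 : ℝ) : ℂ) * Complex.I)) := by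
    refine (integrable_gaussAirySymbol hα).norm.mono'
      (Continuous.aestronglyMeasurable (by fun_prop)) (ae_of_all _ fun t => ?_)
    rw [norm_gaussAirySymbol, Complex.norm_exp, Complex.add_re, Complex.re_ofReal_mul,
      Complex.ofReal_re, Complex.I_re, mul_zero, add_zero]
  have heven := integral_comp_abs
    (f := fun t : ℝ => Real.exp (-α * t ^ 2) * Real.cos (x * t + t ^ 3 / 3))
  have hre : (𝓕 (gaussAirySymbol α) (-(2 * π)⁻¹ * x)).re
      = ∫ t : ℝ, Real.exp (-α * |t| ^ 2) * Real.cos (x * |t| + |t| ^ 3 / 3) := by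
    rw [Real.fourier_real_eq_integral_exp_smul]
    simp_rw [hform]
    refine (integral_re hint).symm.trans (integral_congr_ae (ae_of_all _ fun t => ?_))
    simp only [RCLike.re_eq_complex_re, Complex.exp_re, Complex.add_re, Complex.add_im,
      Complex.re_ofReal_mul, Complex.im_ofReal_mul, Complex.ofReal_re, Complex.ofReal_im,
      Complex.I_re, Complex.I_im, mul_zero, mul_one, add_zero, zero_add, sq_abs]
    rcases abs_choice t with h | h <;> rw [h]
    rw [← Real.cos_neg]
    congr 2
    ring
  rw [hre, heven]
  ring

/-- For `α > 0` the Gauss–Airy function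
`F(x) = (1/π)∫₀^∞ e^{−αt²} cos(xt + t³/3) dt` is Lebesgue integrable over `ℝ` with
total integral `1`. -/
theorem gaussAiry_integral_one (α : ℝ) (hα : 0 < α)
    (F : ℝ → ℝ)
    (hF : ∀ x, F x = (1 / Real.pi) *
      ∫ t in Set.Ioi (0 : ℝ), Real.exp (-α * t ^ 2) * Real.cos (x * t + t ^ 3 / 3)) :
    Integrable F ∧ (∫ x, F x) = 1 := by
  have hc : -(2 * π)⁻¹ ≠ 0 := by simp [Real.pi_ne_zero]
  have hFe : F = fun x => (2 * π)⁻¹ * (𝓕 (gaussAirySymbol α) (-(2 * π)⁻¹ * x)).re := by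
    funext x
    rw [hF, integral_Ioi_eq_re_fourier hα]
    field_simp
  have hi := integrable_fourier_gaussAirySymbol hα
  have hire : Integrable fun ξ => (𝓕 (gaussAirySymbol α) ξ).re := hi.re
  have hone : ∫ ξ, (𝓕 (gaussAirySymbol α) ξ).re = 1 := by
    refine (integral_re hi).trans ?_
    rw [integral_fourier_gaussAirySymbol hα]
    simp
  rw [hFe]
  refine ⟨(hire.comp_mul_left' hc).const_mul _, ?_⟩
  rw [integral_const_mul,
    Measure.integral_comp_mul_left (fun ξ => (𝓕 (gaussAirySymbol α) ξ).re), hone]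
  have hp : (0 : ℝ) < 2 * π := by positivity
  rw [inv_neg, inv_inv, abs_neg, abs_of_pos hp, smul_eq_mul, mul_one, inv_mul_cancel₀ hp.ne']
end

section
/- Let α > 0 and let {P_n} be the monic sequence defined by P₀ = 1, P₁ = x, P₂ = x² − 2α, and P_{n+3} = x P_{n+2} − 2α(n+2) P_{n+1} − (n+1)(n+2) P_n for n ≥ 0. Let F(x) = (1/π)∫₀^∞ e^{−αt²} cos(xt + t³/3) dt. Then all the integrals below converge absolutely and, for every n ≥ 0, ∫_{−∞}^{+∞} P_n(x) F(x) dx = δ_{n,0} and ∫_{−∞}^{+∞} P_n(x) (−F′(x)) dx = δ_{n,1}. In other words, the first two dual functionals u₀, u₁ of {P_n} are represented by the weight functions w₀ = F and w₁ = −F′ on the real line. -/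
/-!
The Fourier transform of the Gauss–Airy function is explicit. With the substitution `t = 2πv`,
`F` is the real part of the Fourier transform `Φ` of
`h v = exp (-4π²α v² - (8π³/3) i v³)`, which is a Schwartz function (`airySymbol`): each of its
derivatives is a polynomial times `h`, and `‖h v‖ = exp (-4π²α v²)`. Hence `F` is a real Schwartz
function, every polynomial is integrable against it and against its derivatives, and integration by
parts produces no boundary terms.

Two facts about `F` carry the proof.
* Fourier inversion at `0` gives `∫ F = Re (h 0) = 1`.
* Transforming the equation `h' = -(8π²α v + 8π³ i v²) h` gives `x F = F'' - 2α F'`.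

Write `L p = ∫ p F`. Integrating by parts, the differential equation becomes
`L (x p) = L (2α p' + p'')`. On the polynomial side, the recurrence yields the Appell property
`P_{n+1}' = (n+1) P_n`, so that the recurrence itself reads
`P_{n+1} = x P_n - 2α P_n' - P_n''`. Therefore `L (P_{n+1}) = 0`, while `L (P_0) = 1`. Finally
`∫ P_n (-F') = L (P_n') = n L (P_{n-1}) = δ_{n,1}`.
-/

open Polynomial MeasureTheory Real

open scoped FourierTransform SchwartzMap

/-! ### The symbol is a Schwartz function -/

/-- Polynomial growth is absorbed by a Gaussian. The bound comes from `|v| ^ m ≤ 1 + (v ^ 2) ^ m`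
and from the term of order `m` in the power series of `exp (a * v ^ 2)`. -/
lemma abs_pow_mul_gauss_le {a : ℝ} (ha : 0 < a) (m : ℕ) (v : ℝ) :
    |v| ^ m * rexp (-(a * v ^ 2)) ≤ 1 + m.factorial / a ^ m := by
  have h1 : |v| ^ m ≤ 1 + (v ^ 2) ^ m := by
    rw [← sq_abs, ← pow_mul, mul_comm 2 m, pow_mul]
    nlinarith [sq_nonneg (|v| ^ m - 1), sq_nonneg (|v| ^ m)]
  have h2 : (a * v ^ 2) ^ m / m.factorial ≤ rexp (a * v ^ 2) :=
    Real.pow_div_factorial_le_exp _ (by positivity) m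
  have h3 : (v ^ 2) ^ m * rexp (-(a * v ^ 2)) ≤ m.factorial / a ^ m := by
    rw [Real.exp_neg, ← div_eq_mul_inv, div_le_div_iff₀ (Real.exp_pos _) (by positivity)]
    rw [div_le_iff₀ (by positivity), mul_pow] at h2
    linarith
  have h4 : rexp (-(a * v ^ 2)) ≤ 1 := Real.exp_le_one_iff.2 (by nlinarith [sq_nonneg v])
  nlinarith [Real.exp_pos (-(a * v ^ 2))]

lemma exists_poly_gauss_bound {a : ℝ} (ha : 0 < a) (k : ℕ) (q : ℂ[X]) :
    ∃ M : ℝ, ∀ v : ℝ, |v| ^ k * (‖q.eval (v : ℂ)‖ * rexp (-(a * v ^ 2))) ≤ M := by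
  induction q using Polynomial.induction_on' with
  | add p q hp hq =>
    obtain ⟨A, hA⟩ := hp
    obtain ⟨B, hB⟩ := hq
    refine ⟨A + B, fun v => ?_⟩
    refine le_trans ?_ (add_le_add (hA v) (hB v))
    rw [← mul_add, ← add_mul, eval_add]
    gcongr
    exact norm_add_le _ _
  | monomial n c =>
    refine ⟨‖c‖ * (1 + (k + n).factorial / a ^ (k + n)), fun v => ?_⟩
    have := mul_le_mul_of_nonneg_left (abs_pow_mul_gauss_le ha (k + n) v) (norm_nonneg c)
    refine le_trans (le_of_eq ?_) this
    simp only [eval_monomial, norm_mul, norm_pow, Complex.norm_real, Real.norm_eq_abs]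
    ring

/-- The function `v ↦ exp (-a v² - (b/3) i v³)`. -/
noncomputable def gaussCubic (a b : ℝ) (v : ℝ) : ℂ :=
  Complex.exp (-(a * (v : ℂ) ^ 2) - b / 3 * (v : ℂ) ^ 3 * Complex.I)

lemma norm_gaussCubic (a b v : ℝ) : ‖gaussCubic a b v‖ = rexp (-(a * v ^ 2)) := by
  have : -(a * (v : ℂ) ^ 2) - b / 3 * (v : ℂ) ^ 3 * Complex.I
      = ((-(a * v ^ 2) : ℝ) : ℂ) + ((-(b / 3 * v ^ 3) : ℝ) : ℂ) * Complex.I := by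
    push_cast; ring
  rw [gaussCubic, this, Complex.norm_exp]
  simp only [Complex.add_re, Complex.ofReal_re, Complex.re_ofReal_mul, Complex.I_re, mul_zero,
    add_zero]

lemma hasDerivAt_gaussCubic (a b v : ℝ) :
    HasDerivAt (gaussCubic a b)
      ((-(2 * a * (v : ℂ)) - b * (v : ℂ) ^ 2 * Complex.I) * gaussCubic a b v) v := by
  have h : HasDerivAt (fun z : ℂ => Complex.exp (-(a * z ^ 2) - b / 3 * z ^ 3 * Complex.I))
      ((-(2 * a * (v : ℂ)) - b * (v : ℂ) ^ 2 * Complex.I) * gaussCubic a b v) (v : ℂ) := by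
    have h2 : HasDerivAt (fun z : ℂ => -(a * z ^ 2) - b / 3 * z ^ 3 * Complex.I)
        (-(a * (2 * (v : ℂ))) - b / 3 * (3 * (v : ℂ) ^ 2) * Complex.I) (v : ℂ) := by
      have e2 := hasDerivAt_pow 2 (v : ℂ)
      have e3 := hasDerivAt_pow 3 (v : ℂ)
      norm_num at e2 e3
      exact (e2.const_mul (a : ℂ)).neg.sub ((e3.const_mul (b / 3 : ℂ)).mul_const Complex.I)
    refine h2.cexp.congr_deriv ?_
    unfold gaussCubic
    ring
  exact h.comp_ofReal

/-- The polynomial factor of the `n`-th derivative of `gaussCubic a b`. -/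
noncomputable def gaussCubicPoly (a b : ℝ) : ℕ → ℂ[X]
  | 0 => 1
  | n + 1 => derivative (gaussCubicPoly a b n)
      + gaussCubicPoly a b n * (C (-(2 * a : ℂ)) * X - C (b * Complex.I) * X ^ 2)

lemma iteratedDeriv_gaussCubic (a b : ℝ) (n : ℕ) :
    iteratedDeriv n (gaussCubic a b)
      = fun v : ℝ => (gaussCubicPoly a b n).eval (v : ℂ) * gaussCubic a b v := by
  induction n with
  | zero => simp [gaussCubicPoly]
  | succ n ih =>
    rw [iteratedDeriv_succ, ih]
    ext v
    have h1 := ((gaussCubicPoly a b n).hasDerivAt (v : ℂ)).comp_ofReal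
    refine (h1.mul (hasDerivAt_gaussCubic a b v)).deriv.trans ?_
    simp only [gaussCubicPoly, eval_add, eval_mul, eval_sub, eval_C, eval_X, eval_pow]
    ring

lemma contDiff_gaussCubic (a b : ℝ) : ContDiff ℝ (⊤ : ℕ∞) (gaussCubic a b) := by
  have h : ContDiff ℝ (⊤ : ℕ∞) (fun v : ℝ => (v : ℂ)) := Complex.ofRealCLM.contDiff
  unfold gaussCubic
  fun_prop

/-- `gaussCubic a b` as a Schwartz function, for `a > 0`. -/
noncomputable def airySymbol {a : ℝ} (ha : 0 < a) (b : ℝ) : 𝓢(ℝ, ℂ) where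
  toFun := gaussCubic a b
  smooth' := contDiff_gaussCubic a b
  decay' k n := by
    obtain ⟨M, hM⟩ := exists_poly_gauss_bound ha k (gaussCubicPoly a b n)
    refine ⟨M, fun v => ?_⟩
    rw [norm_iteratedFDeriv_eq_norm_iteratedDeriv, iteratedDeriv_gaussCubic, norm_mul,
      norm_gaussCubic, Real.norm_eq_abs]
    exact hM v

/-! ### The Fourier transform of the symbol -/

/-- The equation `x Φ = Φ'' - 2α Φ'` for `Φ = 𝓕 h`. It is the Fourier transform of
`h' = -(8π²α v + 8π³ i v²) h`: differentiation becomes multiplication by `2πi x`, and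
multiplication by `-2πi v` becomes differentiation. -/
lemma fourier_airySymbol_ode {α : ℝ} (ha : 0 < 4 * π ^ 2 * α) (x : ℝ) :
    (x : ℂ) * 𝓕 (airySymbol ha (8 * π ^ 3)) x
      = deriv (deriv (𝓕 (airySymbol ha (8 * π ^ 3)) : 𝓢(ℝ, ℂ))) x
        - 2 * α * deriv (𝓕 (airySymbol ha (8 * π ^ 3)) : 𝓢(ℝ, ℂ)) x := by
  set h := airySymbol ha (8 * π ^ 3) with hh
  have i0 : Integrable (h : ℝ → ℂ) := h.integrable
  have ik (k : ℕ) : Integrable (fun v : ℝ => (v : ℂ) ^ k * h v) := by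
    refine (h.integrable_pow_mul volume k).mono' (by fun_prop) (ae_of_all _ fun v => ?_)
    simp
  have i1 : Integrable (fun v : ℝ => (v : ℂ) * h v) := by simpa using ik 1
  have i1' : Integrable (fun v : ℝ => v • h v) := by simpa using i1
  have j1 : Integrable (fun v : ℝ => (-2 * π * Complex.I * v) • h v) := by
    simpa [mul_assoc] using i1.const_mul (-2 * π * Complex.I)
  have j2 : Integrable (fun v : ℝ => v • ((-2 * π * Complex.I * v) • h v)) := by
    refine ((ik 2).const_mul (-2 * π * Complex.I)).congr (ae_of_all _ fun v => ?_)
    simp only [smul_eq_mul, Complex.real_smul]; ring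
  have hd : deriv (h : ℝ → ℂ)
      = fun v : ℝ => (-(2 * (4 * π ^ 2 * α : ℝ) * (v : ℂ))
          - (8 * π ^ 3 : ℝ) * (v : ℂ) ^ 2 * Complex.I) * h v := by
    ext v
    exact (hasDerivAt_gaussCubic _ _ v).deriv
  have id : Integrable (deriv (h : ℝ → ℂ)) := (SchwartzMap.derivCLM ℂ ℂ h).integrable
  have e1 : deriv (𝓕 h : 𝓢(ℝ, ℂ)) = 𝓕 (fun v : ℝ => (-2 * π * Complex.I * v) • h v) := by
    rw [SchwartzMap.fourier_coe, Real.deriv_fourier i0 i1']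
  have e2 := Real.deriv_fourier j1 j2
  have e3 := congrFun (Real.fourier_deriv i0 h.differentiable id) x
  rw [e1, e2, SchwartzMap.fourier_coe]
  -- `𝓕 h'` is the combination of the transforms of `v h` and `v² h` given by the equation for `h'`
  have e4 : 𝓕 (deriv (h : ℝ → ℂ)) x
      = -(4 * π * α * Complex.I) * 𝓕 (fun v : ℝ => (-2 * π * Complex.I * v) • h v) x
        + 2 * π * Complex.I * 𝓕 (fun v : ℝ =>
          (-2 * π * Complex.I * v) • ((-2 * π * Complex.I * v) • h v)) x := by
    have j3 : Integrable (fun v : ℝ =>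
        (-2 * π * Complex.I * v) • ((-2 * π * Complex.I * v) • h v)) := by
      refine (j2.const_mul (-2 * π * Complex.I)).congr (ae_of_all _ fun v => ?_)
      simp only [smul_eq_mul, Complex.real_smul]; ring
    have k1 := (Real.fourierIntegral_convergent_iff x).2 j1
    have k2 := (Real.fourierIntegral_convergent_iff x).2 j3
    simp only [Real.fourier_eq]
    rw [← integral_const_mul, ← integral_const_mul, ← integral_add (k1.const_mul _) (k2.const_mul _)]
    congr 1
    ext v
    rw [hd]
    simp only [Circle.smul_def, smul_eq_mul]
    push_cast
    linear_combination (-(8 * (Real.fourierChar (-inner ℝ v x) : ℂ) * π ^ 2 * α * v * h v)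
      - 8 * (Real.fourierChar (-inner ℝ v x) : ℂ) * π ^ 3 * v ^ 2 * h v * Complex.I) * Complex.I_sq
  rw [e4, smul_eq_mul] at e3
  have hne : (2 * π * Complex.I : ℂ) ≠ 0 := by simp [Real.pi_ne_zero]
  apply mul_left_cancel₀ hne
  linear_combination -e3

/-- Fourier inversion at the origin. -/
lemma integral_fourier_airySymbol {a : ℝ} (ha : 0 < a) (b : ℝ) :
    ∫ x, 𝓕 (airySymbol ha b) x = 1 := by
  have h := DFunLike.congr_fun
    (FourierTransform.fourierInv_fourier_eq (F := 𝓢(ℝ, ℂ)) (airySymbol ha b)) 0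
  rw [SchwartzMap.fourierInv_coe, Real.fourierInv_eq] at h
  have h0 : airySymbol ha b 0 = 1 := by
    change gaussCubic a b 0 = 1
    simp [gaussCubic]
  rw [h0] at h
  simpa using h

/-- The Gauss–Airy integral is the real part of the Fourier transform of the symbol; the scaling is
`t = 2πv`. -/
lemma re_fourier_airySymbol {α : ℝ} (ha : 0 < 4 * π ^ 2 * α) (x : ℝ) :
    (𝓕 (airySymbol ha (8 * π ^ 3)) x).re = (1 / π) *
      ∫ t in Set.Ioi (0 : ℝ), rexp (-α * t ^ 2) * Real.cos (x * t + t ^ 3 / 3) := by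
  have key : ∀ v : ℝ, (Real.fourierChar (-(v * x)) • airySymbol ha (8 * π ^ 3) v : ℂ).re
      = rexp (-α * (2 * π * v) ^ 2) * Real.cos (x * (2 * π * v) + (2 * π * v) ^ 3 / 3) := by
    intro v
    change (Real.fourierChar (-(v * x)) • gaussCubic _ _ v : ℂ).re = _
    have : (Real.fourierChar (-(v * x)) • gaussCubic (4 * π ^ 2 * α) (8 * π ^ 3) v : ℂ)
        = Complex.exp (((-α * (2 * π * v) ^ 2 : ℝ) : ℂ)
          + ((-(x * (2 * π * v) + (2 * π * v) ^ 3 / 3) : ℝ) : ℂ) * Complex.I) := by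
      rw [Circle.smul_def, Real.fourierChar_apply, gaussCubic, smul_eq_mul, ← Complex.exp_add]
      congr 1
      push_cast
      ring
    rw [this, Complex.exp_re]
    simp only [Complex.add_re, Complex.add_im, Complex.ofReal_re, Complex.ofReal_im,
      Complex.re_ofReal_mul, Complex.im_ofReal_mul, Complex.I_re, Complex.I_im, mul_zero, mul_one,
      add_zero, zero_add, Real.cos_neg]
  have hint : Integrable fun v : ℝ =>
      (Real.fourierChar (-(v * x)) • airySymbol ha (8 * π ^ 3) v : ℂ) := by
    have e : ∀ v : ℝ, inner ℝ v x = v * x := fun v => mul_comm x v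
    have := (Real.fourierIntegral_convergent_iff x).2
      ((airySymbol ha (8 * π ^ 3)).integrable (μ := volume))
    simpa only [e] using this
  have habs : ∀ t : ℝ, rexp (-α * t ^ 2) * Real.cos (x * t + t ^ 3 / 3)
      = rexp (-α * |t| ^ 2) * Real.cos (x * |t| + |t| ^ 3 / 3) := by
    intro t
    rcases abs_choice t with h | h <;> rw [h]
    rw [← Real.cos_neg]
    ring_nf
  rw [SchwartzMap.fourier_coe, Real.fourier_real_eq, ← Complex.reCLM_apply,
    ← Complex.reCLM.integral_comp_comm hint]
  simp only [Complex.reCLM_apply, key]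
  rw [Measure.integral_comp_mul_left
    (fun t => rexp (-α * t ^ 2) * Real.cos (x * t + t ^ 3 / 3)) (2 * π)]
  rw [integral_congr_ae (ae_of_all _ habs),
    integral_comp_abs (f := fun t => rexp (-α * t ^ 2) * Real.cos (x * t + t ^ 3 / 3)),
    abs_of_pos (by positivity), smul_eq_mul]
  field_simp

/-! ### Polynomial moments of a real Schwartz function -/

lemma integrable_eval_mul_schwartz (p : ℝ[X]) (f : 𝓢(ℝ, ℝ)) :
    Integrable (fun x => p.eval x * f x) := by
  induction p using Polynomial.induction_on' with
  | add p q hp hq => 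
    simp only [eval_add, add_mul]
    exact hp.add hq
  | monomial n c =>
    have : Integrable (fun x : ℝ => x ^ n * f x) := by
      refine (f.integrable_pow_mul volume n).mono' (by fun_prop) (ae_of_all _ fun v => ?_)
      simp
    simpa [mul_assoc] using this.const_mul c

lemma integral_eval_mul_deriv_schwartz (p : ℝ[X]) (f : 𝓢(ℝ, ℝ)) :
    ∫ x, p.eval x * deriv f x = -∫ x, (derivative p).eval x * f x :=
  integral_mul_deriv_eq_deriv_mul_of_integrable (fun x _ => p.hasDerivAt x)
    (fun x _ => f.hasDerivAt x)
    (integrable_eval_mul_schwartz p (SchwartzMap.derivCLM ℝ ℝ f))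
    (integrable_eval_mul_schwartz _ f) (integrable_eval_mul_schwartz p f)

/-- The differential equation `x f = f'' - 2α f'`, in its weak form on polynomials. -/
lemma integral_X_mul_of_ode {α : ℝ} (f : 𝓢(ℝ, ℝ))
    (hf : ∀ x, x * f x = deriv (deriv f) x - 2 * α * deriv f x) (p : ℝ[X]) :
    ∫ x, (X * p).eval x * f x
      = ∫ x, (C (2 * α) * derivative p + derivative (derivative p)).eval x * f x := by
  let f₁ := SchwartzMap.derivCLM ℝ ℝ f
  have hf₁ : (f₁ : ℝ → ℝ) = deriv f := by ext x; rfl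
  have e1 := integral_eval_mul_deriv_schwartz p f
  have e2 := integral_eval_mul_deriv_schwartz p f₁
  have e3 := integral_eval_mul_deriv_schwartz (derivative p) f
  have i1 := integrable_eval_mul_schwartz p f₁
  have i2 := integrable_eval_mul_schwartz p (SchwartzMap.derivCLM ℝ ℝ f₁)
  have i2' : Integrable (fun x => p.eval x * deriv f₁ x) := i2
  have j1 := integrable_eval_mul_schwartz (derivative p) f
  have j2 := integrable_eval_mul_schwartz (derivative (derivative p)) f
  calc ∫ x, (X * p).eval x * f x
      = ∫ x, (p.eval x * deriv f₁ x - 2 * α * (p.eval x * f₁ x)) := by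
        congr 1; ext x
        rw [hf₁, eval_mul, eval_X]
        linear_combination (p.eval x) * hf x
    _ = 2 * α * (∫ x, (derivative p).eval x * f x)
          + ∫ x, (derivative (derivative p)).eval x * f x := by
        rw [integral_sub i2' (i1.const_mul _), integral_const_mul, e2, hf₁, e3, e1]
        ring
    _ = _ := by
        rw [← integral_const_mul, ← integral_add (j1.const_mul _) j2]
        congr 1; ext x
        simp only [eval_add, eval_mul, eval_C]
        ring

/-! ### The Appell property of the polynomials -/

/-- The Appell property: the recurrence forces `P_{n+1}' = (n+1) P_n`. -/
lemma derivative_eq_of_recurrence {α : ℝ} {P : ℕ → ℝ[X]}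
    (hP0 : P 0 = 1) (hP1 : P 1 = X) (hP2 : P 2 = X ^ 2 - C (2 * α))
    (hPrec : ∀ n : ℕ, P (n + 3) =
      X * P (n + 2) - C (2 * α * ((n : ℝ) + 2)) * P (n + 1)
        - C (((n : ℝ) + 1) * ((n : ℝ) + 2)) * P n) (n : ℕ) :
    derivative (P (n + 1)) = C ((n : ℝ) + 1) * P n := by
  induction n using Nat.strong_induction_on with
  | _ n ih =>
    match n with
    | 0 => simp [hP0, hP1]
    | 1 =>
      rw [hP1, hP2]
      norm_num
    | 2 =>
      have h1 := ih 1 (by norm_num)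
      rw [hPrec 0]
      norm_num [hP0, hP1, hP2] at h1 ⊢
      simp only [map_ofNat]
      ring
    | n + 3 =>
      have h1 := ih n (by omega)
      have h2 := ih (n + 1) (by omega)
      have h3 := ih (n + 2) (by omega)
      rw [hPrec (n + 1)]
      simp only [derivative_sub, derivative_mul, derivative_X, derivative_C, h1, h2, h3]
      rw [show n + 1 + 2 = n + 3 from rfl, show n + 1 + 1 = n + 2 from rfl, hPrec n]
      push_cast
      simp only [map_add, map_mul, map_natCast, map_ofNat, map_one]
      ring

/-- The recurrence rewritten as a differential raising operator,
`P_{n+1} = (x - 2α D - D²) P_n`. -/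
lemma succ_eq_of_recurrence {α : ℝ} {P : ℕ → ℝ[X]}
    (hP0 : P 0 = 1) (hP1 : P 1 = X) (hP2 : P 2 = X ^ 2 - C (2 * α))
    (hPrec : ∀ n : ℕ, P (n + 3) =
      X * P (n + 2) - C (2 * α * ((n : ℝ) + 2)) * P (n + 1)
        - C (((n : ℝ) + 1) * ((n : ℝ) + 2)) * P n) (n : ℕ) :
    P (n + 1) = X * P n
      - (C (2 * α) * derivative (P n) + derivative (derivative (P n))) := by
  have hd := derivative_eq_of_recurrence hP0 hP1 hP2 hPrec
  match n with
  | 0 => simp [hP0, hP1]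
  | 1 => simp [hP1, hP2, sq]
  | n + 2 =>
    rw [hd (n + 1), derivative_C_mul, hd n, hPrec n]
    push_cast
    simp only [map_add, map_mul, map_natCast, map_ofNat, map_one]
    ring

/-! ### The dual functionals -/

/-- For `α > 0`, the monic 2-orthogonal family defined by
`P₀ = 1`, `P₁ = x`, `P₂ = x² − 2α`, `P_{n+3} = xP_{n+2} − 2α(n+2)P_{n+1} − (n+1)(n+2)P_n`
has its first two dual functionals represented by the Gauss–Airy weight
`w₀ = F` and `w₁ = −F'`, where `F(x) = (1/π)∫₀^∞ e^{−αt²} cos(xt + t³/3) dt`. -/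
theorem gaussAiry_weights (α : ℝ) (hα : 0 < α)
    (P : ℕ → Polynomial ℝ)
    (hP0 : P 0 = 1) (hP1 : P 1 = X) (hP2 : P 2 = X ^ 2 - C (2 * α))
    (hPrec : ∀ n : ℕ, P (n + 3) =
      X * P (n + 2) - C (2 * α * ((n : ℝ) + 2)) * P (n + 1)
        - C (((n : ℝ) + 1) * ((n : ℝ) + 2)) * P n)
    (F : ℝ → ℝ)
    (hF : ∀ x, F x = (1 / Real.pi) *
      ∫ t in Set.Ioi (0 : ℝ), Real.exp (-α * t ^ 2) * Real.cos (x * t + t ^ 3 / 3)) :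
    ∀ n : ℕ,
      Integrable (fun x => (P n).eval x * F x) ∧
      Integrable (fun x => (P n).eval x * (-(deriv F x))) ∧
      (∫ x, (P n).eval x * F x) = (if n = 0 then 1 else 0) ∧
      (∫ x, (P n).eval x * (-(deriv F x))) = (if n = 1 then 1 else 0) := by
  have ha : 0 < 4 * π ^ 2 * α := by positivity
  let Φ : 𝓢(ℝ, ℂ) := 𝓕 (airySymbol ha (8 * π ^ 3))
  let f : 𝓢(ℝ, ℝ) := SchwartzMap.postcompCLM Complex.reCLM Φ
  have hFf : F = f := by
    ext x
    rw [hF x, ← re_fourier_airySymbol ha x]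
    rfl
  have hre (Ψ : 𝓢(ℝ, ℂ)) : deriv (fun x => (Ψ x).re) = fun x => (deriv Ψ x).re := by
    ext x
    exact (Complex.reCLM.hasFDerivAt.comp_hasDerivAt x (Ψ.hasDerivAt x)).deriv
  have hd1 : deriv f = fun x => (deriv Φ x).re := hre Φ
  have hd2 : deriv (deriv f) = fun x => (deriv (deriv Φ) x).re := by
    rw [hd1]
    exact hre (SchwartzMap.derivCLM ℂ ℂ Φ)
  have hode : ∀ x, x * f x = deriv (deriv f) x - 2 * α * deriv f x := by
    intro x
    have h := congrArg Complex.re (fourier_airySymbol_ode ha x)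
    rw [hd2, hd1]
    have h2 : (2 * α : ℂ) = ((2 * α : ℝ) : ℂ) := by push_cast; rfl
    rw [h2, Complex.sub_re, Complex.re_ofReal_mul, Complex.re_ofReal_mul] at h
    exact h
  have hone : ∫ x, f x = 1 := by
    have h := Complex.reCLM.integral_comp_comm (Φ.integrable (μ := volume))
    rw [integral_fourier_airySymbol ha (8 * π ^ 3)] at h
    exact h
  -- by the raising operator and the differential equation, `∫ P_{n+1} F = 0`
  have hL : ∀ n, ∫ x, (P n).eval x * f x = if n = 0 then 1 else 0 := by
    intro n
    cases n with
    | zero => simpa [hP0] using hone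
    | succ n =>
      rw [succ_eq_of_recurrence hP0 hP1 hP2 hPrec n]
      simp only [eval_sub, sub_mul]
      rw [integral_sub (integrable_eval_mul_schwartz _ f) (integrable_eval_mul_schwartz _ f),
        integral_X_mul_of_ode f hode]
      simp
  intro n
  subst hFf
  refine ⟨integrable_eval_mul_schwartz _ f, ?_, hL n, ?_⟩
  · simpa using (integrable_eval_mul_schwartz (P n) (SchwartzMap.derivCLM ℝ ℝ f)).neg
  · simp only [mul_neg, integral_neg, integral_eval_mul_deriv_schwartz, neg_neg]
    cases n with
    | zero => simp [hP0]
    | succ n =>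
      simp only [derivative_eq_of_recurrence hP0 hP1 hP2 hPrec n, eval_mul, eval_C, mul_assoc]
      rw [integral_const_mul, hL n]
      by_cases h : n = 0 <;> simp [h]
end

section
/- Let {P_n} be the monic sequence defined by P₀ = 1, P₁ = x, P₂ = x², and P_{n+3} = x P_{n+2} − (n+1)(n+2) P_n for n ≥ 0, and let u₀, u₁ be the first two elements of its dual sequence. Then for every n ≥ 0: ⟨u₀, x^{3n}⟩ = (3n)!/(3^n n!), ⟨u₀, x^{3n+1}⟩ = 0, ⟨u₀, x^{3n+2}⟩ = 0, ⟨u₁, x^{3n+1}⟩ = (3n+1)!/(3^n n!), ⟨u₁, x^{3n}⟩ = 0, and ⟨u₁, x^{3n+2}⟩ = 0. -/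
/-!
The recurrence says `X P_k = P_{k+1} + k(k-1) P_{k-2}`. Since the `P_k` span the polynomials,
duality turns this into `u_m(X Q) = u_{m-1}(Q) + (m+1)(m+2) u_{m+2}(Q)` for every `Q`
(with `u_{-1} = 0`). Taking `Q = X^N` and inducting on `N` gives all moments of all dual
functionals: `u_m(X^{m+3k}) = (m+3k)! / (3^k k! m!)`, and `u_m(X^N) = 0` when `N` is not of
the form `m + 3k`. This closed form is the expansion of `X^N` in the `P_m`, as read off the
generating function `exp(xt) = exp(t³/3) ∑ P_n(x) tⁿ/n!`.
-/

open Polynomial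

section

variable {P : ℕ → Polynomial ℝ}

lemma span_airy (hP0 : P 0 = 1) (hP1 : P 1 = X) (hP2 : P 2 = X ^ 2)
    (hPrec : ∀ n : ℕ, P (n + 3) =
      X * P (n + 2) - C (((n : ℝ) + 1) * ((n : ℝ) + 2)) * P n) :
    Submodule.span ℝ (Set.range P) = ⊤ := by
  have hmem : ∀ k, P k ∈ Submodule.span ℝ (Set.range P) :=
    fun k => Submodule.subset_span ⟨k, rfl⟩
  -- By the recurrence, the span is stable under multiplication by `X`.
  have hX : ∀ Q ∈ Submodule.span ℝ (Set.range P), X * Q ∈ Submodule.span ℝ (Set.range P) := by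
    intro Q hQ
    induction hQ using Submodule.span_induction with
    | mem Q hQ =>
      obtain ⟨k, rfl⟩ := hQ
      match k with
      | 0 => simpa [hP0, hP1] using hmem 1
      | 1 => simpa [hP1, hP2, sq] using hmem 2
      | n + 2 =>
        have h : X * P (n + 2) = P (n + 3) + (((n : ℝ) + 1) * ((n : ℝ) + 2)) • P n := by
          rw [hPrec, smul_eq_C_mul]; ring
        rw [h]
        exact Submodule.add_mem _ (hmem _) (Submodule.smul_mem _ _ (hmem _))
    | zero => simp
    | add a b _ _ ha hb => rw [mul_add]; exact Submodule.add_mem _ ha hb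
    | smul c a _ ha => rw [mul_smul_comm]; exact Submodule.smul_mem _ _ ha
  have hpow : ∀ n : ℕ, (X : Polynomial ℝ) ^ n ∈ Submodule.span ℝ (Set.range P) := by
    intro n
    induction n with
    | zero => simpa [hP0] using hmem 0
    | succ n ih => rw [pow_succ']; exact hX _ ih
  rw [eq_top_iff]
  intro Q _
  induction Q using Polynomial.induction_on' with
  | add p q hp hq => exact Submodule.add_mem _ (hp trivial) (hq trivial)
  | monomial n a =>
    rw [← C_mul_X_pow_eq_monomial, ← smul_eq_C_mul]
    exact Submodule.smul_mem _ _ (hpow n)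

/-- The recurrence of the `P_k`, transposed to the dual sequence. -/
lemma dual_airy_rec (hP0 : P 0 = 1) (hP1 : P 1 = X) (hP2 : P 2 = X ^ 2)
    (hPrec : ∀ n : ℕ, P (n + 3) =
      X * P (n + 2) - C (((n : ℝ) + 1) * ((n : ℝ) + 2)) * P n)
    (u : ℕ → (Polynomial ℝ →ₗ[ℝ] ℝ))
    (hu : ∀ n m, u n (P m) = if n = m then 1 else 0) (Q : Polynomial ℝ) :
    u 0 (X * Q) = 2 * u 2 Q ∧
      ∀ m : ℕ, u (m + 1) (X * Q) = u m Q + ((m : ℝ) + 2) * ((m : ℝ) + 3) * u (m + 3) Q := by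
  have h0 : X * P 0 = P 1 := by rw [hP0, hP1, mul_one]
  have h1 : X * P 1 = P 2 := by rw [hP1, hP2, sq]
  have h2 : ∀ n, X * P (n + 2) = P (n + 3) + (((n : ℝ) + 1) * ((n : ℝ) + 2)) • P n := by
    intro n
    rw [hPrec, smul_eq_C_mul]; ring
  have hQ : Q ∈ Submodule.span ℝ (Set.range P) := by
    rw [span_airy hP0 hP1 hP2 hPrec]; trivial
  induction hQ using Submodule.span_induction with
  | mem Q hQ =>
    obtain ⟨k, rfl⟩ := hQ
    match k with
    | 0 => rw [h0]; simp [hu]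
    | 1 => rw [h1]; simp [hu]
    | n + 2 =>
      rw [h2]
      simp only [map_add, map_smul, hu, smul_eq_mul]
      refine ⟨?_, fun m => ?_⟩
      · rcases n with _ | n <;> simp
      · by_cases h : m + 1 = n
        · subst h
          have e : ¬ (m = m + 1 + 2) := by omega
          simp [e]
          ring
        · have e1 : ¬ (m + 3 = n + 2) := by omega
          simp [h, e1]
  | zero => simp
  | add a b _ _ ha hb =>
    refine ⟨?_, fun m => ?_⟩
    · rw [mul_add, map_add, map_add, ha.1, hb.1]; ring
    · rw [mul_add, map_add, map_add, map_add, ha.2, hb.2]; ring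
  | smul c a _ ha =>
    refine ⟨?_, fun m => ?_⟩
    · rw [mul_smul_comm, map_smul, map_smul, ha.1]; simp only [smul_eq_mul]; ring
    · rw [mul_smul_comm, map_smul, map_smul, map_smul, ha.2]; simp only [smul_eq_mul]; ring

/-- The recurrence for the moments, together with `u_m(1) = δ_{m0}`, determines the moments of
every `u_m`. The two parts need each other: the inductive step at `k = 0` uses a vanishing
moment. -/
lemma moments_of_rec (u : ℕ → (Polynomial ℝ →ₗ[ℝ] ℝ))
    (hone : ∀ m, u m 1 = if m = 0 then 1 else 0)
    (hrec : ∀ Q : Polynomial ℝ, u 0 (X * Q) = 2 * u 2 Q ∧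
      ∀ m : ℕ, u (m + 1) (X * Q) = u m Q + ((m : ℝ) + 2) * ((m : ℝ) + 3) * u (m + 3) Q)
    (N m : ℕ) :
    (∀ k, N = m + 3 * k →
      u m (X ^ N) = (Nat.factorial N : ℝ) / (3 ^ k * Nat.factorial k * Nat.factorial m)) ∧
    ((∀ k, N ≠ m + 3 * k) → u m (X ^ N) = 0) := by
  induction N generalizing m with
  | zero =>
    refine ⟨fun k hk => ?_, fun h => ?_⟩
    · obtain ⟨rfl, rfl⟩ : m = 0 ∧ k = 0 := by omega
      simp [hone]
    · have : m ≠ 0 := by have := h 0; omega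
      simp [hone, this]
  | succ N ih =>
    rw [pow_succ']
    rcases m with _ | m
    · rw [(hrec _).1]
      refine ⟨fun k hk => ?_, fun h => ?_⟩
      · obtain ⟨j, rfl⟩ : ∃ j, k = j + 1 := ⟨k - 1, by omega⟩
        have hN : (N : ℝ) + 1 = 3 * ((j : ℝ) + 1) := by exact_mod_cast (by omega)
        rw [(ih 2).1 j (by omega), Nat.factorial_succ N, Nat.factorial_succ j]
        push_cast
        rw [hN]
        have := Nat.factorial_ne_zero j
        simp only [Nat.factorial]
        push_cast
        field_simp
        ring
      · rw [(ih 2).2 (fun k hk => h (k + 1) (by omega)), mul_zero]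
    · rw [(hrec _).2]
      refine ⟨fun k hk => ?_, fun h => ?_⟩
      · rw [(ih m).1 k (by omega)]
        have hm := Nat.factorial_ne_zero m
        rcases k with _ | j
        · rw [(ih (m + 3)).2 (fun k hk' => by omega)]
          obtain rfl : N = m := by omega
          have := Nat.factorial_ne_zero (N + 1)
          simp
          field_simp
        · have hN : (N : ℝ) + 1 = (m : ℝ) + 1 + 3 * ((j : ℝ) + 1) := by
            exact_mod_cast (by omega)
          rw [(ih (m + 3)).1 j (by omega), Nat.factorial_succ N, Nat.factorial_succ j,
            Nat.factorial_succ (m + 2), Nat.factorial_succ (m + 1), Nat.factorial_succ m]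
          push_cast
          rw [hN]
          have := Nat.factorial_ne_zero j
          have e2 : (m : ℝ) + 1 + 1 ≠ 0 := by positivity
          have e3 : (m : ℝ) + 2 + 1 ≠ 0 := by positivity
          field_simp
          ring
      · rw [(ih m).2 (fun k hk => h k (by omega)),
          (ih (m + 3)).2 (fun k hk => h (k + 1) (by omega))]
        ring

end

/-- For the 2-symmetric (Airy) family `P₀ = 1`, `P₁ = x`, `P₂ = x²`,
`P_{n+3} = xP_{n+2} − (n+1)(n+2)P_n`, the moments of the first two dual functionals are
`⟨u₀, x^{3n}⟩ = (3n)!/(3ⁿn!)`, `⟨u₁, x^{3n+1}⟩ = (3n+1)!/(3ⁿn!)`, all other moments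
in the indicated residue classes being zero. -/
theorem airy_moments
    (P : ℕ → Polynomial ℝ)
    (hP0 : P 0 = 1) (hP1 : P 1 = X) (hP2 : P 2 = X ^ 2)
    (hPrec : ∀ n : ℕ, P (n + 3) =
      X * P (n + 2) - C (((n : ℝ) + 1) * ((n : ℝ) + 2)) * P n)
    (u : ℕ → (Polynomial ℝ →ₗ[ℝ] ℝ))
    (hu : ∀ n m, u n (P m) = if n = m then 1 else 0) :
    ∀ n : ℕ,
      u 0 (X ^ (3 * n)) = (Nat.factorial (3 * n) : ℝ) / (3 ^ n * Nat.factorial n) ∧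
      u 0 (X ^ (3 * n + 1)) = 0 ∧
      u 0 (X ^ (3 * n + 2)) = 0 ∧
      u 1 (X ^ (3 * n + 1)) = (Nat.factorial (3 * n + 1) : ℝ) / (3 ^ n * Nat.factorial n) ∧
      u 1 (X ^ (3 * n)) = 0 ∧
      u 1 (X ^ (3 * n + 2)) = 0 := by
  have key := moments_of_rec u (fun m => by rw [← hP0, hu])
    (dual_airy_rec hP0 hP1 hP2 hPrec u hu)
  intro n
  refine ⟨?_, ?_, ?_, ?_, ?_, ?_⟩
  · simpa using (key (3 * n) 0).1 n (by omega)
  · exact (key _ 0).2 (fun k => by omega)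
  · exact (key _ 0).2 (fun k => by omega)
  · simpa using (key (3 * n + 1) 1).1 n (by omega)
  · exact (key _ 1).2 (fun k => by omega)
  · exact (key _ 1).2 (fun k => by omega)
end

section
/- Let p > −1 and q be real numbers. For x > 0 define f(x) = ∫_{−∞}^{−1} e^{xt} (−1−t)^p (1−t)^q dt. Then f is twice differentiable on (0, ∞) and satisfies the Laplace-type differential equation x f′′(x) + (2 + p + q) f′(x) + ((q − p) − x) f(x) = 0 for all x > 0. -/
/-!
Write `w t = (-1 - t) ^ p * (1 - t) ^ q`. Differentiating under the integral sign turns the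
left-hand side of the equation into
`∫ e^{xt} w(t) (x (t² - 1) + (2 + p + q) t + (q - p)) dt`,
and since `(t² - 1) w' = ((p + q) t + (q - p)) w`, this integrand is the derivative of
`e^{xt} (t² - 1) w(t) = e^{xt} (-1 - t)^(p+1) (1 - t)^(q+1)`, which vanishes at `-1`
(because `p + 1 > 0`) and at `-∞`. Hence the integral is zero.

The analytic input is the integrability of every moment `e^{xt} w(t) t^k` for `x > 0`
(`integrableOn_laplaceMoment`), by comparison with the Gamma integrand `s ^ p * e^{-(x/2) s}`,
`s = -1 - t`. The moments at `x / 2` also dominate those at all `y > x / 2`, which justifies the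
differentiation (`hasDerivAt_integral_laplaceMoment`).
-/

open MeasureTheory Real

/-- The integrand of the `k`-th derivative of the Laplace integral with weight
`(-1 - t) ^ p * (1 - t) ^ q`. -/
noncomputable def laplaceMoment (p q : ℝ) (k : ℕ) (x t : ℝ) : ℝ :=
  Real.exp (x * t) * (-1 - t) ^ p * (1 - t) ^ q * t ^ k

lemma measurable_laplaceMoment (p q : ℝ) (k : ℕ) (x : ℝ) :
    Measurable (laplaceMoment p q k x) := by
  unfold laplaceMoment
  fun_prop

/-- The factors `(1 - t) ^ q * t ^ k` grow polynomially, so they cost only half of the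
exponential decay; what remains is a Gamma integrand in `-1 - t`. -/
lemma integrableOn_laplaceMoment {p : ℝ} (hp : -1 < p) (q : ℝ) (k : ℕ) {x : ℝ} (hx : 0 < x) :
    IntegrableOn (laplaceMoment p q k x) (Set.Iio (-1)) := by
  have hG : IntegrableOn (fun s : ℝ => s ^ p * rexp (-(x / 2) * s ^ (1 : ℝ))) (Set.Ioi 0) :=
    integrableOn_rpow_mul_exp_neg_mul_rpow hp one_pos (half_pos hx)
  have hG' : IntegrableOn (fun t : ℝ => (-1 - t) ^ p * rexp (-(x / 2) * (-1 - t)))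
      (Set.Iio (-1)) := by
    have h := ((Measure.measurePreserving_sub_left volume (-1 : ℝ)).integrableOn_comp_preimage
      (MeasurableEquiv.subLeft (-1 : ℝ)).measurableEmbedding).2 hG
    have hs : (fun t : ℝ => -1 - t) ⁻¹' Set.Ioi 0 = Set.Iio (-1) := by
      ext t; simp
    rw [hs] at h
    simpa [Function.comp_def] using h
  set N : ℕ := ⌈|q|⌉₊ + k with hN
  refine Integrable.mono' (hG'.const_mul (N.factorial / (x / 2) ^ N))
    (measurable_laplaceMoment p q k x).aestronglyMeasurable ?_
  refine (ae_restrict_iff' measurableSet_Iio).2 (Filter.Eventually.of_forall fun t ht => ?_)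
  have ht : t < -1 := ht
  have h1 : 0 < -1 - t := by linarith
  have h2 : 1 ≤ 1 - t := by linarith
  have hq : (1 - t) ^ q ≤ (1 - t) ^ ⌈|q|⌉₊ := by
    rw [← rpow_natCast]
    exact rpow_le_rpow_of_exponent_le h2 ((le_abs_self q).trans (Nat.le_ceil _))
  have hk : |t| ^ k ≤ (1 - t) ^ k := by
    gcongr
    rw [abs_of_neg (by linarith)]
    linarith
  have hpoly : (1 - t) ^ q * |t| ^ k ≤ (1 - t) ^ N := by
    rw [hN, pow_add]
    gcongr
  have hexp : (1 - t) ^ N ≤ N.factorial / (x / 2) ^ N * rexp (x / 2 * (1 - t)) := by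
    have h := pow_div_factorial_le_exp (x / 2 * (1 - t)) (by positivity) N
    rw [div_le_iff₀ (by positivity), mul_pow] at h
    rw [div_mul_eq_mul_div, le_div_iff₀ (by positivity)]
    linarith
  have hnorm : ‖laplaceMoment p q k x t‖
      = rexp (x * t) * (-1 - t) ^ p * ((1 - t) ^ q * |t| ^ k) := by
    rw [laplaceMoment, norm_mul, norm_pow, Real.norm_eq_abs, Real.norm_eq_abs,
      abs_of_pos (by positivity), mul_assoc]
  rw [hnorm]
  calc rexp (x * t) * (-1 - t) ^ p * ((1 - t) ^ q * |t| ^ k)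
      ≤ rexp (x * t) * (-1 - t) ^ p
          * (N.factorial / (x / 2) ^ N * rexp (x / 2 * (1 - t))) := by
        exact mul_le_mul_of_nonneg_left (hpoly.trans hexp) (by positivity)
    _ = N.factorial / (x / 2) ^ N
          * ((-1 - t) ^ p * (rexp (x * t) * rexp (x / 2 * (1 - t)))) := by ring
    _ = N.factorial / (x / 2) ^ N * ((-1 - t) ^ p * rexp (-(x / 2) * (-1 - t))) := by
        rw [← Real.exp_add]
        ring_nf

lemma hasDerivAt_integral_laplaceMoment {p : ℝ} (hp : -1 < p) (q : ℝ) (k : ℕ) {x : ℝ}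
    (hx : 0 < x) :
    HasDerivAt (fun y => ∫ t in Set.Iio (-1 : ℝ), laplaceMoment p q k y t)
      (∫ t in Set.Iio (-1 : ℝ), laplaceMoment p q (k + 1) x t) x := by
  refine (hasDerivAt_integral_of_dominated_loc_of_deriv_le
    (F' := fun y t => laplaceMoment p q (k + 1) y t)
    (bound := fun t => ‖laplaceMoment p q (k + 1) (x / 2) t‖)
    (Ioi_mem_nhds (half_lt_self hx))
    (Filter.Eventually.of_forall fun y =>
      (measurable_laplaceMoment p q k y).aestronglyMeasurable)
    (integrableOn_laplaceMoment hp q k hx)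
    (measurable_laplaceMoment p q (k + 1) x).aestronglyMeasurable ?_
    (integrableOn_laplaceMoment hp q (k + 1) (half_pos hx)).norm ?_).2
  · refine (ae_restrict_iff' measurableSet_Iio).2
      (Filter.Eventually.of_forall fun t ht y hy => ?_)
    have ht : t < -1 := ht
    have hy : x / 2 < y := hy
    simp only [laplaceMoment, norm_mul, Real.norm_eq_abs, Real.abs_exp]
    gcongr ?_ * _ * _ * _
    exact Real.exp_le_exp.2 (by nlinarith)
  · refine Filter.Eventually.of_forall fun t y _ => ?_
    have h : HasDerivAt (fun y => rexp (y * t)) (rexp (y * t) * t) y := by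
      simpa using ((hasDerivAt_id y).mul_const t).exp
    refine (((h.mul_const ((-1 - t) ^ p)).mul_const ((1 - t) ^ q)).mul_const
      (t ^ k)).congr_deriv ?_
    simp only [laplaceMoment]
    ring

/-- The combination of moments in the differential equation is the derivative of the antiderivative
`e^{xt} (t² - 1) w(t)`, written as the moment of order `0` with both exponents raised by one. -/
lemma hasDerivAt_laplaceMoment_add_one (p q x : ℝ) {t : ℝ} (ht : t < -1) :
    HasDerivAt (laplaceMoment (p + 1) (q + 1) 0 x)
      (x * laplaceMoment p q 2 x t + (2 + p + q) * laplaceMoment p q 1 x t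
        + ((q - p) - x) * laplaceMoment p q 0 x t) t := by
  have h1 : 0 < -1 - t := by linarith
  have h2 : 0 < 1 - t := by linarith
  have hE : HasDerivAt (fun t => rexp (x * t)) (rexp (x * t) * x) t := by
    simpa using ((hasDerivAt_id t).const_mul x).exp
  have hA := ((hasDerivAt_id t).const_sub (-1)).rpow_const (p := p + 1) (Or.inl h1.ne')
  have hB := ((hasDerivAt_id t).const_sub 1).rpow_const (p := q + 1) (Or.inl h2.ne')
  have hH := ((hE.mul hA).mul hB).mul_const (t ^ 0)
  have hF : laplaceMoment (p + 1) (q + 1) 0 x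
      = fun t => rexp (x * t) * (-1 - t) ^ (p + 1) * (1 - t) ^ (q + 1) * t ^ 0 := rfl
  simp only [id, add_sub_cancel_right] at hH
  refine HasDerivAt.congr_deriv (f := laplaceMoment (p + 1) (q + 1) 0 x) hH ?_
  simp only [laplaceMoment, Pi.mul_apply, rpow_add_one h1.ne', rpow_add_one h2.ne']
  ring

lemma integral_laplaceMoment_eq_zero {p : ℝ} (hp : -1 < p) (q : ℝ) {x : ℝ} (hx : 0 < x) :
    ∫ t in Set.Iio (-1 : ℝ), (x * laplaceMoment p q 2 x t + (2 + p + q) * laplaceMoment p q 1 x t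
        + ((q - p) - x) * laplaceMoment p q 0 x t) = 0 := by
  have hint : IntegrableOn (fun t => x * laplaceMoment p q 2 x t
      + (2 + p + q) * laplaceMoment p q 1 x t
      + ((q - p) - x) * laplaceMoment p q 0 x t) (Set.Iic (-1)) := by
    rw [integrableOn_Iic_iff_integrableOn_Iio]
    exact (((integrableOn_laplaceMoment hp q 2 hx).const_mul _).add
      ((integrableOn_laplaceMoment hp q 1 hx).const_mul _)).add
      ((integrableOn_laplaceMoment hp q 0 hx).const_mul _)
  have hlt : Set.Iic (-2 : ℝ) ⊆ Set.Iio (-1) := Set.Iic_subset_Iio.2 (by norm_num)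
  -- An integrable function with integrable derivative tends to zero at infinity.
  have hlim : Filter.Tendsto (laplaceMoment (p + 1) (q + 1) 0 x) Filter.atBot (nhds 0) :=
    tendsto_zero_of_hasDerivAt_of_integrableOn_Iic
      (fun t ht => hasDerivAt_laplaceMoment_add_one p q x (hlt ht))
      (hint.mono_set (hlt.trans Set.Iio_subset_Iic_self))
      ((integrableOn_laplaceMoment (by linarith) (q + 1) 0 hx).mono_set hlt)
  have hcont : ContinuousAt (laplaceMoment (p + 1) (q + 1) 0 x) (-1) := by
    have hA : ContinuousAt (fun t : ℝ => (-1 - t) ^ (p + 1)) (-1) :=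
      ContinuousAt.rpow_const (by fun_prop) (Or.inr (by linarith))
    have hB : ContinuousAt (fun t : ℝ => (1 - t) ^ (q + 1)) (-1) :=
      ContinuousAt.rpow_const (by fun_prop) (Or.inl (by norm_num))
    unfold laplaceMoment
    fun_prop
  have h := integral_Iic_of_hasDerivAt_of_tendsto hcont.continuousWithinAt
    (fun t ht => hasDerivAt_laplaceMoment_add_one p q x ht) hint hlim
  rw [← integral_Iic_eq_integral_Iio, h]
  have hp1 : p + 1 ≠ 0 := by linarith
  simp [laplaceMoment, zero_rpow hp1]

/-- For `p > −1`, the Laplace integral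
`f(x) = ∫_{−∞}^{−1} e^{xt}(−1−t)^p(1−t)^q dt` is twice differentiable on `(0, ∞)` and
satisfies `x f'' + (2+p+q) f' + ((q−p) − x) f = 0` there. -/
theorem laplace_weight_pos (p q : ℝ) (hp : -1 < p)
    (f : ℝ → ℝ)
    (hf : ∀ x, f x = ∫ t in Set.Iio (-1 : ℝ),
      Real.exp (x * t) * (-1 - t) ^ p * (1 - t) ^ q) :
    (∀ x > (0 : ℝ), DifferentiableAt ℝ f x) ∧
    (∀ x > (0 : ℝ), DifferentiableAt ℝ (deriv f) x) ∧
    ∀ x > (0 : ℝ),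
      x * deriv (deriv f) x + (2 + p + q) * deriv f x + ((q - p) - x) * f x = 0 := by
  have hf0 : f = fun x => ∫ t in Set.Iio (-1 : ℝ), laplaceMoment p q 0 x t := by
    funext x
    simp [hf, laplaceMoment]
  have h1 : ∀ x > (0 : ℝ),
      HasDerivAt f (∫ t in Set.Iio (-1 : ℝ), laplaceMoment p q 1 x t) x := fun x hx => by
    rw [hf0]
    exact hasDerivAt_integral_laplaceMoment hp q 0 hx
  have h2 : ∀ x > (0 : ℝ),
      HasDerivAt (deriv f) (∫ t in Set.Iio (-1 : ℝ), laplaceMoment p q 2 x t) x := fun x hx => by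
    refine (hasDerivAt_integral_laplaceMoment hp q 1 hx).congr_of_eventuallyEq ?_
    filter_upwards [Ioi_mem_nhds hx] with y hy
    exact (h1 y hy).deriv
  refine ⟨fun x hx => (h1 x hx).differentiableAt, fun x hx => (h2 x hx).differentiableAt,
    fun x hx => ?_⟩
  have hI := fun k => integrableOn_laplaceMoment hp q k hx
  have hI21 : IntegrableOn (fun t => x * laplaceMoment p q 2 x t
      + (2 + p + q) * laplaceMoment p q 1 x t) (Set.Iio (-1)) :=
    ((hI 2).const_mul _).add ((hI 1).const_mul _)
  rw [(h2 x hx).deriv, (h1 x hx).deriv, hf0, ← integral_laplaceMoment_eq_zero hp q hx,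
    integral_add hI21 ((hI 0).const_mul _),
    integral_add ((hI 2).const_mul _) ((hI 1).const_mul _),
    integral_const_mul, integral_const_mul, integral_const_mul]
end

section
/- Let q > −1 and p be real numbers. For x < 0 define g(x) = ∫_{1}^{+∞} e^{xt} (t+1)^p (t−1)^q dt. Then g is twice differentiable on (−∞, 0) and satisfies the Laplace-type differential equation x g′′(x) + (2 + p + q) g′(x) + ((q − p) − x) g(x) = 0 for all x < 0. -/
open MeasureTheory Real

/-!
Differentiating under the integral sign multiplies the integrand by `t`, so `g`, `g'`, `g''` are the
moments `n = 0, 1, 2` of the weight `e^{xt} (t+1)^p (t-1)^q` (`hasDerivAt_laplaceMoment`). The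
left-hand side of the equation is then the integral over `(1, ∞)` of
`d/dt [e^{xt} (t+1)^{p+1} (t-1)^{q+1}]
  = e^{xt} (t+1)^p (t-1)^q (x (t² - 1) + (p+1) (t-1) + (q+1) (t+1))`,
and the primitive vanishes at `t = 1`, because `q + 1 > 0`, and at infinity, because `x < 0`.

Everything rests on the integrability of the moments (`integrableOn_laplaceIntegrand`): half of the
exponential absorbs the polynomial growth of `t^n (t+1)^p`, leaving a shifted Gamma integrand.
-/

/-- The integrand of the `n`-th derivative in `x` of the Laplace integral:
`t^n e^{xt} (t+1)^p (t-1)^q`. -/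
noncomputable def laplaceIntegrand (p q : ℝ) (n : ℕ) (x t : ℝ) : ℝ :=
  t ^ n * (Real.exp (x * t) * (t + 1) ^ p * (t - 1) ^ q)

lemma laplaceIntegrand_measurable (p q : ℝ) (n : ℕ) (x : ℝ) :
    Measurable (laplaceIntegrand p q n x) := by
  unfold laplaceIntegrand
  fun_prop

lemma integrableOn_shifted_gamma {q b : ℝ} (hq : -1 < q) (hb : 0 < b) :
    IntegrableOn (fun t : ℝ => (t - 1) ^ q * Real.exp (-b * (t - 1))) (Set.Ioi 1) := by
  have h := integrableOn_rpow_mul_exp_neg_mul_rpow hq one_pos hb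
  simp only [Real.rpow_one] at h
  have h2 := ((measurePreserving_sub_right volume (1 : ℝ)).integrableOn_comp_preimage
    (MeasurableEquiv.subRight (1 : ℝ)).measurableEmbedding).2 h
  simpa [Function.comp_def] using h2

/-- For `t > 1`, polynomial growth is dominated by an exponential of any positive rate `c`. -/
lemma pow_mul_rpow_le_exp (p : ℝ) (n : ℕ) {c : ℝ} (hc : 0 < c) :
    ∃ C : ℝ, 0 ≤ C ∧ ∀ t : ℝ, 1 < t → t ^ n * (t + 1) ^ p ≤ C * Real.exp (c * t) := by
  obtain ⟨k, hk⟩ := exists_nat_ge p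
  refine ⟨(n + k).factorial / c ^ (n + k) * Real.exp c, by positivity, fun t ht => ?_⟩
  have h1 : t ^ n * (t + 1) ^ p ≤ (t + 1) ^ (n + k) := by
    rw [pow_add, ← Real.rpow_natCast (t + 1) k]
    gcongr
    · linarith
    · linarith
  have h2 := Real.pow_div_factorial_le_exp (c * (t + 1)) (by nlinarith) (n + k)
  rw [div_le_iff₀ (by positivity), mul_pow, mul_add, mul_one, Real.exp_add] at h2
  refine h1.trans ?_
  rw [div_mul_eq_mul_div, div_mul_eq_mul_div, le_div_iff₀ (by positivity)]
  linarith

lemma integrableOn_laplaceIntegrand (p : ℝ) {q : ℝ} (hq : -1 < q) (n : ℕ) {x : ℝ} (hx : x < 0) :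
    IntegrableOn (laplaceIntegrand p q n x) (Set.Ioi 1) := by
  have hc : 0 < -x / 2 := by linarith
  obtain ⟨C, hC, hle⟩ := pow_mul_rpow_le_exp p n hc
  refine ((integrableOn_shifted_gamma hq hc).const_mul (C * Real.exp (x / 2))).mono'
    (laplaceIntegrand_measurable p q n x).aestronglyMeasurable ?_
  refine (ae_restrict_iff' measurableSet_Ioi).2 (Filter.Eventually.of_forall fun t ht => ?_)
  have ht : 1 < t := ht
  have h0 : 0 ≤ (t - 1) ^ q := Real.rpow_nonneg (by linarith) _
  have h1 : 0 ≤ (t + 1) ^ p := Real.rpow_nonneg (by linarith) _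
  have h2 : 0 ≤ t ^ n := by positivity
  rw [laplaceIntegrand, Real.norm_of_nonneg (by positivity)]
  calc t ^ n * (Real.exp (x * t) * (t + 1) ^ p * (t - 1) ^ q)
      = (t ^ n * (t + 1) ^ p) * (Real.exp (x * t) * (t - 1) ^ q) := by ring
    _ ≤ (C * Real.exp (-x / 2 * t)) * (Real.exp (x * t) * (t - 1) ^ q) := by
        exact mul_le_mul_of_nonneg_right (hle t ht) (by positivity)
    _ = C * (t - 1) ^ q * (Real.exp (-x / 2 * t) * Real.exp (x * t)) := by ring
    _ = C * (t - 1) ^ q * (Real.exp (x / 2) * Real.exp (-(-x / 2) * (t - 1))) := by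
        rw [← Real.exp_add, ← Real.exp_add]
        congr 2
        ring
    _ = _ := by ring

lemma hasDerivAt_laplaceMoment (p : ℝ) {q : ℝ} (hq : -1 < q) (n : ℕ) {x : ℝ} (hx : x < 0) :
    HasDerivAt (fun y => ∫ t in Set.Ioi (1 : ℝ), laplaceIntegrand p q n y t)
      (∫ t in Set.Ioi (1 : ℝ), laplaceIntegrand p q (n + 1) x t) x := by
  -- On the neighbourhood `y < x / 2` of `x`, the derivative is dominated by its value at `x / 2`.
  refine (hasDerivAt_integral_of_dominated_loc_of_deriv_le (s := Set.Iio (x / 2))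
    (F' := fun y t => laplaceIntegrand p q (n + 1) y t)
    (bound := laplaceIntegrand p q (n + 1) (x / 2))
    (Iio_mem_nhds (by linarith))
    (Filter.Eventually.of_forall fun y =>
      (laplaceIntegrand_measurable p q n y).aestronglyMeasurable)
    (integrableOn_laplaceIntegrand p hq n hx)
    (laplaceIntegrand_measurable p q (n + 1) x).aestronglyMeasurable ?_
    (integrableOn_laplaceIntegrand p hq (n + 1) (by linarith)) ?_).2
  · refine (ae_restrict_iff' measurableSet_Ioi).2
      (Filter.Eventually.of_forall fun t ht y hy => ?_)
    have ht : 1 < t := ht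
    have hy : y < x / 2 := hy
    have h0 : 0 ≤ (t - 1) ^ q := Real.rpow_nonneg (by linarith) _
    have h1 : 0 ≤ (t + 1) ^ p := Real.rpow_nonneg (by linarith) _
    have h2 : 0 ≤ t ^ (n + 1) := by positivity
    simp only [laplaceIntegrand]
    rw [Real.norm_of_nonneg (by positivity)]
    gcongr
  · refine Filter.Eventually.of_forall fun t y _ => ?_
    have h := ((((hasDerivAt_id y).mul_const t).exp.mul_const ((t + 1) ^ p)).mul_const
      ((t - 1) ^ q)).const_mul (t ^ n)
    refine h.congr_deriv ?_
    simp only [laplaceIntegrand, id]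
    ring

/-- The integral over `(1, ∞)` of the total derivative
`d/dt [e^{xt} (t+1)^{p+1} (t-1)^{q+1}]`, expressed in moments, is zero. -/
lemma laplaceMoment_relation (p : ℝ) {q : ℝ} (hq : -1 < q) {x : ℝ} (hx : x < 0) :
    x * (∫ t in Set.Ioi (1 : ℝ), laplaceIntegrand p q 2 x t)
      + (2 + p + q) * (∫ t in Set.Ioi (1 : ℝ), laplaceIntegrand p q 1 x t)
      + ((q - p) - x) * (∫ t in Set.Ioi (1 : ℝ), laplaceIntegrand p q 0 x t) = 0 := by
  have i0 := (integrableOn_laplaceIntegrand p hq 0 hx).const_mul ((q - p) - x)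
  have i1 := (integrableOn_laplaceIntegrand p hq 1 hx).const_mul (2 + p + q)
  have i2 := (integrableOn_laplaceIntegrand p hq 2 hx).const_mul x
  have hd : ∀ t ∈ Set.Ioi (1 : ℝ), HasDerivAt (laplaceIntegrand (p + 1) (q + 1) 0 x)
      (x * laplaceIntegrand p q 2 x t + (2 + p + q) * laplaceIntegrand p q 1 x t
        + ((q - p) - x) * laplaceIntegrand p q 0 x t) t := by
    intro t ht
    have ht : 1 < t := ht
    have ha : 0 < t + 1 := by linarith
    have hb : 0 < t - 1 := by linarith
    have h := ((((hasDerivAt_id t).const_mul x).exp.mul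
      (((hasDerivAt_id t).add_const 1).rpow_const (p := p + 1) (Or.inl ha.ne'))).mul
      (((hasDerivAt_id t).sub_const 1).rpow_const (p := q + 1) (Or.inl hb.ne')))
    have e : laplaceIntegrand (p + 1) (q + 1) 0 x =
        fun t => Real.exp (x * t) * (t + 1) ^ (p + 1) * (t - 1) ^ (q + 1) := by
      funext t
      simp [laplaceIntegrand]
    rw [e]
    refine h.congr_deriv ?_
    simp only [laplaceIntegrand, id, Pi.mul_apply, add_sub_cancel_right, Real.rpow_add_one ha.ne',
      Real.rpow_add_one hb.ne']
    ring
  have hcont : ContinuousWithinAt (laplaceIntegrand (p + 1) (q + 1) 0 x) (Set.Ici 1) 1 := by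
    refine ContinuousAt.continuousWithinAt ?_
    have h1 : ContinuousAt (fun t : ℝ => (t + 1) ^ (p + 1)) 1 :=
      ContinuousAt.rpow_const (by fun_prop) (Or.inl (by norm_num))
    have h2 : ContinuousAt (fun t : ℝ => (t - 1) ^ (q + 1)) 1 :=
      ContinuousAt.rpow_const (by fun_prop) (Or.inr (by linarith))
    unfold laplaceIntegrand
    fun_prop
  have i21 : IntegrableOn (fun t => x * laplaceIntegrand p q 2 x t
      + (2 + p + q) * laplaceIntegrand p q 1 x t) (Set.Ioi 1) := i2.add i1
  have hint := i21.add i0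
  -- The primitive and its derivative are both integrable, so the primitive vanishes at infinity.
  have hlim := tendsto_zero_of_hasDerivAt_of_integrableOn_Ioi hd hint
    (integrableOn_laplaceIntegrand (p + 1) (by linarith : -1 < q + 1) 0 hx)
  have key := integral_Ioi_of_hasDerivAt_of_tendsto hcont hd hint hlim
  have hz : laplaceIntegrand (p + 1) (q + 1) 0 x 1 = 0 := by
    simp [laplaceIntegrand, Real.zero_rpow (by linarith : q + 1 ≠ 0)]
  rw [hz, integral_add i21 i0, integral_add i2 i1] at key
  simpa only [integral_const_mul, sub_zero] using key

/-- For `q > −1`, the Laplace integral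
`g(x) = ∫_{1}^{∞} e^{xt}(t+1)^p(t−1)^q dt` is twice differentiable on `(−∞, 0)` and
satisfies `x g'' + (2+p+q) g' + ((q−p) − x) g = 0` there. -/
theorem laplace_weight_neg (p q : ℝ) (hq : -1 < q)
    (g : ℝ → ℝ)
    (hg : ∀ x, g x = ∫ t in Set.Ioi (1 : ℝ),
      Real.exp (x * t) * (t + 1) ^ p * (t - 1) ^ q) :
    (∀ x < (0 : ℝ), DifferentiableAt ℝ g x) ∧
    (∀ x < (0 : ℝ), DifferentiableAt ℝ (deriv g) x) ∧
    ∀ x < (0 : ℝ),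
      x * deriv (deriv g) x + (2 + p + q) * deriv g x + ((q - p) - x) * g x = 0 := by
  have hg0 : g = fun x => ∫ t in Set.Ioi (1 : ℝ), laplaceIntegrand p q 0 x t := by
    funext x
    simp [hg, laplaceIntegrand]
  have d1 : ∀ x < (0 : ℝ), HasDerivAt g
      (∫ t in Set.Ioi (1 : ℝ), laplaceIntegrand p q 1 x t) x := fun x hx => by
    rw [hg0]
    exact hasDerivAt_laplaceMoment p hq 0 hx
  have d2 : ∀ x < (0 : ℝ), HasDerivAt (deriv g)
      (∫ t in Set.Ioi (1 : ℝ), laplaceIntegrand p q 2 x t) x := fun x hx => by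
    refine (hasDerivAt_laplaceMoment p hq 1 hx).congr_of_eventuallyEq ?_
    filter_upwards [Iio_mem_nhds hx] with y hy using (d1 y hy).deriv
  refine ⟨fun x hx => (d1 x hx).differentiableAt, fun x hx => (d2 x hx).differentiableAt,
    fun x hx => ?_⟩
  rw [(d2 x hx).deriv, (d1 x hx).deriv, hg0]
  exact laplaceMoment_relation p hq hx
end

section
/- Let −1 < p < 0 and −1 < q < 0 with p + q < −1, and let {P_n} be the monic 2-orthogonal family with parameters s = 0, r = −1, α₁ = −(p+q), β₀ = q − p, γ = β₀ − α₁. Define, for x ≥ 0, W₁(x) = ∫_{−∞}^{−1} e^{xt}(−1−t)^p(1−t)^q dt and, for x ≤ 0, W₂(x) = ∫_{1}^{+∞} e^{xt}(t+1)^p(t−1)^q dt. Then there exist real constants k₁, k₂ such that the functions w₀(x) = k₁W₁(x) for x ≥ 0, w₀(x) = k₂W₂(x) for x < 0, and w₁(x) = [−x w₀′(x) + (x − β₀ − 1) w₀(x)]/(α₁ + β₀) (for x ≠ 0) satisfy, for every n ≥ 0, ∫_{−∞}^{+∞} P_n(x) w₀(x) dx = δ_{n,0} and ∫_{−∞}^{+∞}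 P_n(x) w₁(x) dx = δ_{n,1}; that is, the first two dual functionals u₀, u₁ of {P_n} admit integral representations with weights w₀ and w₁ supported on the whole real line. -/
/-!
The functionals `u₀, u₁` are encoded by exponential generating functions
`A(z) = ∑ ⟨u, xᵏ⟩ zᵏ / k!`, regarded as formal power series; multiplication of a functional by `x`
then becomes differentiation of `A`.

**Moments.** Put `N_{a,b}(k) = ∫_{t > 1} (t - 1)^a (t + 1)^b t^{-k} dt`. Fubini and the Gamma
integral give
`∫ xᵏ w₀ = k! cₖ` with `cₖ = k₁ N_{p,q}(k+1) + (-1)ᵏ k₂ N_{q,p}(k+1)`. Integrating the derivative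
of `(t - 1)^{a+1} (t + 1)^{b+1} / t^{j+1}` over `(1, ∞)` yields a three-term recurrence for
`N_{a,b}` (`negMoment_rec`). If `k₁ N_{p,q}(0) = k₂ N_{q,p}(0)`, that is, if `w₀` is continuous
at `0`, this recurrence says exactly that `F = ∑ cₖ zᵏ` satisfies
`(1 - z²) F' = (β₀ + α₁ z) F` (`generating_ode`), so that `F = c₀ (1 - z)^p (1 + z)^q`. Only the
differential equation is used below, not the closed form.
The remaining freedom in `(k₁, k₂)` is spent on `c₀ = 1`. Since the moments of `x w₀'` are
`-(k+1)! cₖ`, the weight `w₁` has generating function `F · z / (1 - z)`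
(`second_weight_moment`).

**Duality.** The series `F · zⁿ (1 - z)^{-⌈n/2⌉} (1 + z)^{-⌊n/2⌋}` starts with `F` and
`F · z / (1 - z)`, and by the differential equation it satisfies the recurrence dual to the one
defining `P` (`derivative_dualFactor`). An induction on the degree (`biorthogonal`) then shows that
it is the generating function of `n! uₙ` (`momentFunctional_dualFactor`); the cases `n = 0, 1` are
the theorem.
-/

open Polynomial MeasureTheory Real

namespace CaseIII

/-! ### Functionals with a given generating function -/

/-- The linear functional on polynomials with exponential moment generating function `A`: it sends
`X ^ k` to `k!` times the `k`-th coefficient of `A`. -/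
noncomputable def momentFunctional (A : PowerSeries ℝ) : ℝ[X] →ₗ[ℝ] ℝ :=
  Polynomial.lsum fun k => ((k.factorial : ℝ) * PowerSeries.coeff k A) • LinearMap.id

theorem momentFunctional_monomial (A : PowerSeries ℝ) (k : ℕ) (c : ℝ) :
    momentFunctional A (monomial k c) = k.factorial * PowerSeries.coeff k A * c := by
  simp [momentFunctional, Polynomial.lsum]

theorem momentFunctional_add (A B : PowerSeries ℝ) (Q : ℝ[X]) :
    momentFunctional (A + B) Q = momentFunctional A Q + momentFunctional B Q := by
  induction Q using Polynomial.induction_on' with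
  | add p q hp hq => simp only [map_add, hp, hq]; ring
  | monomial n c => simp only [momentFunctional_monomial, map_add]; ring

theorem momentFunctional_C_mul (c : ℝ) (A : PowerSeries ℝ) (Q : ℝ[X]) :
    momentFunctional (PowerSeries.C c * A) Q = c * momentFunctional A Q := by
  induction Q using Polynomial.induction_on' with
  | add p q hp hq => simp only [map_add, hp, hq]; ring
  | monomial n c => simp only [momentFunctional_monomial, PowerSeries.coeff_C_mul]; ring

/-- Multiplication of the functional by `x` is differentiation of its generating function. -/
theorem momentFunctional_X_mul (A : PowerSeries ℝ) (Q : ℝ[X]) :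
    momentFunctional A (X * Q) = momentFunctional (PowerSeries.derivative ℝ A) Q := by
  induction Q using Polynomial.induction_on' with
  | add p q hp hq => simp only [mul_add, map_add, hp, hq]
  | monomial n c =>
    simp only [X_mul_monomial, momentFunctional_monomial, PowerSeries.coeff_derivative,
      Nat.factorial_succ]
    push_cast; ring

theorem momentFunctional_one (A : PowerSeries ℝ) :
    momentFunctional A 1 = PowerSeries.constantCoeff A := by
  simpa using momentFunctional_monomial A 0 1

/-! ### The dual recurrence -/

/-- Uniqueness of the dual family. Here `L n m` stands for `n! ⟨uₙ, P_m⟩` and `L' n m` for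
`n! ⟨uₙ, x P_m⟩`; `hL` is the recurrence of the functionals, while `h1`, `h2`, `h3` are the
recurrence of the polynomials. The polynomial coefficient in front of `P_{m+1}` is
`(m + 2) (m + 1 + α)` and the one in front of `P_m` is `(m + 2) (m + 1) g m`, the integer factors
being those absorbed on the functional side by the normalization `n!`. -/
theorem biorthogonal {L L' : ℕ → ℕ → ℝ} {b g : ℕ → ℝ} {α : ℝ}
    (hL : ∀ n m, L' n m = n * L (n - 1) m + b n * L n m + (n + α) * L (n + 1) m
      + g n * L (n + 2) m)
    (h0 : ∀ n, L n 0 = if n = 0 then 1 else 0)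
    (h1 : ∀ n, L n 1 = L' n 0 - b 0 * L n 0)
    (h2 : ∀ n, L n 2 = L' n 1 - b 1 * L n 1 - α * L n 0)
    (h3 : ∀ n m, L n (m + 3) = L' n (m + 2) - b (m + 2) * L n (m + 2)
      - ((m + 2 : ℝ) * (m + 1 + α)) * L n (m + 1)
      - ((m + 2 : ℝ) * (m + 1) * g m) * L n m) (m n : ℕ) :
    L n m = if n = m then (n.factorial : ℝ) else 0 := by
  induction m using Nat.strong_induction_on generalizing n with
  | _ m ih =>
  match m, ih with
  | 0, _ => rw [h0]; split_ifs with h <;> simp [h]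
  | 1, ih =>
    have i0 := fun n => ih 0 (by omega) n
    rw [h1, hL]
    simp only [i0]
    rcases (by omega : n = 0 ∨ n = 1 ∨ (n ≠ 0 ∧ n ≠ 1)) with rfl | rfl | ⟨_, _⟩
    · simp
    · simp
    · rw [if_neg (by omega), if_neg (by omega), if_neg (by omega), if_neg (by omega),
        if_neg (by omega)]
      simp
  | 2, ih =>
    have i0 := fun n => ih 0 (by omega) n
    have i1 := fun n => ih 1 (by omega) n
    rw [h2, hL]
    simp only [i0, i1]
    rcases (by omega : n = 0 ∨ n = 1 ∨ n = 2 ∨ (n ≠ 0 ∧ n ≠ 1 ∧ n ≠ 2)) with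
      rfl | rfl | rfl | ⟨_, _, _⟩
    · simp
    · simp
    · simp
    · rw [if_neg (by omega), if_neg (by omega), if_neg (by omega), if_neg (by omega),
        if_neg (by omega), if_neg (by omega)]
      simp
  | k + 3, ih =>
    have i0 := fun n => ih k (by omega) n
    have i1 := fun n => ih (k + 1) (by omega) n
    have i2 := fun n => ih (k + 2) (by omega) n
    rw [h3, hL]
    simp only [i0, i1, i2]
    rcases (by omega : n = k ∨ n = k + 1 ∨ n = k + 2 ∨ n = k + 3 ∨
        (n ≠ k ∧ n ≠ k + 1 ∧ n ≠ k + 2 ∧ n ≠ k + 3)) with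
      rfl | rfl | rfl | rfl | ⟨_, _, _, _⟩
    · rw [if_neg (by omega), if_neg (by omega), if_neg (by omega), if_pos rfl,
        if_neg (by omega), if_pos rfl, if_neg (by omega)]
      simp only [Nat.factorial_succ]
      push_cast; ring
    · rw [if_neg (by omega), if_neg (by omega), if_pos (by omega), if_neg (by omega),
        if_pos rfl, if_neg (by omega), if_neg (by omega)]
      simp only [Nat.factorial_succ]
      push_cast; ring
    · rw [if_neg (by omega), if_pos (by omega), if_neg (by omega), if_neg (by omega),
        if_neg (by omega), if_neg (by omega), if_neg (by omega)]
      ring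
    · rw [if_pos (by omega), if_neg (by omega), if_neg (by omega), if_neg (by omega),
        if_neg (by omega), if_neg (by omega), if_pos (by omega)]
      rw [show k + 3 - 1 = k + 2 by omega]
      simp only [Nat.factorial_succ]
      push_cast; ring
    · rw [if_neg (by omega), if_neg (by omega), if_neg (by omega), if_neg (by omega),
        if_neg (by omega), if_neg (by omega), if_neg (by omega)]
      ring

/-- In this identity and the three following ones, `x` is the formal variable, `a = 1 / (1 - x)`
and `b = 1 / (1 + x)`, so that `a * b * (β + α * x)` is the logarithmic derivative of the generating
function. They express the dual recurrence at the indices `0`, `1`, `2K + 2` and `2K + 3`, divided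
by the power of `x ^ 2 * (a * b)` common to all terms. -/
theorem key_zero {R : Type*} [CommRing R] (x a b β α : R) (ha : a * (1 - x) = 1) (hb : b * (1 + x) = 1) :
    a * b * (β + α * x) = β + α * (x * a) + (β - α) * (x ^ 2 * (a * b)) := by
  grind

theorem key_one {R : Type*} [CommRing R] (x a b β α : R) (ha : a * (1 - x) = 1) (hb : b * (1 + x) = 1) :
    a * b * (β + α * x) * (x * a) + (a + x * a ^ 2) =
      1 + (β + 2) * (x * a) + (1 + α) * (x ^ 2 * (a * b))
        + (2 + α + β) * (x ^ 2 * (a * b) * (x * a)) := by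
  grind

theorem key_even {R : Type*} [CommRing R] (x a b β α K : R)
    (ha : a * (1 - x) = 1) (hb : b * (1 + x) = 1) :
    a * b * (β + α * x) * (x ^ 2 * (a * b))
        + (K + 1) * (2 * x * (a * b) + x ^ 2 * (a ^ 2 * b - a * b ^ 2)) =
      2 * (K + 1) * (x * a) + (β - 2 * (K + 1)) * (x ^ 2 * (a * b))
        + (2 * (K + 1) + α) * (x ^ 2 * (a * b) * (x * a))
        + (β - α - 2 * (K + 1)) * (x ^ 2 * (a * b)) ^ 2 := by
  grind

theorem key_odd {R : Type*} [CommRing R] (x a b β α K : R)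
    (ha : a * (1 - x) = 1) (hb : b * (1 + x) = 1) :
    a * b * (β + α * x) * (x ^ 2 * (a * b) * (x * a)) + x ^ 2 * (a * b) * (a + x * a ^ 2)
        + (K + 1) * (x * a) * (2 * x * (a * b) + x ^ 2 * (a ^ 2 * b - a * b ^ 2)) =
      (2 * K + 3) * (x ^ 2 * (a * b)) + (β + 2 * K + 4) * (x ^ 2 * (a * b) * (x * a))
        + (2 * K + 3 + α) * (x ^ 2 * (a * b)) ^ 2
        + (2 * K + 4 + α + β) * ((x ^ 2 * (a * b)) ^ 2 * (x * a)) := by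
  grind

/-- The series `zⁿ (1 - z)^{-⌈n/2⌉} (1 + z)^{-⌊n/2⌋}`. It is written as a power of
`z² / (1 - z²)`, times one further factor `z / (1 - z)` when `n` is odd. -/
noncomputable def dualFactor (n : ℕ) : PowerSeries ℝ :=
  (PowerSeries.X ^ 2 * ((1 - PowerSeries.X)⁻¹ * (1 + PowerSeries.X)⁻¹)) ^ (n / 2) *
    (PowerSeries.X * (1 - PowerSeries.X)⁻¹) ^ (n % 2)

theorem geom_neg_mul : (1 - PowerSeries.X : PowerSeries ℝ)⁻¹ * (1 - PowerSeries.X) = 1 :=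
  PowerSeries.inv_mul_cancel _ (by simp)

theorem geom_pos_mul : (1 + PowerSeries.X : PowerSeries ℝ)⁻¹ * (1 + PowerSeries.X) = 1 :=
  PowerSeries.inv_mul_cancel _ (by simp)

/-- The recurrence `x vₙ = n vₙ₋₁ + βₙ vₙ + (n + α) vₙ₊₁ + gₙ vₙ₊₂` for `vₙ = n! uₙ`, in terms of
generating functions. At `n = 0` the first term vanishes, so the truncated `n - 1` is harmless. -/
theorem derivative_dualFactor {F : PowerSeries ℝ} {β α γ : ℝ} (hγ : γ = β - α)
    (hF : (1 - PowerSeries.X ^ 2) * PowerSeries.derivative ℝ F =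
      (PowerSeries.C β + PowerSeries.C α * PowerSeries.X) * F) (n : ℕ) :
    PowerSeries.derivative ℝ (F * dualFactor n) =
      PowerSeries.C (n : ℝ) * (F * dualFactor (n - 1))
      + PowerSeries.C (β - (-1) ^ n * n + (1 - (-1) ^ n) / 2) * (F * dualFactor n)
      + PowerSeries.C (n + α) * (F * dualFactor (n + 1))
      + PowerSeries.C (-(-1) ^ n * n + (1 - (-1) ^ n) / 2 * (1 + 2 * α) + γ)
        * (F * dualFactor (n + 2)) := by
  have ha := geom_neg_mul
  have hb := geom_pos_mul
  have hγ' : PowerSeries.C (R := ℝ) γ = PowerSeries.C β - PowerSeries.C α := by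
    rw [hγ, map_sub]
  have da : PowerSeries.derivative ℝ (1 - PowerSeries.X : PowerSeries ℝ)⁻¹
      = (1 - PowerSeries.X : PowerSeries ℝ)⁻¹ ^ 2 := by
    rw [PowerSeries.derivative_inv', map_sub, PowerSeries.derivative_X,
      PowerSeries.derivative_one]; ring
  have db : PowerSeries.derivative ℝ (1 + PowerSeries.X : PowerSeries ℝ)⁻¹
      = -(1 + PowerSeries.X : PowerSeries ℝ)⁻¹ ^ 2 := by
    rw [PowerSeries.derivative_inv', map_add, PowerSeries.derivative_X,
      PowerSeries.derivative_one]; ring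
  simp only [dualFactor]
  generalize (1 - PowerSeries.X : PowerSeries ℝ)⁻¹ = a at *
  generalize (1 + PowerSeries.X : PowerSeries ℝ)⁻¹ = b at *
  have hab : a * b * (1 - PowerSeries.X ^ 2) = 1 := by
    linear_combination b * (1 + PowerSeries.X) * ha + hb
  have hF' : PowerSeries.derivative ℝ F =
      a * b * (PowerSeries.C β + PowerSeries.C α * PowerSeries.X) * F := by
    linear_combination (-PowerSeries.derivative ℝ F) * hab + a * b * hF
  set w := PowerSeries.X ^ 2 * (a * b) with hw
  have dw : PowerSeries.derivative ℝ w =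
      2 * PowerSeries.X * (a * b) + PowerSeries.X ^ 2 * (a ^ 2 * b - a * b ^ 2) := by
    simp only [hw, Derivation.leibniz, Derivation.leibniz_pow, smul_eq_mul, da, db,
      PowerSeries.derivative_X, nsmul_eq_mul]
    push_cast; ring
  have dk (k : ℕ) : PowerSeries.derivative ℝ (w ^ (k + 1)) =
      (PowerSeries.C (k : ℝ) + 1) * w ^ k * (PowerSeries.derivative ℝ w) := by
    simp only [Derivation.leibniz_pow, smul_eq_mul, nsmul_eq_mul, map_natCast]
    push_cast; ring
  have dxa : PowerSeries.derivative ℝ (PowerSeries.X * a) = a + PowerSeries.X * a ^ 2 := by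
    simp only [Derivation.leibniz, smul_eq_mul, da, PowerSeries.derivative_X]
    ring
  have dF (G : PowerSeries ℝ) : PowerSeries.derivative ℝ (F * G) =
      F * (a * b * (PowerSeries.C β + PowerSeries.C α * PowerSeries.X) * G
        + PowerSeries.derivative ℝ G) := by
    rw [Derivation.leibniz, smul_eq_mul, smul_eq_mul, hF']; ring
  have hC2 : PowerSeries.C (2 : ℝ) = 2 := map_ofNat _ 2
  have dwG (k : ℕ) (G : PowerSeries ℝ) : PowerSeries.derivative ℝ (w ^ (k + 1) * G) =
      w ^ k * (w * PowerSeries.derivative ℝ G + (PowerSeries.C (k : ℝ) + 1) * G *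
        (2 * PowerSeries.X * (a * b) + PowerSeries.X ^ 2 * (a ^ 2 * b - a * b ^ 2))) := by
    rw [Derivation.leibniz, smul_eq_mul, smul_eq_mul, dk, dw]; ring
  -- The factor `w ^ k` is taken out in both parities, leaving an identity in `X`, `a`, `b`.
  rcases n.even_or_odd' with ⟨m, rfl | rfl⟩
  · rcases m with _ | k
    · simp [hF', hγ']
      linear_combination F * key_zero PowerSeries.X a b (PowerSeries.C β) (PowerSeries.C α) ha hb
    · have e1 : (2 * (k + 1)) / 2 = k + 1 := by omega
      have e2 : (2 * (k + 1)) % 2 = 0 := by omega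
      have e3 : (2 * (k + 1) - 1) / 2 = k := by omega
      have e4 : (2 * (k + 1) - 1) % 2 = 1 := by omega
      have e5 : (2 * (k + 1) + 1) / 2 = k + 1 := by omega
      have e6 : (2 * (k + 1) + 1) % 2 = 1 := by omega
      have e7 : (2 * (k + 1) + 2) / 2 = k + 2 := by omega
      have e8 : (2 * (k + 1) + 2) % 2 = 0 := by omega
      have e9 : (-1 : ℝ) ^ (2 * (k + 1)) = 1 := by simp
      have e10 : ((2 * (k + 1) : ℕ) : ℝ) = 2 * (k + 1) := by push_cast; ring
      rw [e1, e2, e3, e4, e5, e6, e7, e8, e9, e10, dF, dwG]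
      simp only [pow_zero, PowerSeries.derivative_one, map_add, map_sub, map_mul, map_neg,
        map_one, hγ', sub_self, zero_div, map_zero, hC2, pow_succ w]
      generalize PowerSeries.C (k : ℝ) = K
      generalize w ^ k = T
      rw [hw]
      linear_combination F * T * key_even PowerSeries.X a b (PowerSeries.C β) (PowerSeries.C α) K ha hb
  · rcases m with _ | k
    · simp [hγ', dF, dxa, -Derivation.leibniz, hC2, hw]
      linear_combination F * key_one PowerSeries.X a b (PowerSeries.C β) (PowerSeries.C α) ha hb
    · have e1 : (2 * (k + 1) + 1) / 2 = k + 1 := by omega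
      have e2 : (2 * (k + 1) + 1) % 2 = 1 := by omega
      have e3 : (2 * (k + 1) + 1 - 1) / 2 = k + 1 := by omega
      have e4 : (2 * (k + 1) + 1 - 1) % 2 = 0 := by omega
      have e5 : (2 * (k + 1) + 1 + 1) / 2 = k + 2 := by omega
      have e6 : (2 * (k + 1) + 1 + 1) % 2 = 0 := by omega
      have e7 : (2 * (k + 1) + 1 + 2) / 2 = k + 2 := by omega
      have e8 : (2 * (k + 1) + 1 + 2) % 2 = 1 := by omega
      have e9 : (-1 : ℝ) ^ (2 * (k + 1) + 1) = -1 := by simp [pow_succ, pow_mul]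
      have e10 : ((2 * (k + 1) + 1 : ℕ) : ℝ) = 2 * (k + 1) + 1 := by push_cast; ring
      have e11 : (1 - -1 : ℝ) / 2 = 1 := by norm_num
      rw [e1, e2, e3, e4, e5, e6, e7, e8, e9, e10, e11, dF, dwG, pow_one, dxa]
      simp only [pow_zero, map_add, map_sub, map_mul, map_neg,
        map_one, hγ', hC2, pow_succ w]
      generalize PowerSeries.C (k : ℝ) = K
      generalize w ^ k = T
      rw [hw]
      linear_combination F * T * key_odd PowerSeries.X a b (PowerSeries.C β) (PowerSeries.C α) K ha hb

/-! ### The weight on `(1, ∞)` and its negative moments -/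

/-- The weight `(t - 1)^a (t + 1)^b`, meaningful for `t > 1`. -/
noncomputable def jacobiWeight (a b t : ℝ) : ℝ := (t - 1) ^ a * (t + 1) ^ b

/-- The moment of order `-k` of `jacobiWeight a b` over `(1, ∞)`. -/
noncomputable def negMoment (a b : ℝ) (k : ℕ) : ℝ :=
  ∫ t in Set.Ioi (1 : ℝ), jacobiWeight a b t / t ^ k

theorem measurable_jacobiWeight (a b : ℝ) : Measurable (jacobiWeight a b) := by
  unfold jacobiWeight; fun_prop

theorem jacobiWeight_pos (a b : ℝ) {t : ℝ} (ht : 1 < t) : 0 < jacobiWeight a b t :=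
  mul_pos (rpow_pos_of_pos (by linarith) _) (rpow_pos_of_pos (by linarith) _)

theorem integrableOn_jacobiWeight {a b : ℝ} (ha : -1 < a) (hb : b < 0) (hab : a + b < -1) :
    IntegrableOn (jacobiWeight a b) (Set.Ioi 1) := by
  -- Near `1` the weight is dominated by `(t - 1)^a`, near infinity by `(t - 1)^(a + b)`.
  rw [← Set.Ioc_union_Ioi_eq_Ioi (one_le_two : (1 : ℝ) ≤ 2)]
  refine IntegrableOn.union ?_ ?_
  · have h : IntegrableOn (fun t : ℝ => (t - 1) ^ a) (Set.Ioc 1 2) := by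
      have := (intervalIntegral.intervalIntegrable_rpow' (a := 0) (b := 1) ha).comp_sub_right 1
      norm_num at this
      rwa [intervalIntegrable_iff_integrableOn_Ioc_of_le one_le_two] at this
    refine Integrable.mono' h (measurable_jacobiWeight a b).aestronglyMeasurable ?_
    refine (ae_restrict_iff' measurableSet_Ioc).2 (.of_forall fun t ht => ?_)
    rw [norm_of_nonneg (jacobiWeight_pos a b ht.1).le]
    exact mul_le_of_le_one_right (rpow_nonneg (by linarith [ht.1]) _)
      (rpow_le_one_of_one_le_of_nonpos (by linarith [ht.1]) hb.le)
  · have h : IntegrableOn (fun t : ℝ => (t - 1) ^ (a + b)) (Set.Ioi 2) := by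
      have h1 := integrableOn_Ioi_rpow_of_lt hab one_pos
      have := (MeasurePreserving.integrableOn_comp_preimage
        (measurePreserving_sub_right volume (1 : ℝ)) (measurableEmbedding_subRight 1)
        (s := Set.Ioi 1)).2 h1
      have hs : (fun x : ℝ => x - 1) ⁻¹' Set.Ioi 1 = Set.Ioi 2 := by
        ext t; simp only [Set.mem_preimage, Set.mem_Ioi]
        constructor <;> intro <;> linarith
      rw [hs] at this
      exact this
    refine Integrable.mono' h (measurable_jacobiWeight a b).aestronglyMeasurable ?_
    refine (ae_restrict_iff' measurableSet_Ioi).2 (.of_forall fun t ht => ?_)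
    have ht : 2 < t := ht
    rw [norm_of_nonneg (jacobiWeight_pos a b (by linarith)).le, rpow_add (by linarith)]
    exact mul_le_mul_of_nonneg_left
      (rpow_le_rpow_of_nonpos (by linarith) (by linarith) hb.le) (rpow_nonneg (by linarith) _)

theorem integrableOn_jacobiWeight_div {a b : ℝ} (ha : -1 < a) (hb : b < 0) (hab : a + b < -1)
    (k : ℕ) : IntegrableOn (fun t => jacobiWeight a b t / t ^ k) (Set.Ioi 1) := by
  refine Integrable.mono' (integrableOn_jacobiWeight ha hb hab)
    ((measurable_jacobiWeight a b).div (by fun_prop)).aestronglyMeasurable ?_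
  refine (ae_restrict_iff' measurableSet_Ioi).2 (.of_forall fun t ht => ?_)
  have ht : 1 < t := ht
  have h := jacobiWeight_pos a b ht
  rw [norm_of_nonneg (by positivity)]
  exact div_le_self h.le (one_le_pow₀ ht.le)

theorem negMoment_pos {a b : ℝ} (ha : -1 < a) (hb : b < 0) (hab : a + b < -1) (k : ℕ) :
    0 < negMoment a b k := by
  refine (setIntegral_pos_iff_support_of_nonneg_ae ?_
    (integrableOn_jacobiWeight_div ha hb hab k)).2 ?_
  · refine (ae_restrict_iff' measurableSet_Ioi).2 (.of_forall fun t ht => ?_)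
    have ht : 1 < t := ht
    exact (div_pos (jacobiWeight_pos a b ht) (by positivity)).le
  · have : Function.support (fun t => jacobiWeight a b t / t ^ k) ∩ Set.Ioi 1 = Set.Ioi 1 := by
      refine Set.inter_eq_right.2 fun t ht => ?_
      have ht : 1 < t := ht
      exact (div_pos (jacobiWeight_pos a b ht) (by positivity)).ne'
    rw [this]; simp

/-- Integration over `(1, ∞)` of the derivative of `(t - 1)^{a+1} (t + 1)^{b+1} / t^{j+1}`, whose
boundary values at `1` and `∞` vanish; at `∞`, `j = 0` is the case that needs `a + b < -1`. -/
theorem negMoment_rec {a b : ℝ} (ha : -1 < a) (hb₀ : -1 < b) (hb : b < 0) (hab : a + b < -1)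
    (j : ℕ) : (j + 1) * negMoment a b (j + 2) =
      (b - a) * negMoment a b (j + 1) + (j - 1 - (a + b)) * negMoment a b j := by
  have i0 := integrableOn_jacobiWeight_div ha hb hab j
  have i1 := integrableOn_jacobiWeight_div ha hb hab (j + 1)
  have i2 := integrableOn_jacobiWeight_div ha hb hab (j + 2)
  set f : ℝ → ℝ := fun t => (t - 1) ^ (a + 1) * (t + 1) ^ (b + 1) / t ^ (j + 1) with hf
  have hderiv : ∀ t ∈ Set.Ioi (1 : ℝ), HasDerivAt f
      ((j + 1) * (jacobiWeight a b t / t ^ (j + 2)) - (b - a) * (jacobiWeight a b t / t ^ (j + 1))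
        - (j - 1 - (a + b)) * (jacobiWeight a b t / t ^ j)) t := by
    intro t ht
    have ht : 1 < t := ht
    have h1 := ((hasDerivAt_id t).sub_const 1).rpow_const (p := a + 1)
      (Or.inl (by simp; linarith))
    have h2 := ((hasDerivAt_id t).add_const 1).rpow_const (p := b + 1)
      (Or.inl (by simp; linarith))
    have h3 := (h1.mul h2).div (hasDerivAt_pow (j + 1) t) (by positivity)
    refine h3.congr_deriv ?_
    simp only [id, add_sub_cancel_right, jacobiWeight, Pi.mul_apply]
    rw [rpow_add (by linarith : 0 < t - 1), rpow_add (by linarith : 0 < t + 1), rpow_one, rpow_one]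
    have : t ≠ 0 := by positivity
    field_simp
    push_cast
    ring
  have hcont : ContinuousWithinAt f (Set.Ici 1) 1 := by
    refine ContinuousAt.continuousWithinAt ?_
    refine ContinuousAt.div (ContinuousAt.mul ?_ ?_) (by fun_prop) (by simp)
    · exact ContinuousAt.rpow_const (by fun_prop) (Or.inr (by linarith))
    · exact ContinuousAt.rpow_const (by fun_prop) (Or.inr (by linarith))
  have hlim : Filter.Tendsto f Filter.atTop (nhds 0) := by
    have hj : (0 : ℝ) ≤ j := j.cast_nonneg
    have hz : Filter.Tendsto (fun t : ℝ => 2 ^ (b + 1) * t ^ (-(j - (a + b + 1)))) Filter.atTop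
        (nhds (2 ^ (b + 1) * 0)) := by
      exact (tendsto_rpow_neg_atTop (by linarith)).const_mul _
    rw [mul_zero] at hz
    refine squeeze_zero' ?_ ?_ hz
    · filter_upwards [Filter.eventually_gt_atTop 1] with t ht
      have h1 : 0 ≤ t - 1 := by linarith
      have h2 : 0 ≤ t + 1 := by linarith
      positivity
    · filter_upwards [Filter.eventually_gt_atTop 1] with t ht
      have ht0 : 0 < t := by linarith
      have h1 : (t - 1) ^ (a + 1) ≤ t ^ (a + 1) :=
        rpow_le_rpow (by linarith) (by linarith) (by linarith)
      have h2 : (t + 1) ^ (b + 1) ≤ 2 ^ (b + 1) * t ^ (b + 1) := by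
        rw [← mul_rpow zero_le_two ht0.le]
        exact rpow_le_rpow (by linarith) (by linarith) (by linarith)
      have h3 : t ^ (-(j - (a + b + 1))) * t ^ (j + 1) = t ^ (a + 1) * t ^ (b + 1) := by
        rw [← rpow_natCast, ← rpow_add ht0, ← rpow_add ht0]
        congr 1; push_cast; ring
      rw [hf, div_le_iff₀ (by positivity), mul_assoc, h3]
      calc _ ≤ t ^ (a + 1) * (2 ^ (b + 1) * t ^ (b + 1)) :=
            mul_le_mul h1 h2 (rpow_nonneg (by linarith) _) (by positivity)
        _ = _ := by ring
  have i21 : IntegrableOn (fun t => (j + 1) * (jacobiWeight a b t / t ^ (j + 2))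
      - (b - a) * (jacobiWeight a b t / t ^ (j + 1))) (Set.Ioi 1) :=
    (i2.const_mul _).sub (i1.const_mul _)
  have key := integral_Ioi_of_hasDerivAt_of_tendsto hcont hderiv (i21.sub (i0.const_mul _)) hlim
  rw [integral_sub i21 (i0.const_mul _),
    integral_sub (i2.const_mul _) (i1.const_mul _), integral_const_mul, integral_const_mul,
    integral_const_mul] at key
  have hf1 : f 1 = 0 := by
    simp [hf, zero_rpow (by linarith : a + 1 ≠ 0)]
  rw [hf1] at key
  unfold negMoment
  linarith

/-! ### Moments of Laplace transforms -/

theorem integrableOn_pow_mul_exp (k : ℕ) {t : ℝ} (ht : 0 < t) :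
    IntegrableOn (fun x : ℝ => x ^ k * exp (-(x * t))) (Set.Ioi 0) := by
  have h := integrableOn_rpow_mul_exp_neg_mul_rpow (p := 1) (s := k) (b := t)
    (by have := k.cast_nonneg (α := ℝ); linarith) one_pos ht
  refine h.congr_fun (fun x _ => ?_) measurableSet_Ioi
  simp only [rpow_one, rpow_natCast]
  ring_nf

theorem integral_pow_mul_exp (k : ℕ) {t : ℝ} (ht : 0 < t) :
    ∫ x in Set.Ioi (0 : ℝ), x ^ k * exp (-(x * t)) = k.factorial / t ^ (k + 1) := by
  have h := integral_rpow_mul_exp_neg_mul_Ioi (a := k + 1) (r := t) (by positivity) ht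
  rw [Gamma_nat_eq_factorial, one_div, inv_rpow ht.le] at h
  simp only [add_sub_cancel_right, rpow_natCast] at h
  rw [show (k + 1 : ℝ) = ((k + 1 : ℕ) : ℝ) by push_cast; ring, rpow_natCast] at h
  simp only [mul_comm _ t]
  rw [h]; ring

/-- Moments on `(0, ∞)` of a Laplace transform, by Fubini. The hypothesis `hi` asks only for
integrability of `h t / t ^ (k + 1)`, as it is applied also to `t * jacobiWeight a b t`, which need
not be integrable. -/
theorem laplace_moment {h : ℝ → ℝ} (hm : Measurable h) (h0 : ∀ t, 1 < t → 0 ≤ h t) (k : ℕ)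
    (hi : IntegrableOn (fun t => h t / t ^ (k + 1)) (Set.Ioi 1)) :
    IntegrableOn (fun x : ℝ => x ^ k * ∫ t in Set.Ioi (1 : ℝ), exp (-(x * t)) * h t)
      (Set.Ioi 0) ∧
    ∫ x in Set.Ioi (0 : ℝ), x ^ k * ∫ t in Set.Ioi (1 : ℝ), exp (-(x * t)) * h t
      = k.factorial * ∫ t in Set.Ioi (1 : ℝ), h t / t ^ (k + 1) := by
  have inner (t : ℝ) (ht : 1 < t) :
      ∫ x in Set.Ioi (0 : ℝ), x ^ k * (exp (-(x * t)) * h t) =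
        k.factorial * (h t / t ^ (k + 1)) := by
    simp only [← mul_assoc]
    rw [integral_mul_const, integral_pow_mul_exp k (by linarith)]
    ring
  have hprod : Integrable (Function.uncurry fun x t : ℝ => x ^ k * (exp (-(x * t)) * h t))
      ((volume.restrict (Set.Ioi 0)).prod (volume.restrict (Set.Ioi 1))) := by
    refine (integrable_prod_iff' ?_).2 ⟨?_, ?_⟩
    · refine Measurable.aestronglyMeasurable ?_
      unfold Function.uncurry
      fun_prop
    · refine (ae_restrict_iff' measurableSet_Ioi).2 (.of_forall fun t ht => ?_)
      have ht : 1 < t := ht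
      simp only [Function.uncurry, ← mul_assoc]
      exact (integrableOn_pow_mul_exp k (by linarith)).mul_const _
    · refine IntegrableOn.congr_fun (hi.const_mul (k.factorial : ℝ)) (fun t ht => ?_)
        measurableSet_Ioi
      have ht : 1 < t := ht
      rw [← inner t ht]
      refine setIntegral_congr_fun measurableSet_Ioi fun x hx => ?_
      have hx : 0 < x := hx
      have := h0 t ht
      simp only [Function.uncurry]
      rw [norm_of_nonneg (by positivity)]
  simp only [← integral_const_mul]
  refine ⟨hprod.integral_prod_left, ?_⟩
  rw [integral_integral_swap hprod]
  exact setIntegral_congr_fun measurableSet_Ioi fun t ht => inner t ht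

/-- The Laplace transform of `jacobiWeight a b` on `(1, ∞)`. With `(a, b) = (p, q)` it is `W₁`; with
`(a, b) = (q, p)` and `x` replaced by `-x` it is `W₂`. -/
noncomputable def laplaceWeight (a b x : ℝ) : ℝ :=
  ∫ t in Set.Ioi (1 : ℝ), exp (-(x * t)) * jacobiWeight a b t

theorem hasDerivAt_laplaceWeight {a b : ℝ} (ha : -1 < a) (hb : b < 0) (hab : a + b < -1)
    {x : ℝ} (hx : 0 < x) :
    HasDerivAt (laplaceWeight a b)
      (-∫ t in Set.Ioi (1 : ℝ), exp (-(x * t)) * (t * jacobiWeight a b t)) x := by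
  have hi := integrableOn_jacobiWeight ha hb hab
  have hm := measurable_jacobiWeight a b
  rw [← integral_neg]
  refine (hasDerivAt_integral_of_dominated_loc_of_deriv_le (s := Set.Ioi (x / 2))
    (F := fun x t => exp (-(x * t)) * jacobiWeight a b t)
    (F' := fun x t => -(exp (-(x * t)) * (t * jacobiWeight a b t)))
    (bound := fun t => 2 / x * jacobiWeight a b t)
    (Ioi_mem_nhds (by linarith)) (.of_forall fun y => ?_) ?_ ?_ ?_ (hi.const_mul _) ?_).2
  · exact Measurable.aestronglyMeasurable (by fun_prop)
  · refine Integrable.mono' hi (Measurable.aestronglyMeasurable (by fun_prop)) ?_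
    refine (ae_restrict_iff' measurableSet_Ioi).2 (.of_forall fun t ht => ?_)
    have ht : 1 < t := ht
    have h := jacobiWeight_pos a b ht
    rw [norm_of_nonneg (by positivity)]
    refine mul_le_of_le_one_left h.le (exp_le_one_iff.2 ?_)
    have : 0 < x * t := by positivity
    linarith
  · exact Measurable.aestronglyMeasurable (by fun_prop)
  · refine (ae_restrict_iff' measurableSet_Ioi).2 (.of_forall fun t ht y hy => ?_)
    have ht : 1 < t := ht
    have hy : x / 2 < y := hy
    have h := jacobiWeight_pos a b ht
    rw [norm_neg, norm_of_nonneg (by positivity), ← mul_assoc]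
    refine mul_le_mul_of_nonneg_right ?_ h.le
    -- By `u ≤ exp u` with `u = y * t`, the exponential absorbs the factor `t`.
    have h1 : x * t / 2 ≤ exp (y * t) := by
      have h2 : x * t / 2 ≤ y * t := by nlinarith
      linarith [add_one_le_exp (y * t)]
    rw [exp_neg, inv_mul_le_iff₀ (exp_pos _), div_eq_mul_inv, mul_comm (2 : ℝ), ← mul_assoc,
      ← div_le_iff₀ two_pos, ← div_eq_mul_inv, le_div_iff₀ hx]
    linarith
  · refine .of_forall fun t y _ => ?_
    have h1 : HasDerivAt (fun y : ℝ => exp (-(y * t))) (exp (-(y * t)) * -(1 * t)) y :=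
      (((hasDerivAt_id y).mul_const t).neg).exp
    refine (h1.mul_const (jacobiWeight a b t)).congr_deriv ?_
    ring

theorem laplaceWeight_moment {a b : ℝ} (ha : -1 < a) (hb : b < 0) (hab : a + b < -1) (k : ℕ) :
    IntegrableOn (fun x : ℝ => x ^ k * laplaceWeight a b x) (Set.Ioi 0) ∧
    ∫ x in Set.Ioi (0 : ℝ), x ^ k * laplaceWeight a b x
      = k.factorial * negMoment a b (k + 1) :=
  laplace_moment (measurable_jacobiWeight a b) (fun _ ht => (jacobiWeight_pos a b ht).le) k
    (integrableOn_jacobiWeight_div ha hb hab _)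

theorem deriv_laplaceWeight_moment {a b : ℝ} (ha : -1 < a) (hb : b < 0) (hab : a + b < -1)
    (k : ℕ) :
    IntegrableOn (fun x : ℝ => x ^ k * (x * deriv (laplaceWeight a b) x)) (Set.Ioi 0) ∧
    ∫ x in Set.Ioi (0 : ℝ), x ^ k * (x * deriv (laplaceWeight a b) x)
      = -((k + 1).factorial * negMoment a b (k + 1)) := by
  have hm := measurable_jacobiWeight a b
  have e : Set.EqOn (fun t => jacobiWeight a b t / t ^ (k + 1))
      (fun t => t * jacobiWeight a b t / t ^ (k + 1 + 1)) (Set.Ioi 1) := by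
    intro t ht
    have ht : 1 < t := ht
    have : t ≠ 0 := by positivity
    simp only
    field_simp
    ring
  have h := laplace_moment (h := fun t => t * jacobiWeight a b t) (by fun_prop)
    (fun t ht => mul_nonneg (by linarith) (jacobiWeight_pos a b ht).le) (k + 1)
    ((integrableOn_jacobiWeight_div ha hb hab (k + 1)).congr_fun e measurableSet_Ioi)
  have e2 : Set.EqOn (fun x : ℝ => x ^ k * (x * deriv (laplaceWeight a b) x))
      (fun x => -(x ^ (k + 1) * ∫ t in Set.Ioi (1 : ℝ), exp (-(x * t)) * (t * jacobiWeight a b t)))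
      (Set.Ioi 0) := by
    intro x hx
    simp only
    rw [(hasDerivAt_laplaceWeight ha hb hab hx).deriv]
    ring
  refine ⟨(h.1.neg).congr_fun e2.symm measurableSet_Ioi, ?_⟩
  rw [setIntegral_congr_fun measurableSet_Ioi e2, integral_neg, h.2, negMoment,
    setIntegral_congr_fun measurableSet_Ioi e]

/-- Moments on the whole line of a function given by `f` on the positive half-line and by `g ∘ (-·)`
on the negative one; its value at `0` plays no role. -/
theorem moment_of_halves {w f g : ℝ → ℝ} {k : ℕ}
    (hf : IntegrableOn (fun x => x ^ k * f x) (Set.Ioi 0))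
    (hg : IntegrableOn (fun x => x ^ k * g x) (Set.Ioi 0))
    (hwf : ∀ x, 0 < x → w x = f x) (hwg : ∀ x, 0 < x → w (-x) = g x) :
    Integrable (fun x => x ^ k * w x) ∧
    ∫ x, x ^ k * w x =
      (∫ x in Set.Ioi 0, x ^ k * f x) + (-1) ^ k * ∫ x in Set.Ioi 0, x ^ k * g x := by
  have ef : Set.EqOn (fun x => x ^ k * f x) (fun x => x ^ k * w x) (Set.Ioi 0) :=
    fun x hx => by simp only [hwf x hx]
  have eg : Set.EqOn (fun x => (-1) ^ k * (x ^ k * g x)) (fun x => (-x) ^ k * w (-x))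
      (Set.Ioi 0) := by
    intro x hx
    simp only [hwg x hx, neg_pow x k]; ring
  have h1 : IntegrableOn (fun x => x ^ k * w x) (Set.Ioi 0) := hf.congr_fun ef measurableSet_Ioi
  have h2 : IntegrableOn (fun x => (-x) ^ k * w (-x)) (Set.Ioi 0) :=
    IntegrableOn.congr_fun (hg.const_mul ((-1) ^ k)) eg measurableSet_Ioi
  have h3 : IntegrableOn (fun x => x ^ k * w x) (Set.Iic 0) := by
    rw [integrableOn_Iic_iff_integrableOn_Iio]
    have := IntegrableOn.comp_neg_Iio (c := (0 : ℝ)) (f := fun x => (-x) ^ k * w (-x))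
      (by simpa using h2)
    simpa using this
  constructor
  · rw [← integrableOn_univ, ← Set.Iic_union_Ioi (a := (0 : ℝ))]
    exact h3.union h1
  · rw [← intervalIntegral.integral_Iic_add_Ioi h3 h1, ← setIntegral_congr_fun measurableSet_Ioi ef]
    have := integral_comp_neg_Ioi (0 : ℝ) (fun x => x ^ k * w x)
    rw [neg_zero] at this
    rw [← this, ← setIntegral_congr_fun measurableSet_Ioi eg, integral_const_mul, add_comm]

/-! ### Duality with the polynomials -/

/-- If `F` solves the differential equation, then `F * dualFactor n` generates `n!` times the `n`-th
dual functional of `P`. -/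
theorem momentFunctional_dualFactor {F : PowerSeries ℝ} {β α γ : ℝ} (hγ : γ = β - α)
    (hF0 : PowerSeries.constantCoeff F = 1)
    (hF : (1 - PowerSeries.X ^ 2) * PowerSeries.derivative ℝ F =
      (PowerSeries.C β + PowerSeries.C α * PowerSeries.X) * F)
    {b g : ℕ → ℝ} (hb : ∀ n, b n = β - (-1) ^ n * n + (1 - (-1) ^ n) / 2)
    (hg : ∀ n, g n = -(-1) ^ n * n + (1 - (-1) ^ n) / 2 * (1 + 2 * α) + γ)
    {P : ℕ → ℝ[X]} (hP0 : P 0 = 1) (hP1 : P 1 = X - C (b 0))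
    (hP2 : P 2 = (X - C (b 1)) * P 1 - C α)
    (hP3 : ∀ n : ℕ, P (n + 3) = (X - C (b (n + 2))) * P (n + 2)
      - C ((n + 2 : ℝ) * (n + 1 + α)) * P (n + 1) - C ((n + 2 : ℝ) * (n + 1) * g n) * P n)
    (n m : ℕ) :
    momentFunctional (F * dualFactor n) (P m) = if n = m then (n.factorial : ℝ) else 0 := by
  have hC (A : PowerSeries ℝ) (c : ℝ) (Q : ℝ[X]) :
      momentFunctional A (C c * Q) = c * momentFunctional A Q := by
    rw [← smul_eq_C_mul, map_smul, smul_eq_mul]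
  refine biorthogonal (L := fun n m => momentFunctional (F * dualFactor n) (P m))
    (L' := fun n m => momentFunctional (F * dualFactor n) (X * P m)) (b := b) (g := g) (α := α)
    ?_ ?_ ?_ ?_ ?_ m n
  · intro n m
    simp only [momentFunctional_X_mul]
    rw [derivative_dualFactor hγ hF n]
    simp only [momentFunctional_add, momentFunctional_C_mul, ← hb, ← hg]
  · intro n
    simp only [hP0, momentFunctional_one, map_mul, hF0, one_mul]
    rcases n with _ | _ | n
    · simp [dualFactor]
    · simp [dualFactor]
    · have h : (n + 1 + 1) / 2 ≠ 0 := by omega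
      simp [dualFactor, zero_pow h]
  · intro n
    have : P 1 = X * P 0 - C (b 0) * P 0 := by rw [hP1, hP0]; ring
    rw [this, map_sub, hC]
  · intro n
    have : P 2 = X * P 1 - C (b 1) * P 1 - C α * P 0 := by rw [hP2, hP0]; ring
    rw [this, map_sub, map_sub, hC, hC]
  · intro n m
    rw [hP3, sub_mul, map_sub, map_sub, map_sub, hC, hC, hC]

theorem integral_eval_mul {w : ℝ → ℝ} {A : PowerSeries ℝ}
    (hw : ∀ k : ℕ, Integrable (fun x => x ^ k * w x) ∧
      ∫ x, x ^ k * w x = k.factorial * PowerSeries.coeff k A) (Q : ℝ[X]) :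
    Integrable (fun x => Q.eval x * w x) ∧ ∫ x, Q.eval x * w x = momentFunctional A Q := by
  induction Q using Polynomial.induction_on' with
  | add p q hp hq =>
    simp only [eval_add, add_mul, map_add]
    exact ⟨hp.1.add hq.1, by rw [integral_add hp.1 hq.1, hp.2, hq.2]⟩
  | monomial n c =>
    simp only [eval_monomial, mul_assoc, momentFunctional_monomial]
    exact ⟨(hw n).1.const_mul c, by rw [integral_const_mul, (hw n).2]; ring⟩

/-! ### Moments of the two weights -/

/-- The `k`-th moment of the weight `w₀` with constants `k₁, k₂`, divided by `k!`. -/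
noncomputable def normalizedMoment (p q k₁ k₂ : ℝ) (k : ℕ) : ℝ :=
  k₁ * negMoment p q (k + 1) + (-1) ^ k * (k₂ * negMoment q p (k + 1))

/-- The differential equation of the generating function of `w₀`. The matching condition `hk` enters
only through the constant coefficient. -/
theorem generating_ode {p q k₁ k₂ : ℝ} (hp₁ : -1 < p) (hp₂ : p < 0) (hq₁ : -1 < q) (hq₂ : q < 0)
    (hpq : p + q < -1) (hk : k₁ * negMoment p q 0 = k₂ * negMoment q p 0) :
    (1 - PowerSeries.X ^ 2) *
        PowerSeries.derivative ℝ (PowerSeries.mk (normalizedMoment p q k₁ k₂)) =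
      (PowerSeries.C (q - p) + PowerSeries.C (-(p + q)) * PowerSeries.X) *
        PowerSeries.mk (normalizedMoment p q k₁ k₂) := by
  have r1 := negMoment_rec hp₁ hq₁ hq₂ hpq
  have r2 := negMoment_rec hq₁ hp₁ hp₂ (by linarith)
  generalize hβ : q - p = β at r1 ⊢
  rw [← neg_sub q p, hβ] at r2
  rw [sub_mul, one_mul, add_mul, pow_two, mul_assoc, mul_assoc]
  ext n
  -- The coefficients of order `0`, `1` and `n + 2` are combinations of `r1` and `r2`.
  rcases n with _ | _ | n
  · simp only [map_sub, map_add, PowerSeries.coeff_zero_X_mul, PowerSeries.coeff_C_mul,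
      PowerSeries.coeff_derivative, PowerSeries.coeff_mk, normalizedMoment]
    have h1 := r1 0
    have h2 := r2 0
    simp only [zero_add, Nat.reduceAdd] at h1 h2 ⊢
    push_cast at h1 h2 ⊢
    linear_combination k₁ * h1 - k₂ * h2 - (p + q + 1) * hk
  · simp only [map_sub, map_add, PowerSeries.coeff_succ_X_mul, PowerSeries.coeff_C_mul,
      PowerSeries.coeff_zero_X_mul, PowerSeries.coeff_derivative, PowerSeries.coeff_mk,
      normalizedMoment]
    have h1 := r1 1
    have h2 := r2 1
    simp only [zero_add, Nat.reduceAdd] at h1 h2 ⊢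
    push_cast at h1 h2 ⊢
    linear_combination k₁ * h1 + k₂ * h2
  · simp only [map_sub, map_add, PowerSeries.coeff_succ_X_mul, PowerSeries.coeff_C_mul,
      PowerSeries.coeff_derivative, PowerSeries.coeff_mk, normalizedMoment]
    have h1 := r1 (n + 2)
    have h2 := r2 (n + 2)
    simp only [add_assoc, Nat.reduceAdd] at h1 h2 ⊢
    push_cast at h1 h2 ⊢
    simp only [pow_add]
    linear_combination k₁ * h1 - (-1) ^ n * k₂ * h2

/-- The differential equation rewrites `(α + β) F z / (1 - z)` as `(1 + z) F' - β F`, which is the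
combination of moments produced by the definition of `w₁`. -/
theorem coeff_dualFactor_one {F : PowerSeries ℝ} {β α : ℝ}
    (hF : (1 - PowerSeries.X ^ 2) * PowerSeries.derivative ℝ F =
      (PowerSeries.C β + PowerSeries.C α * PowerSeries.X) * F) (k : ℕ) :
    (α + β) * PowerSeries.coeff k (F * dualFactor 1) =
      (k + 1) * PowerSeries.coeff (k + 1) F + k * PowerSeries.coeff k F
        - β * PowerSeries.coeff k F := by
  have h : (PowerSeries.C (α + β)) * (F * dualFactor 1) =
      PowerSeries.derivative ℝ F + PowerSeries.X * PowerSeries.derivative ℝ F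
        - PowerSeries.C β * F := by
    have ha := geom_neg_mul
    have : dualFactor 1 = PowerSeries.X * (1 - PowerSeries.X)⁻¹ := by simp [dualFactor]
    rw [this, map_add]
    generalize (1 - PowerSeries.X : PowerSeries ℝ)⁻¹ = a at *
    linear_combination (PowerSeries.derivative ℝ F * (1 + PowerSeries.X)
      - PowerSeries.C β * F) * ha - a * hF
  have h' := congrArg (PowerSeries.coeff k) h
  rw [PowerSeries.coeff_C_mul] at h'
  rw [h']
  rcases k with _ | k
  · simp only [map_sub, map_add, PowerSeries.coeff_zero_X_mul, PowerSeries.coeff_C_mul,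
      PowerSeries.coeff_derivative]
    push_cast; ring
  · simp only [map_sub, map_add, PowerSeries.coeff_succ_X_mul, PowerSeries.coeff_C_mul,
      PowerSeries.coeff_derivative]
    push_cast; ring

theorem W₁_eq (p q x : ℝ) :
    ∫ t in Set.Iio (-1 : ℝ), Real.exp (x * t) * (-1 - t) ^ p * (1 - t) ^ q =
      laplaceWeight p q x := by
  rw [← integral_Iic_eq_integral_Iio, ← integral_comp_neg_Ioi, laplaceWeight]
  refine setIntegral_congr_fun measurableSet_Ioi fun t _ => ?_
  simp only [jacobiWeight]
  rw [mul_neg, show -1 - -t = t - 1 by ring, show 1 - -t = t + 1 by ring, mul_assoc]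

theorem W₂_eq (p q x : ℝ) :
    ∫ t in Set.Ioi (1 : ℝ), Real.exp (x * t) * (t + 1) ^ p * (t - 1) ^ q =
      laplaceWeight q p (-x) := by
  rw [laplaceWeight]
  refine setIntegral_congr_fun measurableSet_Ioi fun t _ => ?_
  simp only [jacobiWeight]
  rw [neg_mul, neg_neg]; ring

theorem weight_moment {p q k₁ k₂ : ℝ} (hp₁ : -1 < p) (hp₂ : p < 0) (hq₁ : -1 < q) (hq₂ : q < 0)
    (hpq : p + q < -1) {w₀ : ℝ → ℝ}
    (hw : ∀ x, w₀ x = if 0 ≤ x then k₁ * laplaceWeight p q x else k₂ * laplaceWeight q p (-x))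
    (k : ℕ) :
    Integrable (fun x => x ^ k * w₀ x) ∧
    ∫ x, x ^ k * w₀ x = k.factorial * normalizedMoment p q k₁ k₂ k := by
  have h1 := laplaceWeight_moment hp₁ hq₂ hpq k
  have h2 := laplaceWeight_moment hq₁ hp₂ (by linarith) k
  have h := moment_of_halves (w := w₀) (k := k) (f := fun x => k₁ * laplaceWeight p q x)
    (g := fun x => k₂ * laplaceWeight q p x)
    (IntegrableOn.congr_fun (h1.1.const_mul k₁) (fun x _ => by ring) measurableSet_Ioi)
    (IntegrableOn.congr_fun (h2.1.const_mul k₂) (fun x _ => by ring) measurableSet_Ioi)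
    (fun x hx => by rw [hw, if_pos hx.le])
    (fun x hx => by rw [hw, if_neg (by linarith), neg_neg])
  refine ⟨h.1, h.2.trans ?_⟩
  simp only [mul_left_comm _ k₁, mul_left_comm _ k₂]
  rw [integral_const_mul, integral_const_mul, h1.2, h2.2, normalizedMoment]
  ring

/-- The moments of `x w₀'` are those obtained from `w₀` by a formal integration by parts; they are
computed directly from the derivative of the Laplace transform on each half-line. -/
theorem weight_deriv_moment {p q k₁ k₂ : ℝ} (hp₁ : -1 < p) (hp₂ : p < 0) (hq₁ : -1 < q) (hq₂ : q < 0)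
    (hpq : p + q < -1) {w₀ : ℝ → ℝ}
    (hw : ∀ x, w₀ x = if 0 ≤ x then k₁ * laplaceWeight p q x else k₂ * laplaceWeight q p (-x))
    (k : ℕ) :
    Integrable (fun x => x ^ k * (x * deriv w₀ x)) ∧
    ∫ x, x ^ k * (x * deriv w₀ x) = -((k + 1).factorial * normalizedMoment p q k₁ k₂ k) := by
  have h1 := deriv_laplaceWeight_moment hp₁ hq₂ hpq k
  have h2 := deriv_laplaceWeight_moment hq₁ hp₂ (by linarith) k
  have h := moment_of_halves (w := fun x => x * deriv w₀ x) (k := k)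
    (f := fun x => k₁ * (x * deriv (laplaceWeight p q) x))
    (g := fun x => k₂ * (x * deriv (laplaceWeight q p) x))
    (IntegrableOn.congr_fun (h1.1.const_mul k₁) (fun x _ => by ring) measurableSet_Ioi)
    (IntegrableOn.congr_fun (h2.1.const_mul k₂) (fun x _ => by ring) measurableSet_Ioi)
    (fun x hx => by
      have e : w₀ =ᶠ[nhds x] fun x => k₁ * laplaceWeight p q x := by
        filter_upwards [Ioi_mem_nhds hx] with y hy
        rw [hw, if_pos (le_of_lt hy)]
      rw [e.deriv_eq, deriv_const_mul_field]; ring)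
    (fun x hx => by
      have e : w₀ =ᶠ[nhds (-x)] fun x => k₂ * laplaceWeight q p (-x) := by
        filter_upwards [Iio_mem_nhds (show -x < 0 by linarith)] with y hy
        rw [hw, if_neg (not_le.2 hy)]
      rw [e.deriv_eq, deriv_const_mul_field, deriv_comp_neg, neg_neg]; ring)
  refine ⟨h.1, h.2.trans ?_⟩
  simp only [mul_left_comm _ k₁, mul_left_comm _ k₂]
  rw [integral_const_mul, integral_const_mul]
  simp only [mul_left_comm _ k₂, h1.2, h2.2, normalizedMoment]
  ring

/-- The weight `w₁` has generating function `F * z / (1 - z)`. -/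
theorem second_weight_moment {p q k₁ k₂ : ℝ} (hp₁ : -1 < p) (hp₂ : p < 0) (hq₁ : -1 < q) (hq₂ : q < 0)
    (hpq : p + q < -1) {w₀ : ℝ → ℝ}
    (hw : ∀ x, w₀ x = if 0 ≤ x then k₁ * laplaceWeight p q x else k₂ * laplaceWeight q p (-x))
    (hk : k₁ * negMoment p q 0 = k₂ * negMoment q p 0) {w₁ : ℝ → ℝ}
    (hw₁ : ∀ x, x ≠ 0 → w₁ x =
      (-x * deriv w₀ x + (x - (q - p) - 1) * w₀ x) / (-(p + q) + (q - p))) (k : ℕ) :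
    Integrable (fun x => x ^ k * w₁ x) ∧
    ∫ x, x ^ k * w₁ x = k.factorial * PowerSeries.coeff k
      (PowerSeries.mk (normalizedMoment p q k₁ k₂) * dualFactor 1) := by
  obtain ⟨i0, e0⟩ := weight_moment hp₁ hp₂ hq₁ hq₂ hpq hw k
  obtain ⟨i1, e1⟩ := weight_moment hp₁ hp₂ hq₁ hq₂ hpq hw (k + 1)
  obtain ⟨i2, e2⟩ := weight_deriv_moment hp₁ hp₂ hq₁ hq₂ hpq hw k
  have hne : -(p + q) + (q - p) ≠ 0 := by linarith
  have hae : (fun x => (-(p + q) + (q - p))⁻¹ * (x ^ (k + 1) * w₀ x - (q - p + 1) * (x ^ k * w₀ x)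
      - x ^ k * (x * deriv w₀ x))) =ᵐ[volume] fun x => x ^ k * w₁ x := by
    filter_upwards [Measure.ae_ne volume (0 : ℝ)] with x hx
    rw [hw₁ x hx, div_eq_inv_mul]
    ring
  have i10 : Integrable fun x => x ^ (k + 1) * w₀ x - (q - p + 1) * (x ^ k * w₀ x) :=
    i1.sub (i0.const_mul _)
  refine ⟨((i10.sub i2).const_mul _).congr hae, ?_⟩
  rw [← integral_congr_ae hae, integral_const_mul, integral_sub i10 i2,
    integral_sub i1 (i0.const_mul _), integral_const_mul, e0, e1, e2,
    inv_mul_eq_iff_eq_mul₀ hne, mul_left_comm (-(p + q) + (q - p)),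
    coeff_dualFactor_one (generating_ode hp₁ hp₂ hq₁ hq₂ hpq hk)]
  simp only [PowerSeries.coeff_mk, Nat.factorial_succ]
  push_cast; ring

end CaseIII
open CaseIII

/-- Case III of the paper: for `−1 < p < 0`, `−1 < q < 0`,
`p + q < −1`, the first two dual functionals of the 2-orthogonal family with parameters
`s = 0`, `r = −1`, `α₁ = −(p+q)`, `β₀ = q − p`, `γ = β₀ − α₁` admit integral
representations with weights `w₀`, `w₁` built from the Laplace integrals `W₁`, `W₂`
and supported on the whole real line. -/
theorem caseIII_weights (p q : ℝ) (hp₁ : -1 < p) (hp₂ : p < 0) (hq₁ : -1 < q) (hq₂ : q < 0)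
    (hpq : p + q < -1)
    (r s β₀ α₁ γ : ℝ) (hs : s = 0) (hr : r = -1)
    (hα₁ : α₁ = -(p + q)) (hβ₀ : β₀ = q - p) (hγe : γ = β₀ - α₁)
    (βn αn γn : ℕ → ℝ)
    (hβn : ∀ n : ℕ, βn n = ((-1 : ℝ) ^ n * r - 2 * s) * n - (1 - (-1 : ℝ) ^ n) * r / 2 + β₀)
    (hαn : ∀ n : ℕ, αn (n + 1) =
      ((n : ℝ) + 1) * ((r ^ 2 + s ^ 2) * n + (1 - (-1 : ℝ) ^ n) * r * s + α₁))
    (hγn : ∀ n : ℕ, γn (n + 1) = ((n : ℝ) + 2) * ((n : ℝ) + 1) *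
      ((-1 : ℝ) ^ n * (r - (-1 : ℝ) ^ n * s) ^ 2 * r * n
        - (1 - (-1 : ℝ) ^ n) * ((r + s) ^ 2 + 2 * α₁) * r / 2 + γ))
    (P : ℕ → Polynomial ℝ)
    (hP0 : P 0 = 1) (hP1 : P 1 = X - C β₀)
    (hP2 : P 2 = (X - C (βn 1)) * P 1 - C α₁)
    (hPrec : ∀ n : ℕ, P (n + 3) =
      (X - C (βn (n + 2))) * P (n + 2) - C (αn (n + 2)) * P (n + 1) - C (γn (n + 1)) * P n)
    (W₁ W₂ : ℝ → ℝ)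
    (hW₁ : ∀ x, W₁ x = ∫ t in Set.Iio (-1 : ℝ),
      Real.exp (x * t) * (-1 - t) ^ p * (1 - t) ^ q)
    (hW₂ : ∀ x, W₂ x = ∫ t in Set.Ioi (1 : ℝ),
      Real.exp (x * t) * (t + 1) ^ p * (t - 1) ^ q) :
    ∃ k₁ k₂ : ℝ, ∀ w₀ w₁ : ℝ → ℝ,
      (∀ x, w₀ x = if 0 ≤ x then k₁ * W₁ x else k₂ * W₂ x) →
      (∀ x, x ≠ 0 →
        w₁ x = (-x * deriv w₀ x + (x - β₀ - 1) * w₀ x) / (α₁ + β₀)) →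
      ∀ n : ℕ,
        Integrable (fun x => (P n).eval x * w₀ x) ∧
        Integrable (fun x => (P n).eval x * w₁ x) ∧
        (∫ x, (P n).eval x * w₀ x) = (if n = 0 then 1 else 0) ∧
        (∫ x, (P n).eval x * w₁ x) = (if n = 1 then 1 else 0) := by
  have hA := negMoment_pos hp₁ hq₂ hpq
  have hB := negMoment_pos hq₁ hp₂ (by linarith : q + p < -1)
  set N := negMoment q p 0 * negMoment p q 1 + negMoment p q 0 * negMoment q p 1 with hN
  have hNpos : 0 < N := add_pos (mul_pos (hB 0) (hA 1)) (mul_pos (hA 0) (hB 1))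
  -- These constants satisfy `k₁ N_{p,q}(0) = k₂ N_{q,p}(0)`, and `N` normalizes the mass of `w₀` to 1.
  refine ⟨negMoment q p 0 / N, negMoment p q 0 / N, fun w₀ w₁ hw₀ hw₁ n => ?_⟩
  simp only [hW₁, hW₂, W₁_eq, W₂_eq] at hw₀
  subst hα₁ hβ₀
  set k₁ := negMoment q p 0 / N with hk₁
  set k₂ := negMoment p q 0 / N with hk₂
  have hk : k₁ * negMoment p q 0 = k₂ * negMoment q p 0 := by rw [hk₁, hk₂]; ring
  have hode := generating_ode hp₁ hp₂ hq₁ hq₂ hpq hk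
  have hF0 : PowerSeries.constantCoeff (PowerSeries.mk (normalizedMoment p q k₁ k₂)) = 1 := by
    rw [← PowerSeries.coeff_zero_eq_constantCoeff_apply, PowerSeries.coeff_mk, normalizedMoment,
      hk₁, hk₂, pow_zero, zero_add]
    field_simp
    rw [hN]
  have hdual := momentFunctional_dualFactor hγe hF0 hode (b := βn) (P := P)
    (fun n => by rw [hβn, hs, hr]; ring) (fun n => rfl) hP0
    (by rw [hP1, hβn, hs, hr]; simp) hP2
    (fun n => by
      have h := hPrec n
      rw [hαn (n + 1), hγn n, hs, hr] at h
      rw [h]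
      congr 3
      · congr 1; push_cast; ring
      · congr 1; ring)
  have m0 := integral_eval_mul (A := PowerSeries.mk (normalizedMoment p q k₁ k₂) * dualFactor 0)
    (fun k => by
      have : dualFactor 0 = 1 := by simp [dualFactor]
      rw [this, mul_one, PowerSeries.coeff_mk]
      exact weight_moment hp₁ hp₂ hq₁ hq₂ hpq hw₀ k) (P n)
  have m1 := integral_eval_mul
    (second_weight_moment hp₁ hp₂ hq₁ hq₂ hpq hw₀ hk hw₁) (P n)
  refine ⟨m0.1, m1.1, ?_, ?_⟩
  · rw [m0.2, hdual]; simp [eq_comm]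
  · rw [m1.2, hdual]; simp [eq_comm]
end

section
/- Let {P_n} be the monic 2-orthogonal family with parameters s = 0, r = −1, β₀ = 0, α₁ = 2, γ = −2 (the limiting case p = q = −1 of Case III). Define w₀(x) = ½e^{−|x|} on ℝ, and w₁(x) = −¼(1 − 2x)e^{−x} for x ≥ 0, w₁(x) = −¼e^{x} for x < 0. Then for every n ≥ 0, ∫_{−∞}^{+∞} P_n(x) w₀(x) dx = δ_{n,0} and ∫_{−∞}^{+∞} P_n(x) w₁(x) dx = δ_{n,1}; that is, the first two dual functionals u₀, u₁ of {P_n} are represented by the weights w₀, w₁ on the real line. -/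
/-!
Put `p n = P n / n!`. The recurrence then splits by parity, and induction gives the two structure
relations `p n = p (n+1)' - (-1)^n p n'` and an expansion of `x p n'`; the first one yields
`p n = (p (n+2) + p n)''`, while the constant terms satisfy `p (n+2) (0) + p n (0) = 0`.

Integration by parts against `e^{-x}` on the half-line gives, for every polynomial `f`,
`⟨u₀, f''⟩ = ⟨u₀, f⟩ - f(0)` (the equation `w₀'' = w₀` off the origin) and
`⟨u₁, f⟩ = ½ ⟨u₀, x f + x f'⟩` (the definition of `w₁` from `w₀`). Applying the first identity to
`p (n+2) + p n` gives `⟨u₀, p (n+2)⟩ = 0` at once. For `u₁`, the recurrence gives `⟨u₀, x p n⟩`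
and the expansion of `x p n'` gives `⟨u₀, x p n'⟩`.
-/

open Polynomial MeasureTheory Real

namespace CaseIII

open Set Filter Topology

/-! ### Laplace-type integrals of polynomials -/

lemma integrableOn_poly (f : ℝ[X]) :
    IntegrableOn (fun x => f.eval x * Real.exp (-x)) (Ioi 0) := by
  induction f using Polynomial.induction_on' with
  | add p q hp hq =>
    simp only [eval_add, add_mul]
    exact hp.add hq
  | monomial n a =>
    have h := (Real.GammaIntegral_convergent (s := (n : ℝ) + 1) (by positivity)).const_mul a
    refine IntegrableOn.congr_fun h (fun x _ => ?_) measurableSet_Ioi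
    simp only [eval_monomial, add_sub_cancel_right, Real.rpow_natCast]
    ring

/-- The functional `f ↦ ∫₀^∞ f(x) e^{-x} dx` on polynomials. -/
noncomputable def halfInt : ℝ[X] →ₗ[ℝ] ℝ where
  toFun f := ∫ x in Ioi (0 : ℝ), f.eval x * Real.exp (-x)
  map_add' f g := by
    simp only [eval_add, add_mul]
    exact integral_add (integrableOn_poly f) (integrableOn_poly g)
  map_smul' c f := by
    simp only [eval_smul, smul_eq_mul, mul_assoc, RingHom.id_apply]
    exact integral_const_mul _ _

/-- Integration by parts against `e^{-x}`. -/
lemma halfInt_derivative (f : ℝ[X]) :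
    halfInt (derivative f) = halfInt f - f.eval 0 := by
  have hd : ∀ x ∈ Ici (0 : ℝ), HasDerivAt (fun x => f.eval x * Real.exp (-x))
      ((derivative f - f).eval x * Real.exp (-x)) x := by
    intro x _
    have h := (f.hasDerivAt x).mul ((hasDerivAt_neg x).exp)
    refine h.congr_deriv ?_
    simp only [eval_sub]
    ring
  have hl : Tendsto (fun x => f.eval x * Real.exp (-x)) atTop (𝓝 0) := by
    have := Polynomial.tendsto_div_exp_atTop f
    simpa only [Real.exp_neg, div_eq_mul_inv] using this
  have h := integral_Ioi_of_hasDerivAt_of_tendsto' hd (integrableOn_poly _) hl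
  have h' : halfInt (derivative f - f) = 0 - f.eval 0 * Real.exp (-0) := h
  rw [map_sub] at h'
  simp at h'
  linarith

/-- An integral over `ℝ` whose integrand is a polynomial times `e^{-|x|}` on each half-line. -/
lemma integral_two_sided (g : ℝ → ℝ) (a b : ℝ[X])
    (ha : ∀ x, 0 < x → g x = a.eval x * Real.exp (-x))
    (hb : ∀ x, 0 < x → g (-x) = b.eval x * Real.exp (-x)) :
    Integrable g ∧ ∫ x, g x = halfInt a + halfInt b := by
  have h1 : IntegrableOn g (Ioi 0) :=
    (integrableOn_poly a).congr_fun (fun x hx => (ha x hx).symm) measurableSet_Ioi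
  have h2' : IntegrableOn (fun x => g (-x)) (Ioi 0) :=
    (integrableOn_poly b).congr_fun (fun x hx => (hb x hx).symm) measurableSet_Ioi
  have h2 : IntegrableOn g (Iic 0) := by
    rw [integrableOn_Iic_iff_integrableOn_Iio]
    have h := (Measure.measurePreserving_neg (volume : Measure ℝ)).integrableOn_comp_preimage
      (Homeomorph.neg ℝ).measurableEmbedding (f := g) (s := Iio 0)
    refine h.1 ?_
    simpa [Function.comp_def] using h2'
  refine ⟨?_, ?_⟩
  · rw [← integrableOn_univ, ← Iic_union_Ioi (a := (0 : ℝ))]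
    exact h2.union h1
  · rw [← intervalIntegral.integral_Iic_add_Ioi h2 h1, add_comm]
    congr 1
    · exact setIntegral_congr_fun measurableSet_Ioi (fun x hx => ha x hx)
    · have h := integral_comp_neg_Ioi (0 : ℝ) g
      rw [neg_zero] at h
      rw [← h]
      exact setIntegral_congr_fun measurableSet_Ioi (fun x hx => hb x hx)

/-- The functional `f ↦ ∫ f(x) ½ e^{-|x|} dx`, written through the two half-lines. -/
noncomputable def u0 : ℝ[X] →ₗ[ℝ] ℝ where
  toFun f := (1 / 2) * (halfInt f + halfInt (f.comp (-X)))
  map_add' f g := by simp only [add_comp, map_add]; ring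
  map_smul' c f := by simp only [smul_comp, map_smul, smul_eq_mul, RingHom.id_apply]; ring

lemma u0_apply (f : ℝ[X]) : u0 f = (1 / 2) * (halfInt f + halfInt (f.comp (-X))) := rfl

/-- The functional `f ↦ ½ ⟨u₀, x f + x f'⟩`, the weak form of `2 w₁ = -x w₀' + (x - 1) w₀`;
`integral_w1` identifies it with integration against `w₁`. -/
noncomputable def u1 (f : ℝ[X]) : ℝ := (1 / 2) * u0 (X * f + X * derivative f)

/-- The weight equation `w₀'' = w₀ - δ₀` in weak form. -/
lemma u0_derivative2 (f : ℝ[X]) : u0 (derivative (derivative f)) = u0 f - f.eval 0 := by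
  have h1 := halfInt_derivative (derivative f)
  have h2 := halfInt_derivative f
  have h3 := halfInt_derivative (f.comp (-X))
  have h4 := halfInt_derivative ((derivative f).comp (-X))
  simp only [derivative_comp, derivative_X, eval_comp, eval_neg, eval_X, neg_zero,
    neg_mul, one_mul, map_neg] at h3 h4
  rw [u0_apply, u0_apply]
  linarith

lemma integral_w0 (w : ℝ → ℝ) (hw : ∀ x, w x = (1 / 2) * Real.exp (-|x|)) (f : ℝ[X]) :
    Integrable (fun x => f.eval x * w x) ∧ ∫ x, f.eval x * w x = u0 f := by
  have h := integral_two_sided (fun x => f.eval x * w x) ((1 / 2 : ℝ) • f)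
    ((1 / 2 : ℝ) • f.comp (-X))
    (fun x hx => by
      simp only [hw, abs_of_pos hx, eval_smul, smul_eq_mul]
      ring)
    (fun x hx => by
      simp only [hw, abs_neg, abs_of_pos hx, eval_smul, smul_eq_mul, eval_comp, eval_neg, eval_X]
      ring)
  refine ⟨h.1, h.2.trans ?_⟩
  rw [u0_apply, map_smul, map_smul, smul_eq_mul, smul_eq_mul]
  ring

lemma integral_w1 (w : ℝ → ℝ)
    (hw : ∀ x, w x = if 0 ≤ x then -(1 / 4) * (1 - 2 * x) * Real.exp (-x)
      else -(1 / 4) * Real.exp x) (f : ℝ[X]) :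
    Integrable (fun x => f.eval x * w x) ∧ ∫ x, f.eval x * w x = u1 f := by
  have h := integral_two_sided (fun x => f.eval x * w x) ((-(1 / 4) : ℝ) • (f - (2 : ℝ) • (X * f)))
    ((-(1 / 4) : ℝ) • f.comp (-X))
    (fun x hx => by
      simp only [hw, if_pos hx.le, eval_smul, smul_eq_mul, eval_sub, eval_mul, eval_X]
      ring)
    (fun x hx => by
      simp only [hw, if_neg (not_le.2 (neg_lt_zero.2 hx)), eval_smul, smul_eq_mul, eval_comp,
        eval_neg, eval_X]
      ring)
  refine ⟨h.1, h.2.trans ?_⟩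
  have h1 := halfInt_derivative (X * f)
  have h2 := halfInt_derivative (X * f.comp (-X))
  simp only [derivative_mul, derivative_X, derivative_comp, eval_mul, eval_X,
    zero_mul, one_mul, neg_mul, mul_neg, map_add, map_neg] at h1 h2
  simp only [u1, u0_apply, map_add, map_smul, map_sub, map_neg, smul_eq_mul, mul_comp,
    X_comp, neg_mul]
  linarith

/-! ### Structure relations for the polynomials -/

section Structure

variable (e o : ℕ → ℝ[X])

/-- `e k = p (2k)` and `o k = p (2k+1)` are the two parity classes of `p n = P n / n!`, and these are
the parity-split recurrences of the family. -/
structure IsFamily : Prop where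
  e0 : e 0 = 1
  o0 : o 0 = X
  e1 : 2 * e 1 = X ^ 2 - 2 * X - 2
  ro : ∀ k : ℕ, (2 * (k : ℝ[X]) + 3) * (o (k + 1) + o k)
    = X * e (k + 1) + (2 * (k : ℝ[X]) + 2) * (e (k + 1) + e k)
  re : ∀ k : ℕ, (2 * (k : ℝ[X]) + 4) * (e (k + 2) + o (k + 1) + e (k + 1) + o k) = X * o (k + 1)

variable {e o}

/-- The relation `p n = p (n+1)' - (-1)^n p n'`, together with the expansion of `x p n'`. -/
lemma IsFamily.rel (h : IsFamily e o) (k : ℕ) :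
    derivative (o k) = e k + derivative (e k) ∧
    derivative (e (k + 1)) = o k - derivative (o k) ∧
    X * derivative (e (k + 1)) = (2 * (k : ℝ[X]) + 2) * (e (k + 1) + e k) + o k ∧
    derivative (o (k + 1)) = e (k + 1) + derivative (e (k + 1)) ∧
    X * derivative (o (k + 1)) = (2 * (k : ℝ[X]) + 3) * o (k + 1) + (2 * (k : ℝ[X]) + 4) * o k := by
  -- A step common to the base case and the induction: the relations for `o (k+1)` follow from
  -- those for `e (k+1)`.
  have stepO : ∀ k : ℕ, derivative (o k) = e k + derivative (e k) →
      derivative (e (k + 1)) = o k - derivative (o k) →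
      X * derivative (e (k + 1)) = (2 * (k : ℝ[X]) + 2) * (e (k + 1) + e k) + o k →
      derivative (o (k + 1)) = e (k + 1) + derivative (e (k + 1)) ∧
      X * derivative (o (k + 1)) = (2 * (k : ℝ[X]) + 3) * o (k + 1) + (2 * (k : ℝ[X]) + 4) * o k := by
    intro k h1 h2 h3
    have hr := h.ro k
    have hd := congrArg derivative hr
    simp only [derivative_mul, derivative_add, derivative_X, derivative_natCast, derivative_ofNat,
      mul_zero, zero_mul, add_zero, zero_add, one_mul] at hd
    have hne : (2 * k + 3 : ℝ[X]) ≠ 0 := by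
      exact_mod_cast (Nat.cast_ne_zero (R := ℝ[X])).2 (show 2 * k + 3 ≠ 0 by omega)
    have h4 : derivative (o (k + 1)) = e (k + 1) + derivative (e (k + 1)) := by
      apply mul_left_cancel₀ hne
      linear_combination hd + h3 - (2 * (k : ℝ[X]) + 2) * h1 - h2
    refine ⟨h4, ?_⟩
    rw [h4]
    linear_combination h3 - hr
  induction k with
  | zero =>
    have e1 := h.e1
    rw [pow_two] at e1
    have hd := congrArg derivative e1
    simp only [derivative_mul, derivative_sub, derivative_X, derivative_ofNat,
      zero_mul, zero_add, mul_one, one_mul, sub_zero] at hd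
    have h2 : (2 : ℝ[X]) ≠ 0 := two_ne_zero
    have a1 : derivative (o 0) = e 0 + derivative (e 0) := by simp [h.e0, h.o0]
    have a2 : derivative (e 1) = o 0 - derivative (o 0) := by
      apply mul_left_cancel₀ h2
      rw [hd, h.o0]
      simp
      ring
    have a3 : X * derivative (e (0 + 1)) = (2 * ((0 : ℕ) : ℝ[X]) + 2) * (e (0 + 1) + e 0) + o 0 := by
      rw [zero_add, a2, h.o0, h.e0]
      simp
      linear_combination -e1
    exact ⟨a1, a2, a3, stepO 0 a1 a2 a3⟩
  | succ k ih =>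
    obtain ⟨h1, h2, h3, h4, h5⟩ := ih
    have hr := h.re k
    have hd := congrArg derivative hr
    simp only [derivative_mul, derivative_add, derivative_X, derivative_natCast, derivative_ofNat,
      mul_zero, zero_mul, add_zero, zero_add, one_mul] at hd
    have hne : (2 * k + 4 : ℝ[X]) ≠ 0 := by
      exact_mod_cast (Nat.cast_ne_zero (R := ℝ[X])).2 (show 2 * k + 4 ≠ 0 by omega)
    have a2 : derivative (e (k + 1 + 1)) = o (k + 1) - derivative (o (k + 1)) := by
      apply mul_left_cancel₀ hne
      linear_combination hd + h5 - (2 * (k : ℝ[X]) + 4) * h2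
    have a3 : X * derivative (e (k + 1 + 1)) =
        (2 * ((k + 1 : ℕ) : ℝ[X]) + 2) * (e (k + 1 + 1) + e (k + 1)) + o (k + 1) := by
      rw [a2]
      push_cast
      linear_combination -hr - h5
    exact ⟨h4, a2, a3, stepO (k + 1) h4 a2 a3⟩

lemma IsFamily.eval_zero (h : IsFamily e o) (k : ℕ) :
    (e (k + 1)).eval 0 + (e k).eval 0 = 0 ∧ (o k).eval 0 = 0 := by
  induction k with
  | zero =>
    have e1 := congrArg (eval 0) h.e1
    simp at e1
    simp [h.e0, h.o0]
    linarith
  | succ k ih =>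
    have h1 := congrArg (eval 0) (h.ro k)
    have h2 := congrArg (eval 0) (h.re k)
    simp [ih.2] at h1 h2
    have a : (2 * k + 3 : ℝ) ≠ 0 := by positivity
    have b : (2 * k + 4 : ℝ) ≠ 0 := by positivity
    have c : (o (k + 1)).eval 0 = 0 := by
      apply mul_left_cancel₀ a
      linear_combination h1 + (2 * k + 2) * ih.1
    refine ⟨?_, c⟩
    rcases h2 with h2 | h2
    · exact absurd h2 b
    · linarith

lemma u0_one : u0 1 = 1 := by
  have := u0_derivative2 1
  simp at this
  linarith

lemma u0_X : u0 X = 0 := by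
  simp [u0_apply]

/-- `u₀` annihilates every `p n` with `n ≥ 1`, since `p n = (p (n+2) + p n)''`. -/
lemma IsFamily.u0_eq (h : IsFamily e o) : (∀ k, u0 (e (k + 1)) = 0) ∧ ∀ k, u0 (o k) = 0 := by
  refine ⟨fun k => ?_, fun k => ?_⟩
  · obtain ⟨h1, h2, -⟩ := h.rel k
    have he : derivative (derivative (e (k + 1) + e k)) = e k := by
      have hd2 := congrArg derivative h2
      have hd1 := congrArg derivative h1
      simp only [derivative_add, derivative_sub] at hd1 hd2 ⊢
      linear_combination hd2 + h1 - hd1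
    have A := u0_derivative2 (e (k + 1) + e k)
    rw [he, map_add, eval_add, (h.eval_zero k).1] at A
    linarith
  · cases k with
    | zero => rw [h.o0, u0_X]
    | succ k =>
      obtain ⟨-, h2, -, h4, -⟩ := h.rel k
      have ho : derivative (derivative (o (k + 1) + o k)) = o k := by
        have hd2 := congrArg derivative h2
        have hd4 := congrArg derivative h4
        simp only [derivative_add, derivative_sub] at hd4 hd2 ⊢
        linear_combination hd4 + hd2 + h2
      have B := u0_derivative2 (o (k + 1) + o k)
      rw [ho, map_add, eval_add, (h.eval_zero k).2, (h.eval_zero (k + 1)).2] at B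
      linarith

lemma u0_natCast_mul (n : ℕ) (f : ℝ[X]) : u0 ((n : ℝ[X]) * f) = n * u0 f := by
  rw [← nsmul_eq_mul, map_nsmul, nsmul_eq_mul]

/-- `u₁ (p 1) = 1`, and `u₁` vanishes on every `p n` with `n ≠ 1`: there `x p n + x p n'` is a combination of the
`p m` with `m ≥ 1`. -/
lemma IsFamily.u1_eq (h : IsFamily e o) :
    (∀ k, u1 (e k) = 0) ∧ u1 (o 0) = 1 ∧ ∀ k, u1 (o (k + 1)) = 0 := by
  obtain ⟨he, ho⟩ := h.u0_eq
  refine ⟨fun k => ?_, ?_, fun k => ?_⟩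
  · cases k with
    | zero => simp [u1, h.e0, u0_X]
    | succ k =>
      have hs : X * e (k + 1) + X * derivative (e (k + 1))
          = ((2 * k + 3 : ℕ) : ℝ[X]) * (o (k + 1) + o k) + o k := by
        push_cast
        linear_combination (h.rel k).2.2.1 - h.ro k
      rw [u1, hs, map_add, u0_natCast_mul, map_add, ho, ho]
      ring
  · have hs : X * o 0 + X * derivative (o 0)
        = ((2 : ℕ) : ℝ[X]) * (e 1 + 1) + ((3 : ℕ) : ℝ[X]) * X := by
      rw [h.o0, derivative_X]
      push_cast
      linear_combination -h.e1
    rw [u1, hs, map_add, u0_natCast_mul, u0_natCast_mul, map_add, he, u0_one, u0_X]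
    norm_num
  · have hs : X * o (k + 1) + X * derivative (o (k + 1))
        = ((2 * k + 4 : ℕ) : ℝ[X]) * (e (k + 2) + o (k + 1) + e (k + 1) + o k)
          + (((2 * k + 3 : ℕ) : ℝ[X]) * o (k + 1) + ((2 * k + 4 : ℕ) : ℝ[X]) * o k) := by
      push_cast
      linear_combination (h.rel k).2.2.2.2 - h.re k
    rw [u1, hs]
    simp only [map_add, u0_natCast_mul, he, ho]
    ring

end Structure

lemma u1_smul (c : ℝ) (f : ℝ[X]) : u1 (c • f) = c * u1 f := by
  simp only [u1, mul_smul_comm, ← smul_add, map_smul, smul_eq_mul]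
  ring

lemma factorial_mul_smul (n : ℕ) (f : ℝ[X]) :
    ((n.factorial : ℕ) : ℝ[X]) * ((n.factorial : ℝ)⁻¹ • f) = f := by
  have h : (n.factorial : ℝ) ≠ 0 := by exact_mod_cast n.factorial_ne_zero
  rw [← map_natCast (C : ℝ →+* ℝ[X]), ← smul_eq_C_mul, smul_smul, mul_inv_cancel₀ h, one_smul]

/-- Normalising the family by `n!` turns its recurrence into the parity-split form. -/
lemma isFamily_of_rec (P : ℕ → ℝ[X]) (hP0 : P 0 = 1) (hP1 : P 1 = X)
    (hP2 : P 2 = (X - 2) * X - 2)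
    (hPe : ∀ k : ℕ, P (2 * k + 3) = (X + (2 * (k : ℝ[X]) + 2)) * P (2 * k + 2)
      - (2 * (k : ℝ[X]) + 2) * (2 * (k : ℝ[X]) + 3) * P (2 * k + 1)
      + (2 * (k : ℝ[X]) + 1) * (2 * (k : ℝ[X]) + 2) ^ 2 * P (2 * k))
    (hPo : ∀ k : ℕ, P (2 * k + 4) = (X - (2 * (k : ℝ[X]) + 4)) * P (2 * k + 3)
      - (2 * (k : ℝ[X]) + 3) * (2 * (k : ℝ[X]) + 4) * P (2 * k + 2)
      - (2 * (k : ℝ[X]) + 2) * (2 * (k : ℝ[X]) + 3) * (2 * (k : ℝ[X]) + 4) * P (2 * k + 1)) :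
    IsFamily (fun k => ((2 * k).factorial : ℝ)⁻¹ • P (2 * k))
      (fun k => ((2 * k + 1).factorial : ℝ)⁻¹ • P (2 * k + 1)) := by
  obtain ⟨p, hp⟩ : ∃ p : ℕ → ℝ[X], ∀ n, p n = (n.factorial : ℝ)⁻¹ • P n := ⟨_, fun _ => rfl⟩
  have hP : ∀ n, P n = ((n.factorial : ℕ) : ℝ[X]) * p n := fun n => by
    rw [hp, factorial_mul_smul]
  have hf : ∀ n : ℕ, ((n.factorial : ℕ) : ℝ[X]) ≠ 0 := fun n =>
    Nat.cast_ne_zero.2 n.factorial_ne_zero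
  simp only [← hp]
  refine ⟨?_, ?_, ?_, fun k => ?_, fun k => ?_⟩
  · simp [hp, hP0]
  · simp [hp, hP1]
  · have := hP 2
    rw [hP2] at this
    simp at this
    simp only [mul_one]
    linear_combination -this
  · apply mul_left_cancel₀ (hf (2 * k + 2))
    have h := hPe k
    simp only [hP, Nat.factorial_succ, Nat.cast_mul] at h ⊢
    push_cast at h ⊢
    simp only [show 2 * (k + 1) = 2 * k + 2 by ring]
    linear_combination h
  · apply mul_left_cancel₀ (hf (2 * k + 3))
    have h := hPo k
    simp only [hP, Nat.factorial_succ, Nat.cast_mul] at h ⊢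
    push_cast at h ⊢
    simp only [show 2 * (k + 2) = 2 * k + 4 by ring,
      show 2 * (k + 1) = 2 * k + 2 by ring]
    linear_combination h

end CaseIII

/-- The limiting case `p = q = −1` of Case III: the 2-orthogonal family
with parameters `s = 0`, `r = −1`, `β₀ = 0`, `α₁ = 2`, `γ = −2` has its first two dual
functionals represented by `w₀(x) = ½e^{−|x|}` and the piecewise weight `w₁` on `ℝ`. -/
theorem caseIII_limiting_weights
    (r s β₀ α₁ γ : ℝ) (hs : s = 0) (hr : r = -1) (hβ₀ : β₀ = 0) (hα₁ : α₁ = 2)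
    (hγe : γ = -2)
    (βn αn γn : ℕ → ℝ)
    (hβn : ∀ n : ℕ, βn n = ((-1 : ℝ) ^ n * r - 2 * s) * n - (1 - (-1 : ℝ) ^ n) * r / 2 + β₀)
    (hαn : ∀ n : ℕ, αn (n + 1) =
      ((n : ℝ) + 1) * ((r ^ 2 + s ^ 2) * n + (1 - (-1 : ℝ) ^ n) * r * s + α₁))
    (hγn : ∀ n : ℕ, γn (n + 1) = ((n : ℝ) + 2) * ((n : ℝ) + 1) *
      ((-1 : ℝ) ^ n * (r - (-1 : ℝ) ^ n * s) ^ 2 * r * n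
        - (1 - (-1 : ℝ) ^ n) * ((r + s) ^ 2 + 2 * α₁) * r / 2 + γ))
    (P : ℕ → Polynomial ℝ)
    (hP0 : P 0 = 1) (hP1 : P 1 = X - C β₀)
    (hP2 : P 2 = (X - C (βn 1)) * P 1 - C α₁)
    (hPrec : ∀ n : ℕ, P (n + 3) =
      (X - C (βn (n + 2))) * P (n + 2) - C (αn (n + 2)) * P (n + 1) - C (γn (n + 1)) * P n)
    (w₀ w₁ : ℝ → ℝ)
    (hw₀ : ∀ x, w₀ x = (1 / 2) * Real.exp (-|x|))
    (hw₁ : ∀ x, w₁ x = if 0 ≤ x then -(1 / 4) * (1 - 2 * x) * Real.exp (-x)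
      else -(1 / 4) * Real.exp x) :
    ∀ n : ℕ,
      Integrable (fun x => (P n).eval x * w₀ x) ∧
      Integrable (fun x => (P n).eval x * w₁ x) ∧
      (∫ x, (P n).eval x * w₀ x) = (if n = 0 then 1 else 0) ∧
      (∫ x, (P n).eval x * w₁ x) = (if n = 1 then 1 else 0) := by
  subst hs hr hβ₀ hα₁ hγe
  have hfam := CaseIII.isFamily_of_rec P hP0 (by simpa using hP1)
    (by
      have hb : βn 1 = 2 := by rw [hβn]; norm_num
      rw [hP2, hP1, hb]
      simp only [map_ofNat, map_zero, sub_zero])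
    (fun k => by
      have h1 : (-1 : ℝ) ^ (2 * k) = 1 := by simp
      have h2 : (-1 : ℝ) ^ (2 * k + 2) = 1 := by simp [pow_add]
      have hb : βn (2 * k + 2) = -(2 * (k : ℝ) + 2) := by
        rw [hβn, h2]; push_cast; ring
      have ha : αn (2 * k + 2) = (2 * (k : ℝ) + 2) * (2 * (k : ℝ) + 3) := by
        rw [hαn]; push_cast; ring
      have hg : γn (2 * k + 1) = -((2 * (k : ℝ) + 1) * (2 * (k : ℝ) + 2) ^ 2) := by
        rw [hγn, h1]; push_cast; ring
      rw [hPrec (2 * k), hb, ha, hg]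
      simp only [map_neg, map_mul, map_add, map_pow, map_ofNat, map_natCast, map_one]
      ring)
    (fun k => by
      have h1 : (-1 : ℝ) ^ (2 * k + 1) = -1 := by simp [pow_add]
      have h2 : (-1 : ℝ) ^ (2 * k + 3) = -1 := by rw [pow_add]; norm_num
      have hb : βn (2 * k + 3) = 2 * (k : ℝ) + 4 := by
        rw [hβn, h2]; push_cast; ring
      have ha : αn (2 * k + 3) = (2 * (k : ℝ) + 3) * (2 * (k : ℝ) + 4) := by
        rw [hαn]; push_cast; ring
      have hg : γn (2 * k + 2) =
          (2 * (k : ℝ) + 2) * (2 * (k : ℝ) + 3) * (2 * (k : ℝ) + 4) := by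
        rw [hγn, h1]; push_cast; ring
      rw [hPrec (2 * k + 1), hb, ha, hg]
      simp only [map_mul, map_add, map_ofNat, map_natCast])
  obtain ⟨he, ho⟩ := hfam.u0_eq
  obtain ⟨he1, ho0, ho1⟩ := hfam.u1_eq
  simp only [map_smul, CaseIII.u1_smul, smul_eq_mul, mul_eq_zero, inv_eq_zero, Nat.cast_eq_zero,
    Nat.factorial_ne_zero, false_or] at he ho he1 ho1
  rw [CaseIII.u1_smul] at ho0
  intro n
  obtain ⟨i0, j0⟩ := CaseIII.integral_w0 w₀ hw₀ (P n)
  obtain ⟨i1, j1⟩ := CaseIII.integral_w1 w₁ hw₁ (P n)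
  refine ⟨i0, i1, j0.trans ?_, j1.trans ?_⟩
  · obtain ⟨k, rfl | rfl⟩ := n.even_or_odd'
    · cases k with
      | zero => simpa [hP0] using CaseIII.u0_one
      | succ k => simpa using he k
    · simpa using ho k
  · obtain ⟨k, rfl | rfl⟩ := n.even_or_odd'
    · rw [if_neg (by omega)]
      exact he1 k
    · cases k with
      | zero => simpa using ho0
      | succ k =>
        rw [if_neg (by omega)]
        exact ho1 k
end

section
/- Let r > 0 and let β₀, α₁ be real numbers satisfying α₁ + 2rβ₀ = 1/r, and set α = (2rα₁ − 1)/(16r³). Suppose W : (−∞, 0] → ℝ is twice differentiable and satisfies Kummer's equation z W′′(z) + (½ − z) W′(z) − (½ − α) W(z) = 0 for all z ≤ 0. Then the function w₀(x) = e^{x/(2r)} W(−r x²) satisfies w₀′′(x) + (2rx − 2rβ₀ − α₁) w₀′(x) + (β₀ + 2r − x) w₀(x) = 0 for all x ∈ ℝ. -/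
open Real

/-!
Both derivatives of `w₀` follow from the product rule and the chain rule applied to `W ∘ (-r x²)` and
`W' ∘ (-r x²)`; since `-r x² ≤ 0` everywhere, the one-sided differentiability of `W`, `W'` at `0`
is enough. With `z = -r x²` and `2rβ₀ + α₁ = 1/r`, the left-hand side divided by `e^{x/(2r)}`
becomes `-4r (z W'' + (1/2 - z) W') + (β₀ + 2r - 1/(4r²)) W`. The condition on `α₁, β₀` gives
`β₀ + 2r - 1/(4r²) = 4r (1/2 - α)`, so this is `-4r` times Kummer's equation.
-/

/-- Chain rule through the inner map `x ↦ -r x²`, which takes values in `(-∞, 0]`; hence only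
differentiability relative to `(-∞, 0]` is required of the outer function. -/
lemma hasDerivAt_comp_neg_mul_sq {r : ℝ} (hr : 0 < r) {F F' : ℝ → ℝ}
    (hF : ∀ z ∈ Set.Iic (0 : ℝ), HasDerivWithinAt F (F' z) (Set.Iic 0) z) (x : ℝ) :
    HasDerivAt (fun y => F (-r * y ^ 2)) (F' (-r * x ^ 2) * (-r * (2 * x))) x := by
  have hmem : ∀ y : ℝ, -r * y ^ 2 ∈ Set.Iic (0 : ℝ) := fun y => by
    have : 0 ≤ r * y ^ 2 := by positivity
    simp only [Set.mem_Iic]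
    linarith
  have hin : HasDerivAt (fun y : ℝ => -r * y ^ 2) (-r * (2 * x)) x := by
    simpa using (hasDerivAt_pow 2 x).const_mul (-r)
  rw [← hasDerivWithinAt_univ] at hin ⊢
  exact (hF _ (hmem x)).comp x hin (fun y _ => hmem y)

/-- Reduction of the Case IV weight equation to Kummer's equation:
if `W` solves Kummer's equation with parameters `a = ½ − α`, `c = ½` on `(−∞, 0]`, then
`w₀(x) = e^{x/(2r)} W(−rx²)` solves
`w₀'' + (2rx − 2rβ₀ − α₁)w₀' + (β₀ + 2r − x)w₀ = 0` on `ℝ`. -/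
theorem caseIV_kummer_reduction (r β₀ α₁ : ℝ) (hr : 0 < r)
    (hcond : α₁ + 2 * r * β₀ = 1 / r)
    (α : ℝ) (hαdef : α = (2 * r * α₁ - 1) / (16 * r ^ 3))
    (W W' W'' : ℝ → ℝ)
    (hW1 : ∀ z ∈ Set.Iic (0 : ℝ), HasDerivWithinAt W (W' z) (Set.Iic 0) z)
    (hW2 : ∀ z ∈ Set.Iic (0 : ℝ), HasDerivWithinAt W' (W'' z) (Set.Iic 0) z)
    (hKummer : ∀ z ≤ (0 : ℝ),
      z * W'' z + (1 / 2 - z) * W' z - (1 / 2 - α) * W z = 0)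
    (w₀ : ℝ → ℝ)
    (hw₀ : ∀ x, w₀ x = Real.exp (x / (2 * r)) * W (-r * x ^ 2)) :
    ∀ x : ℝ, deriv (deriv w₀) x + (2 * r * x - 2 * r * β₀ - α₁) * deriv w₀ x
      + (β₀ + 2 * r - x) * w₀ x = 0 := by
  have hr0 : r ≠ 0 := hr.ne'
  have hE : ∀ x : ℝ, HasDerivAt (fun y : ℝ => Real.exp (y / (2 * r)))
      (Real.exp (x / (2 * r)) * (1 / (2 * r))) x := fun x =>
    ((hasDerivAt_id x).div_const (2 * r)).exp
  have h1 : deriv w₀ = fun x => Real.exp (x / (2 * r)) *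
      (1 / (2 * r) * W (-r * x ^ 2) - 2 * r * (x * W' (-r * x ^ 2))) := by
    funext x
    rw [funext hw₀, ((hE x).fun_mul (hasDerivAt_comp_neg_mul_sq hr hW1 x)).deriv]
    ring
  intro x
  have h2 := ((hE x).fun_mul (((hasDerivAt_comp_neg_mul_sq hr hW1 x).const_mul (1 / (2 * r))).fun_sub
    (((hasDerivAt_id' x).fun_mul (hasDerivAt_comp_neg_mul_sq hr hW2 x)).const_mul (2 * r)))).deriv
  have hK := hKummer (-r * x ^ 2) (by nlinarith [mul_nonneg hr.le (sq_nonneg x)])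
  rw [h1, h2, hw₀]
  beta_reduce
  generalize W (-r * x ^ 2) = A at *
  generalize W' (-r * x ^ 2) = B at *
  generalize W'' (-r * x ^ 2) = C at *
  generalize Real.exp (x / (2 * r)) = E at *
  have hα₁ : α₁ = 1 / r - 2 * r * β₀ := by linarith
  subst hα₁
  subst hαdef
  -- The left-hand side is `-4r E` times the left-hand side of Kummer's equation.
  refine Eq.trans ?_ ((congrArg (fun t => -4 * r * E * t) hK).trans (mul_zero _))
  field_simp
  ring
end

section
/- Let −1 < ν < 0 and α > 0, and set w₀(x) = x^α e^{−x}/Γ(α+1) and w₁(x) = ν w₀(x) + ν² e^{νx} γ(α+1, (ν+1)x) / ((ν+1)^{α+1} Γ(α+1)) for x ≥ 0, where γ(a, y) = ∫_0^y t^{a−1}e^{−t} dt is the lower incomplete gamma function. Then w₁′(x) − ν w₁(x) = ν w₀′(x) for all x > 0, w₁(x) − ν w₀(x) → 0 as x → 0⁺, and w₁(x) − ν w₀(x) → 0 as x → +∞. -/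
/-!
Write `h = w₁ - ν w₀ = ν² e^{νx} G((ν+1)x) / ((ν+1)^{α+1} Γ(α+1))`, where
`G(y) = ∫₀^y t^α e^{-t} dt`. By the fundamental theorem of calculus `h' = ν h + ν² w₀`: the
exponentials `e^{νx}` and `e^{-(ν+1)x}` combine to `e^{-x}`, and the powers of `ν + 1` cancel.
This is equivalent to the differential equation for `w₁`. At `0`, `h` is continuous with
`h(0) = 0` because `G(0) = 0`; at `+∞`, `G((ν+1)x)` converges to the Gamma integral while
`e^{νx}` tends to `0`, since `ν < 0 < ν + 1`.
-/

open MeasureTheory Real Filter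

/-- Case VI.2: for `−1 < ν < 0` and `α > 0`, the weight
`w₁(x) = νw₀(x) + ν²e^{νx}γ(α+1, (ν+1)x)/((ν+1)^{α+1}Γ(α+1))` built from the Laguerre
weight `w₀` satisfies `w₁' − νw₁ = νw₀'` on `(0, ∞)`, and `w₁ − νw₀` vanishes at `0⁺`
and at `+∞`. -/
theorem caseVI_second_weight_ode (ν α : ℝ) (hν₁ : -1 < ν) (hν₂ : ν < 0) (hα : 0 < α)
    (w₀ w₁ : ℝ → ℝ)
    (hw₀ : ∀ x, w₀ x = x ^ α * Real.exp (-x) / Real.Gamma (α + 1))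
    (hw₁ : ∀ x, w₁ x = ν * w₀ x + ν ^ 2 * Real.exp (ν * x) *
      (∫ t in (0 : ℝ)..((ν + 1) * x), t ^ α * Real.exp (-t)) /
        ((ν + 1) ^ (α + 1) * Real.Gamma (α + 1))) :
    (∀ x > (0 : ℝ), deriv w₁ x - ν * w₁ x = ν * deriv w₀ x) ∧
    Tendsto (fun x => w₁ x - ν * w₀ x) (nhdsWithin 0 (Set.Ioi 0)) (nhds 0) ∧
    Tendsto (fun x => w₁ x - ν * w₀ x) atTop (nhds 0) := by
  have hc : 0 < ν + 1 := by linarith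
  have hΓ : Real.Gamma (α + 1) ≠ 0 := (Real.Gamma_pos_of_pos (by linarith)).ne'
  have hcα : (ν + 1) ^ α ≠ 0 := (Real.rpow_pos_of_pos hc α).ne'
  -- `α > 0` makes the integrand continuous on all of `ℝ`, including at `0`.
  have hcont : Continuous fun t : ℝ => t ^ α * Real.exp (-t) :=
    (Real.continuous_rpow_const hα.le).mul (by fun_prop)
  set G : ℝ → ℝ := fun y => ∫ t in (0 : ℝ)..y, t ^ α * Real.exp (-t) with hG
  have hGd : ∀ y, HasDerivAt G (y ^ α * Real.exp (-y)) y := fun y =>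
    hcont.integral_hasStrictDerivAt 0 y |>.hasDerivAt
  set K := (ν + 1) ^ (α + 1) * Real.Gamma (α + 1) with hK
  have hw₁' : w₁ = fun x => ν * w₀ x + ν ^ 2 * Real.exp (ν * x) * G ((ν + 1) * x) / K :=
    funext hw₁
  have hdiff : (fun x => w₁ x - ν * w₀ x) =
      fun x => ν ^ 2 * Real.exp (ν * x) * G ((ν + 1) * x) / K := by
    rw [hw₁']; funext x; ring
  have hGcont : Continuous G := continuous_iff_continuousAt.2 fun y => (hGd y).continuousAt
  refine ⟨fun x hx => ?_, ?_, ?_⟩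
  · have hw₀d : DifferentiableAt ℝ w₀ x := by
      rw [show w₀ = fun x => x ^ α * Real.exp (-x) / Real.Gamma (α + 1) from funext hw₀]
      exact ((Real.differentiableAt_rpow_const_of_ne α hx.ne').mul (by fun_prop)).div_const _
    have hlin : ∀ a : ℝ, HasDerivAt (fun x : ℝ => a * x) a x := fun a => by
      simpa using (hasDerivAt_id x).const_mul a
    have hGx : HasDerivAt (fun x => G ((ν + 1) * x)) _ x :=
      (hGd ((ν + 1) * x)).comp x (hlin (ν + 1))
    have hd := (hw₀d.hasDerivAt.const_mul ν).add
      ((((hlin ν).exp.const_mul (ν ^ 2)).mul hGx).div_const K)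
    have hd' := (hd.congr_of_eventuallyEq (f₁ := w₁) (.of_forall (congrFun hw₁'))).deriv
    have hexp : Real.exp (-((ν + 1) * x)) * Real.exp (ν * x) = Real.exp (-x) := by
      rw [← Real.exp_add]; ring_nf
    rw [hd', hw₁ x, hw₀ x, hK, ← hexp, Real.mul_rpow hc.le hx.le, Real.rpow_add_one hc.ne']
    simp only [hG]
    field_simp
    ring
  · have h : Continuous fun x => ν ^ 2 * Real.exp (ν * x) * G ((ν + 1) * x) / K := by fun_prop
    rw [hdiff]
    simpa [hG] using (h.tendsto 0).mono_left nhdsWithin_le_nhds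
  · have hint : IntegrableOn (fun t : ℝ => t ^ α * Real.exp (-t)) (Set.Ioi 0) := by
      simpa [mul_comm] using Real.GammaIntegral_convergent (s := α + 1) (by linarith)
    have hlim := intervalIntegral_tendsto_integral_Ioi 0 hint
      (tendsto_id.const_mul_atTop hc : Tendsto (fun x : ℝ => (ν + 1) * x) atTop atTop)
    have hexp : Tendsto (fun x : ℝ => Real.exp (ν * x)) atTop (nhds 0) :=
      Real.tendsto_exp_atBot.comp (tendsto_id.const_mul_atTop_of_neg hν₂)
    rw [hdiff]
    simpa using ((hexp.const_mul (ν ^ 2)).mul hlim).div_const K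
end
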